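/- Let f : ℍ → ℝ be continuous, SL(2,ℤ)-invariant, and compactly supported in the quotient. Let δ > 0 and let α, β : (0,1) → ℝ be functions with β(ε) − α(ε) ≥ ε^{1/2−δ} for all ε ∈ (0,1). Then lim_{ε→0⁺} (1/(β(ε)−α(ε))) · ∫_{α(ε)}^{β(ε)} f(x + iε) dx = (3/π) · ∫_F f(x+iy) · y⁻² dx dy. -/

import Mathlib

open MeasureTheory Complex

/-- The standard fundamental domain for `SL(2,ℤ)` acting on the upper half-plane, viewed as a
subset of `ℝ × ℝ` (coordinates `(x, y)` with `z = x + iy`). -/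
def fundDom : Set (ℝ × ℝ) :=
  {p | |p.1| < 1 / 2 ∧ 1 < p.1 ^ 2 + p.2 ^ 2 ∧ 0 < p.2}

/-!
Counting the units `x, y, z, w` modulo `c` with `x + y = z + w` and `x⁻¹ + y⁻¹ = z⁻¹ + w⁻¹` bounds
the fourth moment of Kloosterman sums and gives `S(a, b; c) = o(c)` for fixed `(a, b) ≠ (0, 0)`.
Unfolding `f` over the cosets of the integer translations expresses its Fourier coefficients along
the closed horocycle at height `y` through such sums: the nonzero coefficients tend to `0` as
`y → 0`, and the zeroth one tends to the hyperbolic mean of `f`. Hence horocycle segments of fixed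
length equidistribute, uniformly in their position.

For short segments, Dirichlet's theorem provides for each `x` a fraction `p / q` with `q ≤ n` and
`|q * x - p| ≤ 1 / n`. A matrix in `SL(2,ℤ)` with bottom row `(q, -p)` carries the segment of length
about `n⁻²` starting at `x + i * ε` nearly onto a segment at height `ε / (q * x - p) ^ 2`, whose
length is bounded below. Unless `|q * x - p|` is far smaller than `1 / n`, this height is of order
`ε * n ^ 2`, and the fixed-length result applies once `ε * n ^ 2 → 0`. The exceptional `x` fill only
a small part of an interval that is long compared with `log n / n`, which is why length
`ε ^ (1 / 2 - δ)` suffices.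
-/

namespace Horocycle

open Filter Topology
open scoped Finset Nat

/-! ### Divisor bounds -/

lemma exists_succ_pow_le_mul_two_pow (k : ℕ) : ∃ A : ℕ, ∀ v : ℕ, (v + 1) ^ k ≤ A * 2 ^ v := by
  have hlim := (tendsto_pow_const_div_const_pow_of_one_lt k (one_lt_two (α := ℝ))).comp
    (Filter.tendsto_add_atTop_nat 1)
  obtain ⟨B, hB⟩ := hlim.bddAbove_range
  obtain ⟨A, hA⟩ := exists_nat_ge (B * 2)
  refine ⟨A, fun v => ?_⟩
  have hv : ((v + 1 : ℕ) : ℝ) ^ k / 2 ^ (v + 1) ≤ B := hB ⟨v, rfl⟩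
  rw [div_le_iff₀ (by positivity)] at hv
  have : ((v + 1 : ℕ) : ℝ) ^ k ≤ A * 2 ^ v := calc
    _ ≤ B * 2 * 2 ^ v := hv.trans_eq (by ring)
    _ ≤ A * 2 ^ v := by gcongr
  exact_mod_cast this

/- Primes `p ≥ 2 ^ k` satisfy `(v + 1) ^ k ≤ 2 ^ (v k) ≤ p ^ v`, so only the finitely many smaller
ones contribute to the constant. -/
lemma exists_card_divisors_pow_le_mul (k : ℕ) :
    ∃ C : ℕ, ∀ n : ℕ, n ≠ 0 → #n.divisors ^ k ≤ C * n := by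
  obtain ⟨A, hA⟩ := exists_succ_pow_le_mul_two_pow k
  have hA1 : 1 ≤ A := by simpa using hA 0
  refine ⟨A ^ 2 ^ k, fun n hn => ?_⟩
  have hlocal : ∀ p ∈ n.primeFactors, (n.factorization p + 1) ^ k ≤
      (if p < 2 ^ k then A else 1) * p ^ n.factorization p := by
    intro p hp
    have hp2 : 2 ≤ p := (Nat.prime_of_mem_primeFactors hp).two_le
    split_ifs with hpk
    · exact (hA _).trans (by gcongr)
    · calc (n.factorization p + 1) ^ k ≤ (2 ^ n.factorization p) ^ k := by
            gcongr; exact Nat.lt_two_pow_self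
        _ = (2 ^ k) ^ n.factorization p := pow_right_comm ..
        _ ≤ p ^ n.factorization p := by gcongr; exact not_lt.1 hpk
        _ = _ := (one_mul _).symm
  have hsmall : ∏ p ∈ n.primeFactors, (if p < 2 ^ k then A else 1) ≤ A ^ 2 ^ k := by
    rw [Finset.prod_ite, Finset.prod_const_one, mul_one, Finset.prod_const]
    refine Nat.pow_le_pow_right hA1 ?_
    calc _ ≤ #(Finset.range (2 ^ k)) := Finset.card_le_card fun p => by simp
      _ = 2 ^ k := Finset.card_range _
  calc #n.divisors ^ k = ∏ p ∈ n.primeFactors, (n.factorization p + 1) ^ k := by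
        rw [Nat.card_divisors hn, Finset.prod_pow]
    _ ≤ ∏ p ∈ n.primeFactors, (if p < 2 ^ k then A else 1) * p ^ n.factorization p :=
        Finset.prod_le_prod' hlocal
    _ = (∏ p ∈ n.primeFactors, if p < 2 ^ k then A else 1) * n := by
        rw [Finset.prod_mul_distrib]
        exact congrArg _ (Nat.prod_factorization_pow_eq_self hn)
    _ ≤ A ^ 2 ^ k * n := by gcongr

lemma le_totient_mul_card_divisors (n : ℕ) : n ≤ φ n * #n.divisors := by
  rcases eq_or_ne n 0 with rfl | hn
  · simp
  calc n = ∑ m ∈ n.divisors, φ m := (Nat.sum_totient n).symm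
    _ ≤ ∑ _m ∈ n.divisors, φ n := Finset.sum_le_sum fun m hm =>
        Nat.le_of_dvd (Nat.totient_pos.2 (Nat.pos_of_ne_zero hn))
          (Nat.totient_dvd_of_dvd (Nat.dvd_of_mem_divisors hm))
    _ = φ n * #n.divisors := by rw [Finset.sum_const, smul_eq_mul, mul_comm]

/-! ### Kloosterman sums -/

section Kloosterman

variable {c : ℕ} [NeZero c]

/-- The Kloosterman sum `S(a, b; c) = ∑ₓ e((a x + b x⁻¹) / c)` over the units `x` modulo `c`. -/
noncomputable def kloostermanSum (a b : ZMod c) : ℂ :=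
  ∑ x : (ZMod c)ˣ, ZMod.stdAddChar (a * x + b * ↑x⁻¹ : ZMod c)

lemma kloostermanSum_comm (a b : ZMod c) : kloostermanSum a b = kloostermanSum b a :=
  Fintype.sum_equiv (Equiv.inv (ZMod c)ˣ) _ _ fun x => by
    rw [Equiv.inv_apply, inv_inv, add_comm]

lemma kloostermanSum_mul_unit (a b : ZMod c) (u : (ZMod c)ˣ) :
    kloostermanSum (a * u : ZMod c) (b * ↑u⁻¹ : ZMod c) = kloostermanSum a b := by
  refine Fintype.sum_equiv (Equiv.mulLeft u) _ _ fun x => ?_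
  simp only [Equiv.coe_mulLeft, mul_inv_rev, Units.val_mul]
  congr 1
  ring

lemma card_intCast_mul_eq_le_gcd (m : ℤ) (s : ZMod c) :
    #{t : ZMod c | (m : ZMod c) * t = s} ≤ Int.gcd m c := by
  have hgcd_pos : 0 < Int.gcd m c :=
    Int.gcd_pos_of_ne_zero_right _ (by exact_mod_cast NeZero.ne c)
  have hann (t : ZMod c) (ht : (m : ZMod c) * t = 0) : Int.gcd m c • t = 0 := by
    have hbezout := congrArg (fun z : ℤ => (z : ZMod c)) (Int.gcd_eq_gcd_ab m c)
    push_cast at hbezout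
    rw [nsmul_eq_mul, hbezout, ZMod.natCast_self, zero_mul, add_zero, mul_right_comm, ht, zero_mul]
  by_cases hsol : ∃ t₀ : ZMod c, (m : ZMod c) * t₀ = s
  · obtain ⟨t₀, ht₀⟩ := hsol
    refine le_trans ?_ (IsAddCyclic.card_nsmul_eq_zero_le (α := ZMod c) hgcd_pos)
    refine Finset.card_le_card_of_injOn (· - t₀) (fun t ht => ?_) (sub_left_injective.injOn)
    have ht' : (m : ZMod c) * t = s := by simpa using ht
    simpa using hann (t - t₀) (by rw [mul_sub, ht', ht₀, sub_self])
  · push Not at hsol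
    rw [Finset.filter_eq_empty_iff.2 fun t _ => hsol t]
    exact Nat.zero_le _

lemma card_dvd_val_mul_le {g : ℕ} (hg : g ∣ c) : #{B : ZMod c | g ∣ B.val} * g ≤ c := by
  obtain ⟨k, hk⟩ := hg
  have hg_pos : 0 < g := Nat.pos_of_ne_zero fun h => NeZero.ne c (by rw [hk, h, zero_mul])
  have hcard : #{B : ZMod c | g ∣ B.val} ≤ #(Finset.range k) := by
    refine Finset.card_le_card_of_injOn (fun B => B.val / g) (fun B _ => ?_) ?_
    · simp only [Finset.coe_range, Set.mem_Iio]
      rw [Nat.div_lt_iff_lt_mul hg_pos, mul_comm, ← hk]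
      exact ZMod.val_lt B
    · intro A hA B hB hAB
      simp only [Finset.coe_filter, Finset.mem_univ, true_and, Set.mem_ofPred_eq] at hA hB hAB
      apply ZMod.val_injective c
      rw [← Nat.div_mul_cancel hA, ← Nat.div_mul_cancel hB, hAB]
  calc _ ≤ k * g := Nat.mul_le_mul_right _ (by rwa [Finset.card_range] at hcard)
    _ = c := by rw [hk, mul_comm]

lemma sum_gcd_val_le : ∑ B : ZMod c, Nat.gcd B.val c ≤ c * #c.divisors := by
  have hgcd (B : ZMod c) : Nat.gcd B.val c ≤ ∑ g ∈ c.divisors, if g ∣ B.val then g else 0 := by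
    have hmem : Nat.gcd B.val c ∈ c.divisors :=
      Nat.mem_divisors.2 ⟨Nat.gcd_dvd_right _ _, NeZero.ne c⟩
    refine le_trans ?_ (Finset.single_le_sum (f := fun g => if g ∣ B.val then g else 0)
      (fun _ _ => Nat.zero_le _) hmem)
    rw [if_pos (Nat.gcd_dvd_left _ _)]
  calc _ ≤ ∑ B : ZMod c, ∑ g ∈ c.divisors, (if g ∣ B.val then g else 0) :=
        Finset.sum_le_sum fun B _ => hgcd B
    _ = ∑ g ∈ c.divisors, #{B : ZMod c | g ∣ B.val} * g := by
        rw [Finset.sum_comm]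
        simp only [← Finset.sum_filter, Finset.sum_const, smul_eq_mul]
    _ ≤ ∑ _g ∈ c.divisors, c :=
        Finset.sum_le_sum fun g hg => card_dvd_val_mul_le (Nat.dvd_of_mem_divisors hg)
    _ = c * #c.divisors := by rw [Finset.sum_const, smul_eq_mul, mul_comm]

lemma gcd_two_mul_mul_le (a b : ℕ) {n : ℕ} (hn : 0 < n) :
    Nat.gcd (2 * a * b) n ≤ 2 * (Nat.gcd a n * Nat.gcd b n) := by
  have hmul (i j : ℕ) : Nat.gcd (i * j) n ≤ Nat.gcd i n * Nat.gcd j n :=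
    Nat.le_of_dvd (Nat.mul_pos (Nat.gcd_pos_of_pos_right _ hn) (Nat.gcd_pos_of_pos_right _ hn))
      (Nat.gcd_mul_left_dvd_mul_gcd _ _ _)
  calc Nat.gcd (2 * a * b) n ≤ Nat.gcd 2 n * Nat.gcd a n * Nat.gcd b n :=
        (hmul _ _).trans (Nat.mul_le_mul_right _ (hmul _ _))
    _ ≤ 2 * Nat.gcd a n * Nat.gcd b n := by
        gcongr; exact Nat.gcd_le_left _ two_pos
    _ = _ := by ring

/- In the coordinates `A = z - x`, `B = z - y` the equation reads `2 A B z = A B (A + B)`, which is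
linear in `z`. -/
lemma card_add_mul_sub_mul_sub_eq_zero_le :
    #{x : ZMod c × ZMod c × ZMod c | (x.1 + x.2.1) * (x.2.2 - x.1) * (x.2.2 - x.2.1) = 0} ≤
      2 * (c * #c.divisors) ^ 2 := by
  let N (p : ZMod c × ZMod c) : ℤ := ((2 * p.1.val * p.2.val : ℕ) : ℤ)
  have hN (p : ZMod c × ZMod c) : (N p : ZMod c) = 2 * p.1 * p.2 := by simp [N]
  have hlinear :
      #{x : ZMod c × ZMod c × ZMod c | (x.1 + x.2.1) * (x.2.2 - x.1) * (x.2.2 - x.2.1) = 0} ≤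
      ∑ p : ZMod c × ZMod c, #{t : ZMod c | (N p : ZMod c) * t = p.1 * p.2 * (p.1 + p.2)} := by
    rw [← Finset.card_sigma]
    refine Finset.card_le_card_of_injOn
      (fun x => ⟨(x.2.2 - x.1, x.2.2 - x.2.1), x.2.2⟩) (fun x hx => ?_) ?_
    · have hx' : (x.1 + x.2.1) * (x.2.2 - x.1) * (x.2.2 - x.2.1) = 0 := by simpa using hx
      simp only [Finset.coe_sigma, Set.mem_sigma_iff, Finset.coe_univ, Set.mem_univ, true_and,
        Finset.coe_filter, Finset.mem_univ, Set.mem_ofPred_eq, hN]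
      linear_combination hx'
    · rintro ⟨x, y, z⟩ _ ⟨x', y', z'⟩ _ h
      simp only [Sigma.mk.injEq, Prod.mk.injEq, heq_eq_eq] at h
      obtain ⟨⟨hx, hy⟩, rfl⟩ := h
      rw [sub_right_inj] at hx hy
      rw [hx, hy]
  calc _ ≤ ∑ p : ZMod c × ZMod c, 2 * (Nat.gcd p.1.val c * Nat.gcd p.2.val c) :=
        hlinear.trans <| Finset.sum_le_sum fun p _ => (card_intCast_mul_eq_le_gcd _ _).trans
          (gcd_two_mul_mul_le _ _ (Nat.pos_of_ne_zero (NeZero.ne c)))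
    _ = 2 * (∑ B : ZMod c, Nat.gcd B.val c) ^ 2 := by
        rw [← Finset.mul_sum, sq, Finset.sum_mul_sum, Fintype.sum_prod_type]
    _ ≤ _ := by gcongr; exact sum_gcd_val_le

variable (c) in
/-- The quadruples `((x, y), (z, w))` of units modulo `c` with `x + y = z + w` and
`x⁻¹ + y⁻¹ = z⁻¹ + w⁻¹`; they are counted by the fourth moment of the Kloosterman sums. -/
def unitEnergyQuadruples : Finset (((ZMod c)ˣ × (ZMod c)ˣ) × ((ZMod c)ˣ × (ZMod c)ˣ)) :=
  {q | (q.1.1 + q.1.2 - (q.2.1 + q.2.2) : ZMod c) = 0 ∧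
    (↑q.1.1⁻¹ + ↑q.1.2⁻¹ -
      (↑q.2.1⁻¹ + ↑q.2.2⁻¹) : ZMod c) = 0}

lemma norm_kloostermanSum_pow_four (a b : ZMod c) :
    ((‖kloostermanSum a b‖ ^ 4 : ℝ) : ℂ) =
      ∑ q : ((ZMod c)ˣ × (ZMod c)ˣ) × ((ZMod c)ˣ × (ZMod c)ˣ),
        ZMod.stdAddChar (a * (q.1.1 + q.1.2 - (q.2.1 + q.2.2) : ZMod c)) *
        ZMod.stdAddChar (b * (↑q.1.1⁻¹ + ↑q.1.2⁻¹ -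
          (↑q.2.1⁻¹ + ↑q.2.2⁻¹) : ZMod c)) := by
  have hconj : starRingEnd ℂ (kloostermanSum a b) =
      ∑ x : (ZMod c)ˣ, ZMod.stdAddChar (-(a * x + b * ↑x⁻¹) : ZMod c) := by
    rw [kloostermanSum, map_sum]
    exact Finset.sum_congr rfl fun x _ => (AddChar.map_neg_eq_conj _ _).symm
  have hnorm : ((‖kloostermanSum a b‖ ^ 4 : ℝ) : ℂ) =
      (kloostermanSum a b * kloostermanSum a b) *
        (starRingEnd ℂ (kloostermanSum a b) * starRingEnd ℂ (kloostermanSum a b)) := by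
    rw [mul_mul_mul_comm, Complex.mul_conj']
    push_cast
    ring
  rw [hnorm, hconj, kloostermanSum, Finset.sum_mul_sum, Finset.sum_mul_sum,
    ← Fintype.sum_prod_type', ← Fintype.sum_prod_type', Finset.sum_mul_sum,
    ← Fintype.sum_prod_type']
  refine Finset.sum_congr rfl fun q _ => ?_
  simp only [← AddChar.map_add_eq_mul]
  congr 1
  ring

lemma sum_stdAddChar_mul_mul_stdAddChar_mul (s t : ZMod c) :
    ∑ p : ZMod c × ZMod c, ZMod.stdAddChar (p.1 * s) * ZMod.stdAddChar (p.2 * t) =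
      if s = 0 ∧ t = 0 then (c : ℂ) ^ 2 else 0 := by
  have horth (r : ZMod c) :
      ∑ a : ZMod c, ZMod.stdAddChar (a * r) = if r = 0 then (c : ℂ) else 0 := by
    simpa [ZMod.card] using AddChar.sum_mulShift r (ZMod.isPrimitive_stdAddChar c)
  simp only [Fintype.sum_prod_type]
  rw [← Finset.sum_mul_sum, horth, horth, ite_and, ite_mul, zero_mul,
    mul_ite, mul_zero, sq]

lemma sum_norm_kloostermanSum_pow_four :
    ∑ p : ZMod c × ZMod c, ‖kloostermanSum p.1 p.2‖ ^ 4 =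
      (c : ℝ) ^ 2 * #(unitEnergyQuadruples c) := by
  have hcomplex : ((∑ p : ZMod c × ZMod c, ‖kloostermanSum p.1 p.2‖ ^ 4 : ℝ) : ℂ) =
      (c : ℂ) ^ 2 * #(unitEnergyQuadruples c) := by
    rw [Complex.ofReal_sum]
    simp_rw [norm_kloostermanSum_pow_four]
    rw [Finset.sum_comm]
    simp_rw [sum_stdAddChar_mul_mul_stdAddChar_mul]
    rw [← Finset.sum_filter, Finset.sum_const, nsmul_eq_mul, mul_comm]
    rfl
  exact_mod_cast hcomplex

lemma add_mul_sub_mul_sub_eq_zero_of_inv_add_inv {R : Type*} [CommRing R] {x y z w : Rˣ}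
    (hadd : (x + y - (z + w) : R) = 0)
    (hinv : (↑x⁻¹ + ↑y⁻¹ - (↑z⁻¹ + ↑w⁻¹) : R) = 0) :
    (x + y : R) * (z - x) * (z - y) = 0 := by
  have hclear : (z * w * (y + x) - x * y * (w + z) : R) = 0 := by
    linear_combination (x * y * z * w : R) * hinv - (y * z * w : R) * x.mul_inv
      - (x * z * w : R) * y.mul_inv + (x * y * w : R) * z.mul_inv + (x * y * z : R) * w.mul_inv
  linear_combination (x * y - z * (x + y) : R) * hadd - hclear

lemma card_unitEnergyQuadruples_le :
    #(unitEnergyQuadruples c) ≤ 2 * (c * #c.divisors) ^ 2 := by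
  refine le_trans ?_ (card_add_mul_sub_mul_sub_eq_zero_le (c := c))
  refine Finset.card_le_card_of_injOn
    (fun q => ((q.1.1 : ZMod c), (q.1.2 : ZMod c), (q.2.1 : ZMod c))) ?_ ?_
  · intro q hq
    obtain ⟨hadd, hinv⟩ := (Finset.mem_filter.1 (Finset.mem_coe.1 hq)).2
    exact Finset.mem_coe.2 (Finset.mem_filter.2
      ⟨Finset.mem_univ _, add_mul_sub_mul_sub_eq_zero_of_inv_add_inv hadd hinv⟩)
  · rintro ⟨⟨x, y⟩, ⟨z, w⟩⟩ hq ⟨⟨x', y'⟩, ⟨z', w'⟩⟩ hq' h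
    have hadd := (Finset.mem_filter.1 (Finset.mem_coe.1 hq)).2.1
    have hadd' := (Finset.mem_filter.1 (Finset.mem_coe.1 hq')).2.1
    simp only [Prod.mk.injEq, Units.val_inj] at hadd hadd' h ⊢
    obtain ⟨rfl, rfl, rfl⟩ := h
    refine ⟨⟨rfl, rfl⟩, rfl, Units.ext ?_⟩
    linear_combination hadd' - hadd

/- `S(m u, n u⁻¹; c)` does not depend on the unit `u`, so `S(m, n; c)` is repeated `φ(c)` times in
the fourth moment, up to the multiplicity of `u ↦ m u`. -/
lemma totient_mul_norm_kloostermanSum_pow_four_le {m : ℤ} (hm : m ≠ 0) (n : ZMod c) :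
    (φ c : ℝ) * ‖kloostermanSum (m : ZMod c) n‖ ^ 4 ≤
      m.natAbs * ((c : ℝ) ^ 2 * (2 * (c * #c.divisors) ^ 2 : ℕ)) := by
  let g (u : (ZMod c)ˣ) : ZMod c × ZMod c := ((m : ZMod c) * u, n * ↑u⁻¹)
  have hfiber (p : ZMod c × ZMod c) : #{u | g u = p} ≤ m.natAbs := calc
    #{u | g u = p} ≤ #{t : ZMod c | (m : ZMod c) * t = p.1} :=
        Finset.card_le_card_of_injOn (fun u => (u : ZMod c))
          (fun u hu => by
            have hu' : g u = p := by simpa using hu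
            simp [← hu', g])
          (fun u _ v _ => Units.ext)
    _ ≤ m.natAbs := (card_intCast_mul_eq_le_gcd m _).trans (Int.gcd_le_natAbs_left _ hm)
  calc (φ c : ℝ) * ‖kloostermanSum (m : ZMod c) n‖ ^ 4
      = ∑ u : (ZMod c)ˣ, ‖kloostermanSum (g u).1 (g u).2‖ ^ 4 := by
        simp_rw [g, kloostermanSum_mul_unit]
        rw [Finset.sum_const, Finset.card_univ, ZMod.card_units_eq_totient, nsmul_eq_mul]
    _ = ∑ p, (#{u | g u = p} : ℝ) * ‖kloostermanSum p.1 p.2‖ ^ 4 := by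
        rw [← Finset.sum_fiberwise (s := Finset.univ) (g := g)]
        refine Finset.sum_congr rfl fun p _ => ?_
        rw [← nsmul_eq_mul, ← Finset.sum_const]
        exact Finset.sum_congr rfl fun u hu => by rw [(Finset.mem_filter.1 hu).2]
    _ ≤ ∑ p : ZMod c × ZMod c, (m.natAbs : ℝ) * ‖kloostermanSum p.1 p.2‖ ^ 4 := by
        gcongr with p _
        exact hfiber p
    _ = m.natAbs * ((c : ℝ) ^ 2 * #(unitEnergyQuadruples c)) := by
        rw [← Finset.mul_sum, sum_norm_kloostermanSum_pow_four]
    _ ≤ _ := by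
        gcongr
        exact card_unitEnergyQuadruples_le

lemma norm_kloostermanSum_div_pow_le {C : ℕ} (hC : ∀ n : ℕ, n ≠ 0 → #n.divisors ^ 4 ≤ C * n)
    {m : ℤ} (hm : m ≠ 0) (n : ZMod c) :
    (‖kloostermanSum (m : ZMod c) n‖ / c) ^ 16 ≤ ((2 * m.natAbs) ^ 4 * C ^ 3 : ℝ) / c := by
  have hc : c ≠ 0 := NeZero.ne c
  have hc_pos : (0 : ℝ) < c := by exact_mod_cast Nat.pos_of_ne_zero hc
  have hmoment := totient_mul_norm_kloostermanSum_pow_four_le hm n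
  have htot : (c : ℝ) ≤ φ c * #c.divisors := by exact_mod_cast le_totient_mul_card_divisors c
  have hdiv : (#c.divisors : ℝ) ^ 4 ≤ C * c := by exact_mod_cast hC c hc
  set D : ℝ := (#c.divisors : ℝ)
  set K := ‖kloostermanSum (m : ZMod c) n‖
  push_cast at hmoment
  have hfour : (K / c) ^ 4 ≤ 2 * m.natAbs * D ^ 3 / c := by
    rw [div_pow, div_le_div_iff₀ (by positivity) hc_pos]
    calc K ^ 4 * c ≤ K ^ 4 * (φ c * D) := by gcongr
      _ = D * (φ c * K ^ 4) := by ring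
      _ ≤ D * (m.natAbs * (c ^ 2 * (2 * (c * D) ^ 2))) := by gcongr
      _ = _ := by ring
  calc (K / c) ^ 16 = ((K / c) ^ 4) ^ 4 := by ring
    _ ≤ (2 * m.natAbs * D ^ 3 / c) ^ 4 := by gcongr
    _ = (2 * m.natAbs) ^ 4 * (D ^ 4) ^ 3 / c ^ 4 := by ring
    _ ≤ (2 * m.natAbs) ^ 4 * (C * c) ^ 3 / c ^ 4 := by gcongr
    _ = _ := by field_simp

end Kloosterman

lemma exists_norm_kloostermanSum_le_mul {m : ℤ} (hm : m ≠ 0) {ε : ℝ} (hε : 0 < ε) :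
    ∃ N : ℕ, ∀ (c : ℕ) [NeZero c], N ≤ c → ∀ n : ZMod c,
      ‖kloostermanSum (m : ZMod c) n‖ ≤ ε * c := by
  obtain ⟨C, hC⟩ := exists_card_divisors_pow_le_mul 4
  set A : ℝ := (2 * m.natAbs) ^ 4 * C ^ 3
  obtain ⟨N, hN⟩ := exists_nat_gt (A / ε ^ 16)
  refine ⟨N, fun c _ hc n => ?_⟩
  have hc_pos : (0 : ℝ) < c := by exact_mod_cast Nat.pos_of_ne_zero (NeZero.ne c)
  have hsmall : A / c ≤ ε ^ 16 := by
    have hNc : (N : ℝ) ≤ c := by exact_mod_cast hc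
    rw [div_le_comm₀ hc_pos (by positivity)]
    exact hN.le.trans hNc
  rw [← div_le_iff₀ hc_pos]
  exact le_of_pow_le_pow_left₀ (by norm_num) hε.le
    ((norm_kloostermanSum_div_pow_le hC hm n).trans hsmall)

/-! ### Functionals on continuous functions on the circle -/

section DenseSpan

variable {ι E : Type*} [NormedAddCommGroup E] [NormedSpace ℂ E] {l : Filter ι}
  {L : ι → E →L[ℂ] ℂ} {S : Set E}

lemma tendsto_zero_of_mem_span (hS : ∀ g ∈ S, Tendsto (fun i => L i g) l (𝓝 0)) {g : E}
    (hg : g ∈ Submodule.span ℂ S) : Tendsto (fun i => L i g) l (𝓝 0) := by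
  induction hg using Submodule.span_induction with
  | mem g hg => exact hS g hg
  | zero => simpa only [map_zero] using tendsto_const_nhds
  | add g h _ _ hg hh => simpa only [map_add, add_zero] using hg.add hh
  | smul a g _ hg => simpa only [map_smul, smul_zero] using hg.const_smul a

lemma tendstoUniformlyOn_zero_of_dense_span {M : ℝ} (hM : ∀ᶠ i in l, ‖L i‖ ≤ M)
    (hS : ∀ g ∈ S, Tendsto (fun i => L i g) l (𝓝 0))
    (hdense : (Submodule.span ℂ S).topologicalClosure = ⊤) {K : Set E} (hK : IsCompact K) :
    TendstoUniformlyOn (fun i g => L i g) 0 l K := by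
  rw [Metric.tendstoUniformlyOn_iff]
  intro ε hε
  set r := ε / (2 * (|M| + 1)) with hr
  have hr_pos : 0 < r := by positivity
  have hcover : ∀ g ∈ K, ∃ U ∈ 𝓝 g, ∀ᶠ i in l, ∀ h ∈ U, ‖L i h‖ < ε := by
    intro g _
    have hg : g ∈ closure (Submodule.span ℂ S : Set E) := by
      rw [← Submodule.topologicalClosure_coe, hdense]
      trivial
    obtain ⟨p, hp, hgp⟩ := Metric.mem_closure_iff.1 hg r hr_pos
    refine ⟨Metric.ball p r, Metric.isOpen_ball.mem_nhds hgp, ?_⟩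
    have hp_lim := (tendsto_zero_of_mem_span hS hp).norm
    rw [norm_zero] at hp_lim
    filter_upwards [hM, hp_lim.eventually_lt_const (half_pos hε)] with i hi hpi h hh
    calc ‖L i h‖ = ‖L i (h - p) + L i p‖ := by rw [← map_add, sub_add_cancel]
      _ ≤ ‖L i‖ * ‖h - p‖ + ‖L i p‖ := (norm_add_le _ _).trans (by gcongr; exact (L i).le_opNorm _)
      _ ≤ (|M| + 1) * r + ‖L i p‖ := by
          gcongr
          · linarith [le_abs_self M]
          · exact (mem_ball_iff_norm.1 hh).le
      _ < (|M| + 1) * r + ε / 2 := by gcongr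
      _ = ε := by rw [hr]; field_simp; ring
  choose! U hU_mem hU using hcover
  obtain ⟨t, htK, htcover⟩ := hK.elim_nhds_subcover U hU_mem
  filter_upwards [(t.eventually_all).2 fun g hg => hU g (htK g hg)] with i hi g hg
  obtain ⟨p, hp, hgp⟩ := Set.mem_iUnion₂.1 (htcover hg)
  simpa using hi p hp g hgp

end DenseSpan

lemma integral_fourier_coe (n : ℤ) :
    ∫ x in (0 : ℝ)..1, fourier n (x : UnitAddCircle) = if n = 0 then 1 else 0 := by
  have hcoeff := fourierCoeff_eq_intervalIntegral (T := 1) (fourier n) 0 0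
  rw [fourierCoeff_fourier, Pi.single_apply] at hcoeff
  simpa [eq_comm] using hcoeff.symm

/-- The functional `g ↦ ∫ₐ w(a) g(e(a)) dμ(a)`; by convention it is `0` if the weight `w` is not
integrable. -/
noncomputable def weightedIntegral {α X : Type*} [MeasurableSpace α] [TopologicalSpace α]
    [OpensMeasurableSpace α] [TopologicalSpace X] [CompactSpace X] (μ : Measure α) (w : α → ℂ)
    (e : C(α, X)) : C(X, ℂ) →L[ℂ] ℂ :=
  open Classical in
  if hw : Integrable w μ then
    LinearMap.mkContinuous
      { toFun := fun g => ∫ a, w a * g (e a) ∂μ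
        map_add' := fun g h => by
          have hinteg (g : C(X, ℂ)) : Integrable (fun a => w a * g (e a)) μ :=
            hw.mul_bdd (c := ‖g‖) (g.comp e).continuous.aestronglyMeasurable
              (.of_forall fun _ => g.norm_coe_le_norm _)
          simp only [ContinuousMap.add_apply, mul_add]
          exact integral_add (hinteg g) (hinteg h)
        map_smul' := fun a g => by
          simp only [ContinuousMap.smul_apply, smul_eq_mul, RingHom.id_apply, mul_left_comm _ a]
          exact integral_const_mul _ _ }
      (∫ a, ‖w a‖ ∂μ)
      fun g => by
        rw [← integral_mul_const]
        refine norm_integral_le_of_norm_le (hw.norm.mul_const _) (.of_forall fun a => ?_)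
        rw [norm_mul]
        gcongr
        exact g.norm_coe_le_norm _
  else 0

section WeightedIntegral

variable {α X : Type*} [MeasurableSpace α] [TopologicalSpace α] [OpensMeasurableSpace α]
  [TopologicalSpace X] [CompactSpace X] {μ : Measure α} {w : α → ℂ}

lemma weightedIntegral_apply (hw : Integrable w μ) (e : C(α, X)) (g : C(X, ℂ)) :
    weightedIntegral μ w e g = ∫ a, w a * g (e a) ∂μ := by
  rw [weightedIntegral, dif_pos hw]
  rfl

lemma norm_weightedIntegral_le (w : α → ℂ) (e : C(α, X)) :
    ‖weightedIntegral μ w e‖ ≤ ∫ a, ‖w a‖ ∂μ := by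
  have hnonneg : 0 ≤ ∫ a, ‖w a‖ ∂μ := integral_nonneg fun _ => norm_nonneg _
  rw [weightedIntegral]
  split_ifs with hw
  · exact LinearMap.mkContinuous_norm_le _ hnonneg _
  · rwa [norm_zero]

end WeightedIntegral

/-! ### Joint equidistribution of `x / c` and `x⁻¹ / c` over the units `x` modulo `c` -/

section UnitDiscrepancy

/-- The mean `g ↦ ∫₀¹ g` over the circle. -/
noncomputable def circleMean : C(UnitAddCircle, ℂ) →L[ℂ] ℂ :=
  weightedIntegral (volume.restrict (Set.Ioc (0 : ℝ) 1)) (fun _ => 1)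
    ⟨((↑) : ℝ → UnitAddCircle), continuous_quotient_mk'⟩

lemma circleMean_apply (g : C(UnitAddCircle, ℂ)) :
    circleMean g = ∫ x in (0 : ℝ)..1, g (x : UnitAddCircle) := by
  rw [circleMean, weightedIntegral_apply (integrable_const _),
    intervalIntegral.integral_of_le zero_le_one]
  simp

lemma norm_circleMean_le : ‖circleMean‖ ≤ 1 :=
  (norm_weightedIntegral_le _ _).trans (by simp)

variable (c : ℕ) [NeZero c] (m : ℤ)

/-- The functional `g ↦ ∑ₓ e(m x / c) g(x⁻¹ / c)`, the sum being over the units `x` modulo `c`. -/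
noncomputable def unitSum : C(UnitAddCircle, ℂ) →L[ℂ] ℂ :=
  ∑ x : (ZMod c)ˣ, ZMod.stdAddChar (m * x : ZMod c) •
    ContinuousMap.evalCLM ℂ (ZMod.toAddCircle (↑x⁻¹ : ZMod c))

/-- The difference between `unitSum c m` and what it would be if the pairs `(x / c, x⁻¹ / c)` were
perfectly equidistributed on the torus, normalised by the factor `c⁻¹`. -/
noncomputable def unitDiscrepancy : C(UnitAddCircle, ℂ) →L[ℂ] ℂ :=
  (c : ℂ)⁻¹ • (unitSum c m - if m = 0 then (φ c : ℂ) • circleMean else 0)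

lemma unitSum_apply (g : C(UnitAddCircle, ℂ)) :
    unitSum c m g = ∑ x : (ZMod c)ˣ, ZMod.stdAddChar (m * x : ZMod c) *
      g (ZMod.toAddCircle (↑x⁻¹ : ZMod c)) := by
  simp [unitSum, ContinuousMap.evalCLM]

lemma norm_unitSum_le : ‖unitSum c m‖ ≤ c := by
  refine ContinuousLinearMap.opNorm_le_bound _ c.cast_nonneg fun g => ?_
  rw [unitSum_apply]
  calc _ ≤ ∑ _x : (ZMod c)ˣ, ‖g‖ := norm_sum_le_of_le _ fun x _ => by
        rw [norm_mul, AddChar.norm_apply, one_mul]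
        exact g.norm_coe_le_norm _
    _ = φ c * ‖g‖ := by
        rw [Finset.sum_const, Finset.card_univ, ZMod.card_units_eq_totient, nsmul_eq_mul]
    _ ≤ c * ‖g‖ := by gcongr; exact Nat.totient_le c

lemma norm_unitDiscrepancy_le : ‖unitDiscrepancy c m‖ ≤ 2 := by
  have hc_pos : (0 : ℝ) < c := by exact_mod_cast Nat.pos_of_ne_zero (NeZero.ne c)
  refine ContinuousLinearMap.opNorm_le_bound _ zero_le_two fun g => ?_
  have hsum : ‖unitSum c m g‖ ≤ c * ‖g‖ :=
    (unitSum c m).le_of_opNorm_le (norm_unitSum_le c m) g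
  have hmean : ‖(if m = 0 then (φ c : ℂ) • circleMean else 0) g‖ ≤ c * ‖g‖ := by
    split_ifs
    · have hφ : (φ c : ℝ) ≤ c := by exact_mod_cast Nat.totient_le c
      have hg : ‖circleMean g‖ ≤ ‖g‖ := by
        simpa using circleMean.le_of_opNorm_le norm_circleMean_le g
      rw [smul_apply, smul_eq_mul, norm_mul, Complex.norm_natCast]
      gcongr
    · rw [zero_apply, norm_zero]
      positivity
  rw [unitDiscrepancy, smul_apply, sub_apply, smul_eq_mul,
    norm_mul, norm_inv, Complex.norm_natCast, inv_mul_le_iff₀ hc_pos]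
  linarith [norm_sub_le (unitSum c m g) ((if m = 0 then (φ c : ℂ) • circleMean else 0) g)]

lemma fourier_toAddCircle (n : ℤ) (x : ZMod c) :
    fourier n (ZMod.toAddCircle x) = ZMod.stdAddChar (n * x : ZMod c) := by
  obtain ⟨j, rfl⟩ := ZMod.intCast_surjective x
  rw [ZMod.toAddCircle_intCast, ← Int.cast_mul, ZMod.stdAddChar_coe, fourier_coe_apply]
  congr 1
  push_cast
  ring

lemma unitSum_fourier (n : ℤ) :
    unitSum c m (fourier n) = kloostermanSum (m : ZMod c) (n : ZMod c) := by
  rw [unitSum_apply, kloostermanSum]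
  exact Finset.sum_congr rfl fun x _ => by rw [fourier_toAddCircle, ← AddChar.map_add_eq_mul]

lemma unitDiscrepancy_fourier (n : ℤ) :
    unitDiscrepancy c m (fourier n) =
      if m = 0 ∧ n = 0 then 0 else (c : ℂ)⁻¹ * kloostermanSum (m : ZMod c) (n : ZMod c) := by
  have hmean : circleMean (fourier n) = if n = 0 then 1 else 0 := by
    rw [circleMean_apply, integral_fourier_coe]
  rcases eq_or_ne m 0 with rfl | hm
  · rcases eq_or_ne n 0 with rfl | hn
    · simp [unitDiscrepancy, unitSum_fourier, hmean, kloostermanSum, ZMod.card_units_eq_totient]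
    · simp [unitDiscrepancy, unitSum_fourier, hmean, hn]
  · simp [unitDiscrepancy, unitSum_fourier, hm]

end UnitDiscrepancy

lemma tendsto_unitDiscrepancy_fourier (m n : ℤ) :
    Tendsto (fun k : ℕ => unitDiscrepancy (k + 1) m (fourier n)) atTop (𝓝 0) := by
  simp only [unitDiscrepancy_fourier]
  split_ifs with hmn
  · exact tendsto_const_nhds
  rw [Metric.tendsto_atTop]
  intro ε hε
  obtain ⟨N, hN⟩ : ∃ N : ℕ, ∀ (c : ℕ) [NeZero c], N ≤ c →
      ‖kloostermanSum (m : ZMod c) (n : ZMod c)‖ ≤ ε / 2 * c := by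
    rcases eq_or_ne m 0 with rfl | hm
    · have hn : n ≠ 0 := fun hn => hmn ⟨rfl, hn⟩
      obtain ⟨N, hN⟩ := exists_norm_kloostermanSum_le_mul hn (half_pos hε)
      exact ⟨N, fun c _ hc => by rw [kloostermanSum_comm]; exact hN c hc _⟩
    · obtain ⟨N, hN⟩ := exists_norm_kloostermanSum_le_mul hm (half_pos hε)
      exact ⟨N, fun c _ hc => hN c hc _⟩
  refine ⟨N, fun k hk => ?_⟩
  have hk_pos : (0 : ℝ) < (k + 1 : ℕ) := by positivity
  rw [dist_zero_right, norm_mul, norm_inv, Complex.norm_natCast, inv_mul_lt_iff₀ hk_pos]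
  linarith [hN (k + 1) (by omega), mul_pos hε hk_pos]

lemma tendstoUniformlyOn_unitDiscrepancy (m : ℤ) {K : Set C(UnitAddCircle, ℂ)}
    (hK : IsCompact K) :
    TendstoUniformlyOn (fun (k : ℕ) g => unitDiscrepancy (k + 1) m g) 0 atTop K :=
  tendstoUniformlyOn_zero_of_dense_span (.of_forall fun k => norm_unitDiscrepancy_le (k + 1) m)
    (Set.forall_mem_range.2 (tendsto_unitDiscrepancy_fourier m)) span_fourier_closure_eq_top hK

/-! ### Test functions on the modular surface -/

section TestFunction

open scoped UpperHalfPlane MatrixGroups Modular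

/-- The continuous `SL(2,ℤ)`-invariant functions on the upper half-plane that vanish on
`{Im z > Y}`; by invariance their support is compact modulo `SL(2,ℤ)`. As in the main theorem, they
are encoded as functions on `ℂ` whose values off the upper half-plane are irrelevant. -/
structure IsTestFunction (f : ℂ → ℝ) (Y : ℝ) : Prop where
  continuousOn : ContinuousOn f {z : ℂ | 0 < z.im}
  moebius_eq : ∀ a b c d : ℤ, a * d - b * c = 1 → ∀ z : ℂ, 0 < z.im →
    f (((a : ℂ) * z + b) / ((c : ℂ) * z + d)) = f z
  height_pos : 0 < Y
  eq_zero_of_lt_im : ∀ z : ℂ, Y < z.im → f z = 0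

lemma coe_smul_eq_div (γ : SL(2, ℤ)) (z : ℍ) :
    ((γ • z : ℍ) : ℂ) = (γ 0 0 * z + γ 0 1) / (γ 1 0 * z + γ 1 1) := by
  rw [UpperHalfPlane.coe_specialLinearGroup_apply]
  simp only [algebraMap_int_eq, eq_intCast, ofReal_intCast]

lemma dist_le_of_norm_sub_le {z w : ℍ} {r : ℝ} (hr : r ≤ 1 / 2)
    (hzw : ‖(z : ℂ) - w‖ ≤ r * w.im) : dist z w ≤ 2 * r := by
  have hw := w.im_pos
  have him : 1 / 2 * w.im ≤ z.im := by
    have hsub := (abs_le.1 ((Complex.abs_im_le_norm _).trans hzw)).1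
    rw [Complex.sub_im, UpperHalfPlane.coe_im, UpperHalfPlane.coe_im] at hsub
    linarith [mul_le_mul_of_nonneg_right hr hw.le]
  have hr_nonneg : 0 ≤ r := nonneg_of_mul_nonneg_left ((norm_nonneg _).trans hzw) hw
  have hsqrt : 1 / 2 * w.im ≤ √(z.im * w.im) := Real.le_sqrt_of_sq_le (by nlinarith)
  calc dist z w ≤ dist (z : ℂ) w / √(z.im * w.im) := UpperHalfPlane.dist_le_dist_coe_div_sqrt z w
    _ ≤ r * w.im / (1 / 2 * w.im) := by rw [dist_eq_norm]; gcongr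
    _ = 2 * r := by field_simp

namespace IsTestFunction

variable {f : ℂ → ℝ} {Y : ℝ}

lemma smul_eq (hf : IsTestFunction f Y) (γ : SL(2, ℤ)) (z : ℍ) : f (γ • z : ℍ) = f z := by
  rw [coe_smul_eq_div]
  exact hf.moebius_eq _ _ _ _ (by rw [← Matrix.det_fin_two, γ.det_coe]) z z.im_pos

lemma add_intCast_eq (hf : IsTestFunction f Y) {z : ℂ} (hz : 0 < z.im) (n : ℤ) :
    f (z + n) = f z := by
  simpa using hf.moebius_eq 1 n 0 1 (by ring) z hz

lemma continuous_coe (hf : IsTestFunction f Y) : Continuous fun z : ℍ => f z :=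
  hf.continuousOn.comp_continuous UpperHalfPlane.continuous_coe fun z => z.im_pos

lemma exists_abs_le (hf : IsTestFunction f Y) :
    ∃ B : ℝ, 0 < B ∧ ∀ z : ℂ, 0 < z.im → |f z| ≤ B := by
  obtain ⟨B, hB⟩ :=
    (ModularGroup.isCompact_truncatedFundamentalDomain Y).exists_bound_of_continuousOn
      hf.continuous_coe.continuousOn
  refine ⟨max B 1, by positivity, fun z hz => ?_⟩
  lift z to ℍ using hz
  obtain ⟨γ, hγ⟩ := ModularGroup.exists_smul_mem_fd z
  rw [← hf.smul_eq γ]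
  rcases le_or_gt (γ • z).im Y with hY | hY
  · exact (hB _ ⟨hγ, hY⟩).trans (le_max_left _ _)
  · rw [hf.eq_zero_of_lt_im _ hY, abs_zero]
    positivity

lemma uniformContinuous (hf : IsTestFunction f Y) : UniformContinuous fun z : ℍ => f z := by
  rw [Metric.uniformContinuous_iff]
  intro ε hε
  obtain ⟨ρ, hρ_pos, hρ⟩ := Metric.mem_uniformity_dist.1
    ((ModularGroup.isCompact_truncatedFundamentalDomain (2 * Y)).uniformContinuousAt_of_continuousAt
      (fun z : ℍ => f z) (fun _ _ => hf.continuous_coe.continuousAt)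
      (Metric.dist_mem_uniformity hε))
  refine ⟨min ρ (Real.log 2), lt_min hρ_pos (Real.log_pos one_lt_two), fun w z hwz => ?_⟩
  obtain ⟨γ, hγ⟩ := ModularGroup.exists_smul_mem_fd w
  replace hwz : dist (γ • w) (γ • z) < min ρ (Real.log 2) := by
    rwa [show dist (γ • w) (γ • z) = dist w z from dist_smul (γ : SL(2, ℝ)) w z]
  rw [← hf.smul_eq γ w, ← hf.smul_eq γ z]
  rcases le_or_gt (γ • w).im (2 * Y) with hY | hY
  · exact hρ (hwz.trans_le (min_le_left _ _)) ⟨hγ, hY⟩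
  · have hexp : Real.exp (dist (γ • w) (γ • z)) ≤ 2 :=
      (Real.le_log_iff_exp_le two_pos).1 (hwz.le.trans (min_le_right _ _))
    have hz : Y < (γ • z).im := by
      refine lt_of_lt_of_le ?_ (UpperHalfPlane.im_div_exp_dist_le (γ • w) (γ • z))
      rw [lt_div_iff₀ (Real.exp_pos _)]
      linarith [mul_le_mul_of_nonneg_left hexp hf.height_pos.le]
    have hw : Y < (γ • w).im := by linarith [hf.height_pos]
    rwa [hf.eq_zero_of_lt_im _ hw, hf.eq_zero_of_lt_im _ hz, dist_self]

lemma exists_abs_sub_le (hf : IsTestFunction f Y) {ε : ℝ} (hε : 0 < ε) :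
    ∃ r : ℝ, 0 < r ∧ ∀ z w : ℂ, 0 < z.im → 0 < w.im → ‖z - w‖ ≤ r * w.im → |f z - f w| ≤ ε := by
  obtain ⟨ρ, hρ_pos, hρ⟩ := Metric.uniformContinuous_iff.1 hf.uniformContinuous ε hε
  refine ⟨min (1 / 2) (ρ / 4), by positivity, fun z w hz hw hzw => ?_⟩
  lift z to ℍ using hz
  lift w to ℍ using hw
  refine (hρ ((dist_le_of_norm_sub_le (min_le_left _ _) hzw).trans_lt ?_)).le
  linarith [min_le_right (1 / 2) (ρ / 4)]

end IsTestFunction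

end TestFunction

/-! ### Unfolding over the cosets of the integer translations -/

section PeriodicDomain

/-- The squared distance from `w` to the nearest integer. -/
noncomputable def sqDistInt (w : ℂ) : ℝ := ‖(w.re : UnitAddCircle)‖ ^ 2 + w.im ^ 2

/-- The points of the upper half-plane at distance more than `1` from all integers, which up to
their boundaries is the union of the integer translates of the standard fundamental domain. -/
def periodicDomain : Set ℂ := {w | 0 < w.im ∧ 1 < sqDistInt w}

lemma exists_sqDistInt_eq_normSq_add (w : ℂ) : ∃ n : ℤ, sqDistInt w = normSq (w + n) := by
  refine ⟨-round w.re, ?_⟩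
  rw [sqDistInt, UnitAddCircle.norm_eq, sq_abs, normSq_apply]
  simp
  ring

lemma sqDistInt_le_normSq_add (w : ℂ) (n : ℤ) : sqDistInt w ≤ normSq (w + n) := by
  have hround : (w.re - round w.re) ^ 2 ≤ (w.re - (-n : ℤ)) ^ 2 :=
    sq_le_sq.2 (round_le w.re (-n))
  rw [sqDistInt, UnitAddCircle.norm_eq, sq_abs, normSq_apply]
  simp only [add_re, intCast_re, add_im, intCast_im, Int.cast_neg] at hround ⊢
  linarith

lemma sqDistInt_eq_normSq {w : ℂ} (hw : |w.re| ≤ 1 / 2) : sqDistInt w = normSq w := by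
  have hnorm : ‖(w.re : UnitAddCircle)‖ = |w.re| :=
    (AddCircle.norm_coe_eq_abs_iff (p := 1) one_ne_zero).2 (by simpa using hw)
  rw [sqDistInt, hnorm, sq_abs, normSq_apply]
  ring

lemma continuous_sqDistInt : Continuous sqDistInt :=
  (((AddCircle.continuous_mk' 1).comp Complex.continuous_re).norm.pow 2).add
    (Complex.continuous_im.pow 2)

lemma isOpen_periodicDomain : IsOpen periodicDomain :=
  (isOpen_lt continuous_const Complex.continuous_im).inter
    (isOpen_lt continuous_const continuous_sqDistInt)

lemma add_intCast_mem_periodicDomain_iff (w : ℂ) (n : ℤ) :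
    w + n ∈ periodicDomain ↔ w ∈ periodicDomain := by
  simp [periodicDomain, sqDistInt]

lemma three_quarters_lt_im {w : ℂ} (hw : w ∈ periodicDomain) : 3 / 4 < w.im := by
  obtain ⟨him, hdist⟩ := hw
  rw [sqDistInt, UnitAddCircle.norm_eq] at hdist
  have hre : |w.re - round w.re| ^ 2 ≤ (1 / 2) ^ 2 := by
    gcongr
    exact abs_sub_round w.re
  nlinarith

lemma one_lt_normSq_intCast_mul_add {w : ℂ} (hw : w ∈ periodicDomain) {c : ℤ} (hc : c ≠ 0)
    (d : ℤ) : 1 < normSq (c * w + d) := by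
  rcases (Int.one_le_abs hc).eq_or_lt with hc_one | hc_two
  · have hc_mul_self := Int.isUnit_mul_self (Int.isUnit_iff_abs_eq.2 hc_one.symm)
    have hc_sq : (c : ℂ) * c = 1 := by exact_mod_cast hc_mul_self
    have hc_norm : normSq (c : ℂ) = 1 := by rw [normSq_intCast]; exact_mod_cast hc_mul_self
    calc 1 < sqDistInt w := hw.2
      _ ≤ normSq (w + (c * d : ℤ)) := sqDistInt_le_normSq_add w _
      _ = normSq (c * (w + (c * d : ℤ))) := by rw [map_mul, hc_norm, one_mul]
      _ = normSq (c * w + d) := by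
          congr 1
          push_cast
          linear_combination (d : ℂ) * hc_sq
  · have hc_sq : (2 : ℝ) ^ 2 ≤ (c : ℝ) ^ 2 := by
      exact_mod_cast sq_le_sq.2 (show |(2 : ℤ)| ≤ |c| from hc_two)
    have him := three_quarters_lt_im hw
    calc (1 : ℝ) < 2 ^ 2 * (3 / 4 * (3 / 4)) := by norm_num
      _ ≤ (c : ℝ) ^ 2 * (w.im * w.im) := by gcongr
      _ = (c * w + d).im * (c * w + d).im := by simp; ring
      _ ≤ normSq (c * w + d) := im_sq_le_normSq _

open scoped UpperHalfPlane MatrixGroups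

lemma normSq_bottom_row_pos (γ : SL(2, ℤ)) (z : ℍ) : 0 < normSq (γ 1 0 * z + γ 1 1) := by
  rw [← ModularGroup.denom_apply]
  exact normSq_pos.2 (UpperHalfPlane.denom_ne_zero _ z)

lemma im_smul_eq_div (γ : SL(2, ℤ)) (z : ℍ) :
    (γ • z).im = z.im / normSq (γ 1 0 * z + γ 1 1) := by
  rw [ModularGroup.im_smul_eq_div_normSq, ModularGroup.denom_apply]

lemma im_smul_lt_im {γ : SL(2, ℤ)} {z : ℍ} (hz : (z : ℂ) ∈ periodicDomain) (hγ : γ 1 0 ≠ 0) :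
    (γ • z).im < z.im := by
  rw [im_smul_eq_div]
  exact div_lt_self z.im_pos (one_lt_normSq_intCast_mul_add hz hγ _)

lemma lower_left_eq_zero {γ : SL(2, ℤ)} {z : ℍ} (hz : (z : ℂ) ∈ periodicDomain)
    (hγz : ((γ • z : ℍ) : ℂ) ∈ periodicDomain) : γ 1 0 = 0 := by
  by_contra hγ
  have hγ_inv : γ⁻¹ 1 0 ≠ 0 := by simpa [Matrix.SpecialLinearGroup.SL2_inv_expl] using hγ
  have hlt := im_smul_lt_im hγz hγ_inv
  rw [inv_smul_smul] at hlt
  exact hlt.not_gt (im_smul_lt_im hz hγ)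

lemma exists_smul_mem_periodicDomain (z : ℍ)
    (hz : ∀ γ : SL(2, ℤ), normSq (γ 0 0 * z + γ 0 1) ≠ normSq (γ 1 0 * z + γ 1 1)) :
    ∃ γ : SL(2, ℤ), ((γ • z : ℍ) : ℂ) ∈ periodicDomain := by
  obtain ⟨γ, hnorm, hre⟩ := ModularGroup.exists_smul_mem_fd z
  refine ⟨γ, (γ • z).im_pos, ?_⟩
  rw [sqDistInt_eq_normSq hre]
  refine hnorm.lt_of_ne' ?_
  rw [coe_smul_eq_div, normSq_div, Ne, div_eq_one_iff_eq (normSq_bottom_row_pos γ z).ne']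
  exact hz γ

end PeriodicDomain

section CosetMap

open scoped UpperHalfPlane MatrixGroups

/-- The Möbius transformation `z ↦ (u⁻¹ z + b) / (c z + u)`, where the entries stand for their
representatives in `[0, c)`, written as `u⁻¹ / c - 1 / (c (c z + u))`. -/
noncomputable def cosetMap (c : ℕ) [NeZero c] (u : (ZMod c)ˣ) (z : ℂ) : ℂ :=
  (↑u⁻¹ : ZMod c).val / c - 1 / (c * (c * z + (u : ZMod c).val))

lemma exists_coe_smul_eq_cosetMap (c : ℕ) [NeZero c] (u : (ZMod c)ˣ) (q : ℤ) :
    ∃ γ : SL(2, ℤ), γ 1 0 = c ∧ γ 1 1 = (u : ZMod c).val + q * c ∧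
      ∀ z : ℍ, ((γ • z : ℍ) : ℂ) = cosetMap c u (z + q) := by
  obtain ⟨b, hb⟩ : (c : ℤ) ∣ (↑u⁻¹ : ZMod c).val * ((u : ZMod c).val + q * c) - 1 := by
    rw [← ZMod.intCast_zmod_eq_zero_iff_dvd]
    simp
  refine ⟨⟨!![((↑u⁻¹ : ZMod c).val : ℤ), b; c, (u : ZMod c).val + q * c], ?_⟩, rfl, rfl,
    fun z => ?_⟩
  · rw [Matrix.det_fin_two_of]
    linarith
  set γ : SL(2, ℤ) := ⟨!![((↑u⁻¹ : ZMod c).val : ℤ), b; c, (u : ZMod c).val + q * c], _⟩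
  have hden : (c : ℂ) * z + ((u : ZMod c).val + q * c) ≠ 0 := by
    simpa [γ] using normSq_pos.1 (normSq_bottom_row_pos γ z)
  have hc : (c : ℂ) ≠ 0 := NeZero.ne _
  have hdet : ((↑u⁻¹ : ZMod c).val * ((u : ZMod c).val + q * c) - 1 : ℂ) = c * b := by
    exact_mod_cast hb
  have hcoe : ((γ • z : ℍ) : ℂ) = ((↑u⁻¹ : ZMod c).val * z + b) /
      (c * z + ((u : ZMod c).val + q * c)) := by
    rw [coe_smul_eq_div]
    simp [γ]
  rw [hcoe, cosetMap, show (c * (z + q) + (u : ZMod c).val : ℂ) =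
    c * z + ((u : ZMod c).val + q * c) by ring, div_sub_div _ _ hc (mul_ne_zero hc hden),
    div_eq_div_iff hden (mul_ne_zero hc (mul_ne_zero hc hden))]
  linear_combination (-c * (c * z + ((u : ZMod c).val + q * c)) : ℂ) * hdet

lemma mul_inv_apply_lower_left (γ γ' : SL(2, ℤ)) :
    (γ' * γ⁻¹) 1 0 = γ' 1 0 * γ 1 1 - γ' 1 1 * γ 1 0 := by
  rw [Matrix.SpecialLinearGroup.coe_mul, Matrix.SpecialLinearGroup.SL2_inv_expl, Matrix.mul_apply,
    Fin.sum_univ_two]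
  simp
  ring

lemma cosetMap_mem_periodicDomain_unique {z : ℍ} {c c' : ℕ} [NeZero c] [NeZero c']
    {u : (ZMod c)ˣ} {u' : (ZMod c')ˣ} {q q' : ℤ} (h : cosetMap c u (z + q) ∈ periodicDomain)
    (h' : cosetMap c' u' (z + q') ∈ periodicDomain) :
    c = c' ∧ ((u : ZMod c).val + q * c : ℤ) = (u' : ZMod c').val + q' * c' := by
  obtain ⟨γ, hγc, hγd, hγ⟩ := exists_coe_smul_eq_cosetMap c u q
  obtain ⟨γ', hγc', hγd', hγ'⟩ := exists_coe_smul_eq_cosetMap c' u' q'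
  rw [← hγ] at h
  rw [← hγ', ← inv_smul_smul γ z, smul_smul] at h'
  have hrow := lower_left_eq_zero h h'
  rw [mul_inv_apply_lower_left, sub_eq_zero, hγc, hγc'] at hrow
  have hcop := ModularGroup.bottom_row_coprime γ
  have hcop' := ModularGroup.bottom_row_coprime γ'
  rw [hγc] at hcop
  rw [hγc'] at hcop'
  obtain rfl : c = c' := Nat.dvd_antisymm
    (Int.natCast_dvd_natCast.1 (hcop.dvd_of_dvd_mul_right ⟨γ' 1 1, by linarith⟩))
    (Int.natCast_dvd_natCast.1 (hcop'.dvd_of_dvd_mul_left ⟨γ 1 1, by linarith⟩))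
  rw [← hγd, ← hγd']
  exact ⟨rfl, mul_left_cancel₀ (NeZero.ne (c : ℤ)) (by linarith)⟩

lemma unit_val_add_mul_injective {c : ℕ} [NeZero c] {u u' : (ZMod c)ˣ} {q q' : ℤ}
    (h : ((u : ZMod c).val + q * c : ℤ) = (u' : ZMod c).val + q' * c) : u = u' ∧ q = q' := by
  obtain rfl : u = u' := Units.ext (by simpa using congrArg (Int.cast : ℤ → ZMod c) h)
  exact ⟨rfl, mul_right_cancel₀ (NeZero.ne (c : ℤ)) (add_left_cancel h)⟩

lemma exists_unit_val_add_mul {c : ℕ} [NeZero c] {d : ℤ} (hcd : IsCoprime (c : ℤ) d) :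
    ∃ (u : (ZMod c)ˣ) (q : ℤ), d = (u : ZMod c).val + q * c := by
  obtain ⟨u, hu⟩ := ZMod.coe_int_isUnit_iff_isCoprime d c |>.2 hcd
  obtain ⟨q, hq⟩ : (c : ℤ) ∣ d - (u : ZMod c).val := by
    rw [← ZMod.intCast_zmod_eq_zero_iff_dvd]
    simp [hu]
  exact ⟨u, q, by linarith⟩

lemma exists_cosetMap_mem_periodicDomain {γ : SL(2, ℤ)} {z : ℍ} (hγ : γ 1 0 ≠ 0)
    (hz : ((γ • z : ℍ) : ℂ) ∈ periodicDomain) :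
    ∃ (c : ℕ) (u : (ZMod (c + 1))ˣ) (q : ℤ), cosetMap (c + 1) u (z + q) ∈ periodicDomain := by
  wlog hpos : 0 < γ 1 0 generalizing γ
  · exact this (γ := -γ) (by simpa using hγ) (by rwa [ModularGroup.SL_neg_smul])
      (by simpa using lt_of_le_of_ne (not_lt.1 hpos) hγ)
  obtain ⟨c, hc⟩ : ∃ c : ℕ, γ 1 0 = (c + 1 : ℕ) := ⟨(γ 1 0 - 1).toNat, by push_cast; omega⟩
  obtain ⟨u, q, hd⟩ := exists_unit_val_add_mul (hc ▸ ModularGroup.bottom_row_coprime γ)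
  obtain ⟨γ', hγc', hγd', hγ'⟩ := exists_coe_smul_eq_cosetMap (c + 1) u q
  obtain ⟨n, hn⟩ := ModularGroup.exists_eq_T_zpow_of_c_eq_zero (g := γ' * γ⁻¹)
    (by rw [mul_inv_apply_lower_left, hγc', hγd', hc, hd]; ring)
  have htranslate : ((γ' • z : ℍ) : ℂ) = (γ • z : ℍ) + n := by
    rw [← ModularGroup.coe_T_zpow_smul_eq, ← hn, mul_smul, inv_smul_smul]
  refine ⟨c, u, q, ?_⟩
  rwa [← hγ', htranslate, add_intCast_mem_periodicDomain_iff]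

lemma existsUnique_cosetMap_mem_periodicDomain {z : ℍ} (him : z.im < 3 / 4)
    (hz : ∀ γ : SL(2, ℤ), normSq (γ 0 0 * z + γ 0 1) ≠ normSq (γ 1 0 * z + γ 1 1)) :
    ∃! i : Σ c : ℕ, (ZMod (c + 1))ˣ × ℤ,
      cosetMap (i.1 + 1) i.2.1 (z + i.2.2) ∈ periodicDomain := by
  obtain ⟨γ, hγ⟩ := exists_smul_mem_periodicDomain z hz
  have hγ_ne : γ 1 0 ≠ 0 := by
    intro hzero
    obtain ⟨n, hn⟩ := ModularGroup.exists_eq_T_zpow_of_c_eq_zero hzero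
    have hlt := three_quarters_lt_im hγ
    rw [hn, UpperHalfPlane.coe_im, ModularGroup.im_T_zpow_smul] at hlt
    exact hlt.not_gt him
  obtain ⟨c, u, q, hcuq⟩ := exists_cosetMap_mem_periodicDomain hγ_ne hγ
  refine ⟨⟨c, u, q⟩, hcuq, ?_⟩
  rintro ⟨c', u', q'⟩ hcuq'
  obtain ⟨hc, hd⟩ := cosetMap_mem_periodicDomain_unique hcuq' hcuq
  obtain rfl : c' = c := Nat.succ_injective hc
  obtain ⟨rfl, rfl⟩ := unit_val_add_mul_injective hd
  rfl

variable {c : ℕ} [NeZero c] {u : (ZMod c)ˣ} {z : ℂ}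

lemma im_cosetMap (hz : 0 < z.im) :
    (cosetMap c u z).im = z.im / normSq (c * z + (u : ZMod c).val) := by
  lift z to ℍ using hz
  obtain ⟨γ, hγc, hγd, hγ⟩ := exists_coe_smul_eq_cosetMap c u 0
  have him := im_smul_eq_div γ z
  rw [hγc, hγd, ← UpperHalfPlane.coe_im, hγ] at him
  simpa using him

lemma normSq_lt_of_cosetMap_mem (hz : 0 < z.im) (h : cosetMap c u z ∈ periodicDomain) :
    normSq (c * z + (u : ZMod c).val) < 2 * z.im := by
  have him := three_quarters_lt_im h
  rw [im_cosetMap hz] at him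
  have hpos : 0 < normSq (c * z + (u : ZMod c).val) := by
    refine (normSq_nonneg _).lt_of_ne fun hzero => ?_
    rw [← hzero, div_zero] at him
    norm_num at him
  rw [lt_div_iff₀ hpos] at him
  linarith

lemma sq_mul_im_lt_two_of_cosetMap_mem (hz : 0 < z.im) (h : cosetMap c u z ∈ periodicDomain) :
    (c : ℝ) ^ 2 * z.im < 2 := by
  have him_sq := (im_sq_le_normSq _).trans_lt (normSq_lt_of_cosetMap_mem hz h)
  refine lt_of_mul_lt_mul_right ?_ hz.le
  simp only [add_im, mul_im, natCast_re, natCast_im, zero_mul, add_zero] at him_sq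
  linarith

end CosetMap

section Genericity

open scoped MatrixGroups

lemma ae_quadratic_ne_zero {a b c : ℝ} (h : ¬(a = 0 ∧ b = 0 ∧ c = 0)) :
    ∀ᵐ x : ℝ, a * x ^ 2 + b * x + c ≠ 0 := by
  open Polynomial in
  set p : ℝ[X] := C a * X ^ 2 + C b * X + C c with hp
  have hp_ne : p ≠ 0 := by
    intro hzero
    have hcoeff (n : ℕ) : p.coeff n = 0 := by rw [hzero, Polynomial.coeff_zero]
    refine h ⟨?_, ?_, ?_⟩
    · simpa [hp, Polynomial.coeff_X, Polynomial.coeff_C] using hcoeff 2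
    · simpa [hp, Polynomial.coeff_X, Polynomial.coeff_C] using hcoeff 1
    · simpa [hp, Polynomial.coeff_X, Polynomial.coeff_C] using hcoeff 0
  filter_upwards [(Polynomial.finite_setOfPred_isRoot hp_ne).countable.ae_notMem volume] with x hx
  simpa [hp, Polynomial.IsRoot] using hx

lemma ae_normSq_ne_normSq (y : ℝ) : ∀ᵐ x : ℝ, ∀ γ : SL(2, ℤ),
    normSq (γ 0 0 * (x + y * I) + γ 0 1) ≠ normSq (γ 1 0 * (x + y * I) + γ 1 1) := by
  have : Countable (Matrix (Fin 2) (Fin 2) ℤ) := inferInstanceAs (Countable (Fin 2 → Fin 2 → ℤ))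
  have : Countable SL(2, ℤ) := Subtype.val_injective.countable
  rw [ae_all_iff]
  intro γ
  have hdet : (γ 0 0 * γ 1 1 - γ 0 1 * γ 1 0 : ℝ) = 1 := by
    exact_mod_cast (Matrix.det_fin_two γ.1).symm.trans γ.det_coe
  generalize γ 0 0 = a, γ 0 1 = b, γ 1 0 = c, γ 1 1 = d at hdet
  have hcoeff : ¬((a : ℝ) ^ 2 - c ^ 2 = 0 ∧ 2 * (a * b - c * d : ℝ) = 0 ∧
      b ^ 2 - d ^ 2 + (a ^ 2 - c ^ 2) * y ^ 2 = (0 : ℝ)) := by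
    rintro ⟨hsq, hcross, hconst⟩
    have hdet_sq : (a * d - b * c : ℝ) ^ 2 = 0 := by
      linear_combination (d ^ 2 - c ^ 2 * y ^ 2) * hsq - c * d * hcross + c ^ 2 * hconst
    rw [hdet] at hdet_sq
    norm_num at hdet_sq
  filter_upwards [ae_quadratic_ne_zero hcoeff] with x hx heq
  refine hx ?_
  simp only [normSq_apply, add_re, mul_re, intCast_re, intCast_im, ofReal_re, ofReal_im, I_re, I_im,
    add_im, mul_im, mul_zero, mul_one, zero_mul, sub_zero, add_zero, zero_add] at heq
  linear_combination heq

end Genericity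

section Cutoff

open scoped UpperHalfPlane

/-- The restriction of `f` to `periodicDomain`. Summed over the cosets of the integer translations
in `SL(2,ℤ)`, it gives back an invariant `f` (away from a null set). -/
noncomputable def cutoff (f : ℂ → ℝ) : ℂ → ℝ := periodicDomain.indicator f

variable {f : ℂ → ℝ} {Y B : ℝ}

lemma cutoff_of_notMem {w : ℂ} (hw : w ∉ periodicDomain) : cutoff f w = 0 :=
  Set.indicator_of_notMem hw f

lemma abs_cutoff_le (hB : ∀ z : ℂ, 0 < z.im → |f z| ≤ B) (w : ℂ) : |cutoff f w| ≤ B := by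
  by_cases hw : w ∈ periodicDomain
  · rw [cutoff, Set.indicator_of_mem hw]
    exact hB w hw.1
  · rw [cutoff_of_notMem hw, abs_zero]
    exact (abs_nonneg _).trans (hB I (by simp))

lemma measurable_cutoff (hf : IsTestFunction f Y) : Measurable (cutoff f) := by
  classical
  rw [cutoff, ← Set.piecewise_eq_indicator]
  exact (hf.continuousOn.mono fun w hw => hw.1).measurable_piecewise continuousOn_const
    isOpen_periodicDomain.measurableSet

lemma continuousAt_cutoff (hf : IsTestFunction f Y) {w : ℂ} (him : 0 < w.im)
    (hdist : sqDistInt w ≠ 1) : ContinuousAt (cutoff f) w := by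
  rcases hdist.lt_or_gt with hlt | hgt
  · refine (continuousAt_const (y := 0)).congr ?_
    filter_upwards [(isOpen_lt continuous_sqDistInt continuous_const).mem_nhds hlt] with v hv
    exact (cutoff_of_notMem fun hmem => hmem.2.not_gt hv).symm
  · refine ContinuousAt.congr (hf.continuousOn.continuousAt
      ((isOpen_lt continuous_const Complex.continuous_im).mem_nhds him)) ?_
    filter_upwards [isOpen_periodicDomain.mem_nhds ⟨him, hgt⟩] with v hv
    exact (Set.indicator_of_mem hv f).symm

lemma cutoff_add_intCast (hf : IsTestFunction f Y) (w : ℂ) (n : ℤ) :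
    cutoff f (w + n) = cutoff f w := by
  by_cases hw : w ∈ periodicDomain
  · rw [cutoff, Set.indicator_of_mem hw,
      Set.indicator_of_mem ((add_intCast_mem_periodicDomain_iff w n).2 hw), hf.add_intCast_eq hw.1]
  · rw [cutoff_of_notMem hw, cutoff_of_notMem (mt (add_intCast_mem_periodicDomain_iff w n).1 hw)]

lemma eq_tsum_cutoff (hf : IsTestFunction f Y) {z : ℍ} (him : z.im < 3 / 4)
    (hz : ∀ γ : Matrix.SpecialLinearGroup (Fin 2) ℤ,
      normSq (γ 0 0 * z + γ 0 1) ≠ normSq (γ 1 0 * z + γ 1 1))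
    {N : ℕ} (hN : 2 ≤ (N : ℝ) ^ 2 * z.im) :
    f z = ∑' q : ℤ, ∑ c ∈ Finset.range N, ∑ u : (ZMod (c + 1))ˣ,
      cutoff f (cosetMap (c + 1) u (z + q)) := by
  obtain ⟨⟨c, u, q⟩, hmem, hunique⟩ := existsUnique_cosetMap_mem_periodicDomain him hz
  dsimp only at hmem hunique
  have hcutoff {c' : ℕ} {u' : (ZMod (c' + 1))ˣ} {q' : ℤ}
      (hne : (⟨c', u', q'⟩ : Σ c : ℕ, (ZMod (c + 1))ˣ × ℤ) ≠ ⟨c, u, q⟩) :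
      cutoff f (cosetMap (c' + 1) u' (z + q')) = 0 :=
    cutoff_of_notMem fun hmem' => hne (hunique ⟨c', u', q'⟩ hmem')
  have hcN : c < N := by
    have hlt := sq_mul_im_lt_two_of_cosetMap_mem (by simpa using z.im_pos) hmem
    rw [add_im, intCast_im, add_zero, UpperHalfPlane.coe_im] at hlt
    have hsq := lt_of_mul_lt_mul_right (hlt.trans_le hN) z.im_pos.le
    have hlt_cast := lt_of_pow_lt_pow_left₀ 2 (Nat.cast_nonneg N) hsq
    exact (Nat.lt_succ_self c).trans (by exact_mod_cast hlt_cast)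
  rw [tsum_eq_single q, Finset.sum_eq_single_of_mem c (Finset.mem_range.2 hcN),
    Finset.sum_eq_single u]
  · obtain ⟨γ, -, -, hγ⟩ := exists_coe_smul_eq_cosetMap (c + 1) u q
    rw [cutoff, Set.indicator_of_mem hmem, ← hγ, hf.smul_eq]
  · exact fun u' _ hu' => hcutoff (by simpa using hu')
  · exact fun hu => absurd (Finset.mem_univ u) hu
  · exact fun c' _ hc' => Finset.sum_eq_zero fun u' _ => hcutoff fun h => hc' (congrArg Sigma.fst h)
  · refine fun q' hq' => Finset.sum_eq_zero fun c' _ => Finset.sum_eq_zero fun u' _ => hcutoff ?_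
    rintro h
    cases h
    exact hq' rfl

end Cutoff

section Integrals

lemma integrable_of_norm_le_of_support_subset {α E : Type*} [MeasurableSpace α] {μ : Measure α}
    [NormedAddCommGroup E] {g : α → E} {s : Set α} {B : ℝ} (hs : μ s ≠ ⊤)
    (hg : AEStronglyMeasurable g μ) (hB : ∀ x, ‖g x‖ ≤ B) (hsupp : Function.support g ⊆ s) :
    Integrable g μ :=
  (integrableOn_iff_integrable_of_support_subset hsupp).1
    (Measure.integrableOn_of_bounded hs hg (.of_forall hB))

lemma norm_integral_le_of_support_subset {α E : Type*} [MeasurableSpace α] {μ : Measure α}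
    [NormedAddCommGroup E] [NormedSpace ℝ E] {g : α → E} {s : Set α} {B : ℝ} (hs : μ s ≠ ⊤)
    (hB : ∀ x ∈ s, ‖g x‖ ≤ B) (hsupp : Function.support g ⊆ s) :
    ‖∫ x, g x ∂μ‖ ≤ B * μ.real s := by
  rw [← setIntegral_eq_integral_of_forall_compl_eq_zero fun x hx =>
    Function.notMem_support.1 (mt (@hsupp x) hx)]
  exact norm_setIntegral_le_of_norm_le_const hs.lt_top hB

lemma intervalIntegral_tsum_add_intCast {E : Type*} [NormedAddCommGroup E] [NormedSpace ℝ E]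
    [CompleteSpace E] {g : ℝ → E} (hg : Integrable g) :
    ∫ x in (0 : ℝ)..1, ∑' q : ℤ, g (x + q) = ∫ x, g x := by
  have hsum := hg.hasSum_intervalIntegral_comp_add_int
  have hsum_norm := hg.norm.hasSum_intervalIntegral_comp_add_int.summable
  simp_rw [intervalIntegral.integral_of_le zero_le_one] at hsum hsum_norm ⊢
  exact (hasSum_integral_of_summable_integral_norm
    (fun q : ℤ => (hg.comp_add_right (q : ℝ)).integrableOn) hsum_norm).unique hsum

lemma continuous_fourier_coe (m : ℤ) :
    Continuous fun x : ℝ => (fourier m (x : UnitAddCircle) : ℂ) :=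
  (fourier m).continuous.comp (AddCircle.continuous_mk' 1)

lemma fourier_apply_add (m : ℤ) (x y : UnitAddCircle) :
    (fourier m (x + y) : ℂ) = fourier m x * fourier m y := by
  simp only [fourier_apply, smul_add, AddCircle.toCircle_add, Circle.coe_mul]

lemma norm_fourier_apply (m : ℤ) (x : UnitAddCircle) : ‖(fourier m x : ℂ)‖ = 1 :=
  Circle.norm_coe _

lemma norm_fourier_coe_sub_one_le (m : ℤ) (x : ℝ) :
    ‖(fourier m (x : UnitAddCircle) : ℂ) - 1‖ ≤ 2 * Real.pi * |(m : ℝ)| * |x| := by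
  have harg : (2 * Real.pi * I * m * x / (1 : ℝ) : ℂ) = I * (2 * Real.pi * m * x : ℝ) := by
    push_cast
    ring
  rw [fourier_coe_apply, harg]
  refine Real.norm_exp_I_mul_ofReal_sub_one_le.trans_eq ?_
  rw [Real.norm_eq_abs, abs_mul, abs_mul, abs_mul, abs_of_pos Real.pi_pos, abs_two]

end Integrals

section HorocyclePoint

/-- The point with parameter `s` on the horocycle of Euclidean diameter `κ⁻²` based at `v`. -/
noncomputable def horocyclePoint (κ v s : ℝ) : ℂ := v - 1 / (κ * (s + κ * I))

variable {f : ℂ → ℝ} {Y κ v s : ℝ}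

lemma im_horocyclePoint (hκ : κ ≠ 0) (v s : ℝ) :
    (horocyclePoint κ v s).im = 1 / (s ^ 2 + κ ^ 2) := by
  rw [horocyclePoint, sub_im, ofReal_im, div_im, normSq_mul, normSq_ofReal, normSq_add_mul_I]
  simp
  field

lemma re_horocyclePoint (hκ : κ ≠ 0) (v s : ℝ) :
    (horocyclePoint κ v s).re = v - s / (κ * (s ^ 2 + κ ^ 2)) := by
  rw [horocyclePoint, sub_re, ofReal_re, div_re, normSq_mul, normSq_ofReal, normSq_add_mul_I]
  simp
  field

lemma measurable_horocyclePoint (κ v : ℝ) : Measurable (horocyclePoint κ v) := by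
  unfold horocyclePoint
  fun_prop

lemma sq_add_sq_lt_two_of_cutoff_ne_zero (h : cutoff f (horocyclePoint κ v s) ≠ 0) :
    s ^ 2 + κ ^ 2 < 2 := by
  have hκ : κ ≠ 0 := by
    rintro rfl
    exact h (cutoff_of_notMem fun hmem => by simpa [horocyclePoint] using hmem.1)
  have him := three_quarters_lt_im (not_imp_comm.1 cutoff_of_notMem h)
  rw [im_horocyclePoint hκ, lt_div_iff₀ (by positivity)] at him
  linarith

lemma support_cutoff_horocyclePoint_subset (f : ℂ → ℝ) (κ v : ℝ) :
    (Function.support fun s => (cutoff f (horocyclePoint κ v s) : ℂ)) ⊆ Set.Icc (-2) 2 := by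
  intro s hs
  have hlt := sq_add_sq_lt_two_of_cutoff_ne_zero (ofReal_ne_zero.1 hs)
  exact abs_le.1 (abs_le_of_sq_le_sq (by nlinarith [sq_nonneg κ]) two_pos.le)

lemma measurable_cutoff_horocyclePoint (hf : IsTestFunction f Y) (κ v : ℝ) :
    Measurable fun s => cutoff f (horocyclePoint κ v s) :=
  (measurable_cutoff hf).comp (measurable_horocyclePoint κ v)

lemma integrable_mul_cutoff_horocyclePoint (hf : IsTestFunction f Y) (κ v : ℝ)
    {w : ℝ → ℂ} (hw : Measurable w) (hw_le : ∀ s, ‖w s‖ ≤ 1) :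
    Integrable fun s => w s * (cutoff f (horocyclePoint κ v s) : ℂ) := by
  obtain ⟨B, -, hB⟩ := hf.exists_abs_le
  have hmeas := hw.mul (measurable_ofReal.comp (measurable_cutoff_horocyclePoint hf κ v))
  refine integrable_of_norm_le_of_support_subset (B := B) (s := Set.Icc (-2) 2) (by simp)
    hmeas.aestronglyMeasurable (fun s => ?_)
    ((Function.support_mul_subset_right _ _).trans (support_cutoff_horocyclePoint_subset f κ v))
  rw [norm_mul, norm_real, Real.norm_eq_abs, ← one_mul B]
  exact mul_le_mul (hw_le s) (abs_cutoff_le hB _) (abs_nonneg _) zero_le_one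

end HorocyclePoint

section HorocycleCoeff

variable {f : ℂ → ℝ} {Y : ℝ}

/-- The `(-m)`-th Fourier coefficient of `f` along the closed horocycle at height `y`. -/
noncomputable def horocycleCoeff (f : ℂ → ℝ) (m : ℤ) (y : ℝ) : ℂ :=
  ∫ x in (0 : ℝ)..1, fourier m (x : UnitAddCircle) * (f (x + y * I) : ℂ)

/-- The contribution of the coset with bottom row `(c, u)` to the integrand of
`horocycleCoeff f m y`, unfolded to the whole real line. -/
noncomputable def cosetTerm (f : ℂ → ℝ) (m : ℤ) (y : ℝ) (c : ℕ) [NeZero c] (u : (ZMod c)ˣ)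
    (x : ℝ) : ℂ :=
  fourier m (x : UnitAddCircle) * (cutoff f (cosetMap c u (x + y * I)) : ℂ)

variable {c : ℕ} [NeZero c] (u : (ZMod c)ˣ) (m : ℤ) {δ : ℝ}

lemma cosetMap_eq_horocyclePoint (δ s : ℝ) :
    cosetMap c u ((δ / c * s - (u : ZMod c).val / c : ℝ) + (δ ^ 2 : ℝ) * I) =
      horocyclePoint (c * δ) ((↑u⁻¹ : ZMod c).val / c) s := by
  have hc : (c : ℂ) ≠ 0 := NeZero.ne _
  rw [cosetMap, horocyclePoint]
  push_cast
  congr 2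
  field

lemma cosetTerm_eq_mul_cutoff_horocyclePoint (f : ℂ → ℝ) (δ s : ℝ) :
    cosetTerm f m (δ ^ 2) c u (δ / c * s - (u : ZMod c).val / c) =
      ZMod.stdAddChar (((-m : ℤ) : ZMod c) * (u : ZMod c)) *
        (fourier m ((δ / c * s : ℝ) : UnitAddCircle) *
          (cutoff f (horocyclePoint (c * δ) ((↑u⁻¹ : ZMod c).val / c) s) : ℂ)) := by
  have hcoe : ((δ / c * s - (u : ZMod c).val / c : ℝ) : UnitAddCircle) =
      (δ / c * s : ℝ) + ZMod.toAddCircle (-(u : ZMod c)) := by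
    rw [AddCircle.coe_sub, sub_eq_add_neg, map_neg, ZMod.toAddCircle_apply]
  rw [cosetTerm, cosetMap_eq_horocyclePoint u, hcoe, fourier_apply_add, fourier_toAddCircle,
    Int.cast_neg, mul_neg, neg_mul]
  ring

lemma integrable_cosetTerm (hf : IsTestFunction f Y) (hδ : 0 < δ) :
    Integrable (cosetTerm f m (δ ^ 2) c u) := by
  have hc : (0 : ℝ) < c := by exact_mod_cast NeZero.pos c
  have hscale : δ / c ≠ 0 := by positivity
  have hinteg := (integrable_mul_cutoff_horocyclePoint hf (c * δ)
    ((↑u⁻¹ : ZMod c).val / c) ((continuous_fourier_coe m).measurable.comp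
      (measurable_const_mul (δ / c))) fun s => (norm_fourier_apply m _).le).const_mul
        (ZMod.stdAddChar (((-m : ℤ) : ZMod c) * (u : ZMod c)))
  simp only [Function.comp_apply, ← cosetTerm_eq_mul_cutoff_horocyclePoint u m f] at hinteg
  have hinteg_shift := (integrable_comp_mul_left_iff
    (fun t => cosetTerm f m (δ ^ 2) c u (t - (u : ZMod c).val / c)) hscale).1 hinteg
  simpa using hinteg_shift.comp_add_right ((u : ZMod c).val / c : ℝ)

lemma integral_cosetTerm (f : ℂ → ℝ) (hδ : 0 < δ) :
    ∫ x, cosetTerm f m (δ ^ 2) c u x = (δ / c : ℝ) *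
      (ZMod.stdAddChar (((-m : ℤ) : ZMod c) * (u : ZMod c)) *
        ∫ s : ℝ, fourier m ((δ / c * s : ℝ) : UnitAddCircle) *
          (cutoff f (horocyclePoint (c * δ) ((↑u⁻¹ : ZMod c).val / c) s) : ℂ)) := by
  have hc : (0 : ℝ) < c := by exact_mod_cast NeZero.pos c
  have hscale : 0 < δ / c := by positivity
  have hsubst := Measure.integral_comp_mul_left
    (fun t => cosetTerm f m (δ ^ 2) c u (t - (u : ZMod c).val / c)) (δ / c)
  rw [integral_sub_right_eq_self, abs_of_pos (inv_pos.2 hscale)] at hsubst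
  rw [← integral_const_mul, ← real_smul, ← smul_inv_smul₀ hscale.ne' (∫ x, _), ← hsubst]
  simp only [cosetTerm_eq_mul_cutoff_horocyclePoint u m f]

lemma fourier_mul_eq_tsum_cosetTerm (hf : IsTestFunction f Y) (m : ℤ) {x y : ℝ} (hy : 0 < y)
    (hy_lt : y < 3 / 4) (hx : ∀ γ : Matrix.SpecialLinearGroup (Fin 2) ℤ,
      normSq (γ 0 0 * (x + y * I) + γ 0 1) ≠ normSq (γ 1 0 * (x + y * I) + γ 1 1))
    {N : ℕ} (hN : 2 ≤ (N : ℝ) ^ 2 * y) :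
    (fourier m (x : UnitAddCircle) * f (x + y * I) : ℂ) =
      ∑' q : ℤ, ∑ c ∈ Finset.range N, ∑ u, cosetTerm f m y (c + 1) u (x + q) := by
  have hunfold := eq_tsum_cutoff hf (z := ⟨x + y * I, by simpa using hy⟩)
    (by simpa [UpperHalfPlane.im] using hy_lt) hx (N := N) (by simpa [UpperHalfPlane.im] using hN)
  have hcoe (q : ℤ) : ((x + q : ℝ) : UnitAddCircle) = x := by simp
  dsimp only at hunfold
  rw [hunfold, ofReal_tsum, ← tsum_mul_left]
  simp only [ofReal_sum, Finset.mul_sum, cosetTerm, hcoe, ofReal_add, ofReal_intCast,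
    add_right_comm (x : ℂ)]

lemma horocycleCoeff_eq_sum_integral_cosetTerm (hf : IsTestFunction f Y) (m : ℤ) (hδ : 0 < δ)
    (hδ_lt : δ ^ 2 < 3 / 4) {N : ℕ} (hN : 2 ≤ (N : ℝ) ^ 2 * δ ^ 2) :
    horocycleCoeff f m (δ ^ 2) = ∑ c ∈ Finset.range N, ∑ u : (ZMod (c + 1))ˣ,
      ∫ x, cosetTerm f m (δ ^ 2) (c + 1) u x := by
  have hinteg (c : ℕ) : Integrable fun x => ∑ u, cosetTerm f m (δ ^ 2) (c + 1) u x :=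
    integrable_finsetSum _ fun u _ => integrable_cosetTerm u m hf hδ
  calc horocycleCoeff f m (δ ^ 2)
      = ∫ x in (0 : ℝ)..1, ∑' q : ℤ, ∑ c ∈ Finset.range N, ∑ u,
          cosetTerm f m (δ ^ 2) (c + 1) u (x + q) := by
        refine intervalIntegral.integral_congr_ae ?_
        filter_upwards [ae_normSq_ne_normSq (δ ^ 2)] with x hx _
        exact fourier_mul_eq_tsum_cosetTerm hf m (by positivity) hδ_lt hx hN
    _ = ∫ x, ∑ c ∈ Finset.range N, ∑ u, cosetTerm f m (δ ^ 2) (c + 1) u x :=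
        intervalIntegral_tsum_add_intCast (integrable_finsetSum _ fun c _ => hinteg c)
    _ = _ := by
        rw [integral_finsetSum _ fun c _ => hinteg c]
        exact Finset.sum_congr rfl fun c _ =>
          integral_finsetSum _ fun u _ => integrable_cosetTerm u m hf hδ

end HorocycleCoeff

/-! ### Fourier coefficients along closed horocycles -/

section HorocycleIntegral

variable {f : ℂ → ℝ} {Y B κ : ℝ}

/-- The integral of `cutoff f` over the horocycle of Euclidean diameter `κ⁻²` based at `v`. -/
noncomputable def horocycleIntegral (f : ℂ → ℝ) (κ v : ℝ) : ℝ :=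
  ∫ s, cutoff f (horocyclePoint κ v s)

lemma ae_sqDistInt_horocyclePoint_ne_one (hκ : κ ≠ 0) (v : ℝ) :
    ∀ᵐ s : ℝ, sqDistInt (horocyclePoint κ v s) ≠ 1 := by
  have hquadratic : ∀ᵐ s : ℝ, ∀ n : ℤ, ((v + n) ^ 2 - 1) * κ ^ 2 * s ^ 2 +
      (-(2 * (v + n) * κ)) * s + (1 + ((v + n) ^ 2 - 1) * κ ^ 4) ≠ 0 := by
    refine ae_all_iff.2 fun n => ae_quadratic_ne_zero ?_
    rintro ⟨hsq, -, hconst⟩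
    have hzero : (v + n) ^ 2 - 1 = 0 := by simpa [hκ] using hsq
    rw [hzero] at hconst
    norm_num at hconst
  filter_upwards [hquadratic] with s hs hone
  obtain ⟨n, hn⟩ := exists_sqDistInt_eq_normSq_add (horocyclePoint κ v s)
  have hden : s ^ 2 + κ ^ 2 ≠ 0 := by positivity
  rw [hn, normSq_apply, add_re, add_im, intCast_re, intCast_im, add_zero, re_horocyclePoint hκ,
    im_horocyclePoint hκ] at hone
  field_simp at hone
  refine hs n (mul_left_cancel₀ hden ?_)
  linear_combination hone

lemma norm_cutoff_horocyclePoint_le_indicator (hB : ∀ z : ℂ, 0 < z.im → |f z| ≤ B) (κ v s : ℝ) :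
    ‖cutoff f (horocyclePoint κ v s)‖ ≤ (Set.Icc (-2 : ℝ) 2).indicator (fun _ => B) s := by
  by_cases hs : s ∈ Set.Icc (-2 : ℝ) 2
  · rw [Set.indicator_of_mem hs]
    exact abs_cutoff_le hB _
  · rw [Set.indicator_of_notMem hs, norm_le_zero_iff]
    by_contra hne
    exact hs (support_cutoff_horocyclePoint_subset f κ v (ofReal_ne_zero.2 hne))

lemma continuousAt_horocycleIntegral (hf : IsTestFunction f Y) (hκ : κ ≠ 0) (v : ℝ) :
    ContinuousAt (fun p : ℝ × ℝ => horocycleIntegral f p.1 p.2) (κ, v) := by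
  obtain ⟨B, -, hB⟩ := hf.exists_abs_le
  refine continuousAt_of_dominated
    (.of_forall fun p => (measurable_cutoff_horocyclePoint hf p.1 p.2).aestronglyMeasurable)
    (.of_forall fun p => .of_forall fun s => norm_cutoff_horocyclePoint_le_indicator hB p.1 p.2 s)
    ((integrable_indicator_iff measurableSet_Icc).2 (integrableOn_const (by simp))) ?_
  filter_upwards [ae_sqDistInt_horocyclePoint_ne_one hκ v] with s hs
  have him : 0 < (horocyclePoint κ v s).im := by
    rw [im_horocyclePoint hκ]
    positivity
  have hden : (κ * (s + κ * I) : ℂ) ≠ 0 := by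
    refine mul_ne_zero (ofReal_ne_zero.2 hκ) fun hzero => hκ ?_
    simpa using congrArg Complex.im hzero
  have hpoint : ContinuousAt (fun p : ℝ × ℝ => horocyclePoint p.1 p.2 s) (κ, v) := by
    unfold horocyclePoint
    exact ContinuousAt.sub (by fun_prop) (ContinuousAt.div₀ (by fun_prop) (by fun_prop) hden)
  exact ContinuousAt.comp (g := cutoff f) (continuousAt_cutoff hf him hs) hpoint

lemma horocycleIntegral_eq_zero (f : ℂ → ℝ) (hκ : 2 ≤ κ ^ 2) (v : ℝ) :
    horocycleIntegral f κ v = 0 := by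
  refine integral_eq_zero_of_ae (.of_forall fun s => ?_)
  by_contra hne
  linarith [sq_add_sq_lt_two_of_cutoff_ne_zero hne, sq_nonneg s]

lemma continuous_horocycleIntegral (hf : IsTestFunction f Y) (κ : ℝ) :
    Continuous (horocycleIntegral f κ) := by
  rcases eq_or_ne κ 0 with rfl | hκ
  · have hzero (v s : ℝ) : cutoff f (horocyclePoint 0 v s) = 0 :=
      cutoff_of_notMem fun hmem => by simpa [horocyclePoint] using hmem.1
    have hintegral : horocycleIntegral f 0 = fun _ => 0 :=
      funext fun v => by simp only [horocycleIntegral, hzero, integral_zero]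
    exact hintegral ▸ continuous_const
  · exact continuous_iff_continuousAt.2 fun v =>
      (continuousAt_horocycleIntegral hf hκ v).comp (f := fun v => (κ, v)) (by fun_prop)

lemma periodic_horocycleIntegral (hf : IsTestFunction f Y) (κ : ℝ) :
    Function.Periodic (horocycleIntegral f κ) 1 := by
  intro v
  refine integral_congr_ae (.of_forall fun s => ?_)
  dsimp only
  rw [← cutoff_add_intCast hf (horocyclePoint κ v s) 1, horocyclePoint, horocyclePoint]
  congr 1
  push_cast
  ring

lemma abs_horocycleIntegral_le (hB : ∀ z : ℂ, 0 < z.im → |f z| ≤ B) (κ v : ℝ) :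
    |horocycleIntegral f κ v| ≤ 4 * B := by
  calc |horocycleIntegral f κ v| ≤ ∫ s, (Set.Icc (-2 : ℝ) 2).indicator (fun _ => B) s :=
        norm_integral_le_of_norm_le
          ((integrable_indicator_iff measurableSet_Icc).2 (integrableOn_const (by simp)))
          (.of_forall (norm_cutoff_horocyclePoint_le_indicator hB κ v))
    _ = 4 * B := by
        rw [integral_indicator measurableSet_Icc, setIntegral_const,
          Real.volume_real_Icc_of_le (by norm_num), smul_eq_mul]
        norm_num

/-- `horocycleIntegral f κ` as a continuous function on the circle. -/
noncomputable def horocycleIntegralMap (hf : IsTestFunction f Y) (κ : ℝ) : C(UnitAddCircle, ℂ) where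
  toFun t := ((periodic_horocycleIntegral hf κ).lift t : ℂ)
  continuous_toFun :=
    continuous_ofReal.comp ((continuous_horocycleIntegral hf κ).quotient_lift _)

lemma horocycleIntegralMap_coe (hf : IsTestFunction f Y) (κ x : ℝ) :
    horocycleIntegralMap hf κ (x : UnitAddCircle) = horocycleIntegral f κ x := rfl

lemma norm_horocycleIntegralMap_le (hf : IsTestFunction f Y)
    (hB : ∀ z : ℂ, 0 < z.im → |f z| ≤ B) (κ : ℝ) : ‖horocycleIntegralMap hf κ‖ ≤ 4 * B := by
  rw [ContinuousMap.norm_le_of_nonempty]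
  intro t
  obtain ⟨x, rfl⟩ := QuotientAddGroup.mk_surjective t
  rw [horocycleIntegralMap_coe, norm_real]
  exact abs_horocycleIntegral_le hB κ x

lemma continuousOn_horocycleIntegralMap (hf : IsTestFunction f Y) :
    ContinuousOn (horocycleIntegralMap hf) {0}ᶜ := by
  rw [continuousOn_iff_continuous_domRestrict]
  refine ContinuousMap.continuous_of_continuous_uncurry _ ?_
  have hquotient : IsOpenQuotientMap
      (Prod.map id ((↑) : ℝ → UnitAddCircle) : ({0}ᶜ : Set ℝ) × ℝ → _) :=
    IsOpenQuotientMap.id.prodMap QuotientAddGroup.isOpenQuotientMap_mk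
  rw [hquotient.isQuotientMap.continuous_iff]
  refine continuous_ofReal.comp (continuous_iff_continuousAt.2 fun p => ?_)
  exact (continuousAt_horocycleIntegral hf p.1.2 p.2).comp
    (f := fun p : ({0}ᶜ : Set ℝ) × ℝ => ((p.1 : ℝ), p.2)) (by fun_prop)

end HorocycleIntegral

section CosetSum

variable {f : ℂ → ℝ} {Y B : ℝ}

lemma norm_integral_fourier_mul_sub_horocycleIntegral_le (hf : IsTestFunction f Y)
    (hB : ∀ z : ℂ, 0 < z.im → |f z| ≤ B) (m : ℤ) (κ v r : ℝ) :
    ‖(∫ s : ℝ, fourier m ((r * s : ℝ) : UnitAddCircle) *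
      (cutoff f (horocyclePoint κ v s) : ℂ)) - horocycleIntegral f κ v‖ ≤
      16 * Real.pi * |(m : ℝ)| * B * |r| := by
  have hinteg := integrable_mul_cutoff_horocyclePoint hf κ v
    ((continuous_fourier_coe m).measurable.comp (measurable_const_mul r))
    fun s => (norm_fourier_apply m _).le
  have hinteg_one := integrable_mul_cutoff_horocyclePoint hf κ v (w := fun _ => 1)
    measurable_const fun s => norm_one.le
  simp only [one_mul, Function.comp_apply] at hinteg hinteg_one
  rw [horocycleIntegral, ← integral_complex_ofReal, ← integral_sub hinteg hinteg_one]
  simp_rw [← sub_one_mul]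
  refine (norm_integral_le_of_support_subset (s := Set.Icc (-2) 2)
    (B := 2 * Real.pi * |(m : ℝ)| * (|r| * 2) * B) (by simp) (fun s hs => ?_)
    ((Function.support_mul_subset_right _ _).trans
      (support_cutoff_horocyclePoint_subset f κ v))).trans_eq ?_
  · rw [norm_mul, norm_real]
    have hs_abs : |r * s| ≤ |r| * 2 := by
      rw [abs_mul]
      gcongr
      exact abs_le.2 hs
    gcongr
    · exact (norm_fourier_coe_sub_one_le m _).trans (by gcongr)
    · exact abs_cutoff_le hB _
  · rw [Real.volume_real_Icc_of_le (by norm_num)]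
    ring

lemma norm_sum_integral_cosetTerm_sub_le (hf : IsTestFunction f Y)
    (hB : ∀ z : ℂ, 0 < z.im → |f z| ≤ B) (m : ℤ) {δ : ℝ} (hδ : 0 < δ) (c : ℕ) [NeZero c] :
    ‖(∑ u : (ZMod c)ˣ, ∫ x, cosetTerm f m (δ ^ 2) c u x) -
      (δ / c : ℝ) * unitSum c (-m) (horocycleIntegralMap hf (c * δ))‖ ≤
      16 * Real.pi * |(m : ℝ)| * B * δ ^ 2 := by
  have hc : (1 : ℝ) ≤ c := by exact_mod_cast NeZero.one_le
  have hB_nonneg : 0 ≤ B := (abs_nonneg _).trans (hB I (by simp))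
  have hterm (u : (ZMod c)ˣ) : ‖(∫ x, cosetTerm f m (δ ^ 2) c u x) - (δ / c : ℝ) *
      (ZMod.stdAddChar (((-m : ℤ) : ZMod c) * (u : ZMod c)) *
        horocycleIntegralMap hf (c * δ) (ZMod.toAddCircle (↑u⁻¹ : ZMod c)))‖ ≤
      δ / c * (16 * Real.pi * |(m : ℝ)| * B * (δ / c)) := by
    rw [integral_cosetTerm u m f hδ, ← mul_sub, ← mul_sub, norm_mul, norm_mul, AddChar.norm_apply,
      one_mul, norm_real, Real.norm_of_nonneg (by positivity), ZMod.toAddCircle_apply,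
      horocycleIntegralMap_coe]
    gcongr
    exact (norm_integral_fourier_mul_sub_horocycleIntegral_le hf hB m _ _ _).trans_eq
      (by rw [abs_of_nonneg (show 0 ≤ δ / c by positivity)])
  rw [unitSum_apply, Finset.mul_sum, ← Finset.sum_sub_distrib]
  calc _ ≤ ∑ _u : (ZMod c)ˣ, δ / c * (16 * Real.pi * |(m : ℝ)| * B * (δ / c)) :=
        norm_sum_le_of_le _ fun u _ => hterm u
    _ = c.totient * (δ / c * (16 * Real.pi * |(m : ℝ)| * B * (δ / c))) := by
        rw [Finset.sum_const, Finset.card_univ, ZMod.card_units_eq_totient, nsmul_eq_mul]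
    _ ≤ c * (δ / c * (16 * Real.pi * |(m : ℝ)| * B * (δ / c))) := by
        gcongr
        exact Nat.totient_le c
    _ = 16 * Real.pi * |(m : ℝ)| * B * δ ^ 2 / c := by field
    _ ≤ 16 * Real.pi * |(m : ℝ)| * B * δ ^ 2 := div_le_self (by positivity) hc

lemma natCeil_two_div_mul_le {δ : ℝ} (hδ : δ ∈ Set.Ioo 0 1) : ⌈2 / δ⌉₊ * δ ≤ 3 := by
  obtain ⟨hδ_pos, hδ_lt⟩ := hδ
  calc ⌈2 / δ⌉₊ * δ ≤ (2 / δ + 1) * δ := by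
        gcongr
        exact (Nat.ceil_lt_add_one (by positivity)).le
    _ = 2 + δ := by field
    _ ≤ 3 := by linarith

lemma mul_sum_range_natCeil_le {a : ℕ → ℝ} {M b η δ : ℝ} (hδ : δ ∈ Set.Ioo 0 1) (hη : 0 ≤ η)
    (hM_nonneg : 0 ≤ M) (hb_nonneg : 0 ≤ b) (hM : ∀ k, a k ≤ M)
    (hb : ∀ k : ℕ, (k + 1) * δ ∈ Set.Icc η 3 → a k ≤ b) :
    δ * ∑ k ∈ Finset.range ⌈2 / δ⌉₊, a k ≤ η * M + 3 * b := by
  have hδ_pos := hδ.1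
  have hceil := natCeil_two_div_mul_le hδ
  have hterm : ∀ k ∈ Finset.range ⌈2 / δ⌉₊,
      a k ≤ (if k ∈ Finset.range ⌊η / δ⌋₊ then M else 0) + b := by
    intro k hk
    split_ifs with hk_small
    · linarith [hM k]
    · rw [zero_add]
      refine hb k ⟨?_, le_trans ?_ hceil⟩
      · rw [Finset.mem_range, not_lt] at hk_small
        rw [← div_le_iff₀ hδ_pos]
        exact (Nat.lt_floor_add_one _).le.trans (by gcongr)
      · gcongr
        exact_mod_cast Finset.mem_range.1 hk
  have hsum : ∑ k ∈ Finset.range ⌈2 / δ⌉₊, (if k ∈ Finset.range ⌊η / δ⌋₊ then M else 0) ≤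
      η / δ * M := by
    rw [← Finset.sum_filter, Finset.sum_const, nsmul_eq_mul]
    gcongr
    refine le_trans ?_ (Nat.floor_le (by positivity : 0 ≤ η / δ))
    have hcard : Finset.filter (· ∈ Finset.range ⌊η / δ⌋₊) (Finset.range ⌈2 / δ⌉₊) ⊆
        Finset.range ⌊η / δ⌋₊ := fun k hk => (Finset.mem_filter.1 hk).2
    exact_mod_cast (Finset.card_le_card hcard).trans_eq (Finset.card_range _)
  calc δ * ∑ k ∈ Finset.range ⌈2 / δ⌉₊, a k ≤ δ * (η / δ * M + ⌈2 / δ⌉₊ * b) := by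
        gcongr
        refine (Finset.sum_le_sum hterm).trans ?_
        rw [Finset.sum_add_distrib, Finset.sum_const, Finset.card_range, nsmul_eq_mul]
        gcongr
    _ = η * M + ⌈2 / δ⌉₊ * δ * b := by field
    _ ≤ η * M + 3 * b := by gcongr

lemma tendsto_mul_sum_norm_unitDiscrepancy (hf : IsTestFunction f Y) (m : ℤ) :
    Tendsto (fun δ : ℝ => δ * ∑ k ∈ Finset.range ⌈2 / δ⌉₊,
      ‖unitDiscrepancy (k + 1) m (horocycleIntegralMap hf ((k + 1 : ℕ) * δ))‖) (𝓝[>] 0) (𝓝 0) := by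
  obtain ⟨B, hB_pos, hB⟩ := hf.exists_abs_le
  refine tendsto_order.2 ⟨fun b hb => ?_, fun ε hε => ?_⟩
  · filter_upwards [self_mem_nhdsWithin] with δ (hδ : 0 < δ)
    exact hb.trans_le (by positivity)
  set η : ℝ := ε / (32 * B) with hη
  have hη_pos : 0 < η := by positivity
  have hcompact : IsCompact (horocycleIntegralMap hf '' Set.Icc η 3) :=
    isCompact_Icc.image_of_continuousOn ((continuousOn_horocycleIntegralMap hf).mono
      fun κ hκ => (hη_pos.trans_le hκ.1).ne')
  obtain ⟨N, hN⟩ := eventually_atTop.1 (Metric.tendstoUniformlyOn_iff.1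
    (tendstoUniformlyOn_unitDiscrepancy m hcompact) (ε / 6) (by positivity))
  filter_upwards [Ioo_mem_nhdsGT one_pos, Ioo_mem_nhdsGT (show 0 < η / (N + 1) by positivity)]
    with δ hδ hδN
  refine (mul_sum_range_natCeil_le hδ hη_pos.le (M := 2 * (4 * B)) (b := ε / 6) (by positivity)
    (by positivity) (fun k => ?_) fun k hk => ?_).trans_lt ?_
  · exact (unitDiscrepancy (k + 1) m).le_of_opNorm_le_of_le (norm_unitDiscrepancy_le _ _)
      (norm_horocycleIntegralMap_le hf hB _)
  · have hNk : N ≤ k := by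
      have hlt := (lt_div_iff₀' (by positivity)).1 hδN.2 |>.trans_le hk.1
      have hlt_cast := lt_of_mul_lt_mul_right hlt hδ.1.le
      exact Nat.lt_succ_iff.1 (by exact_mod_cast (lt_add_one (N : ℝ)).trans hlt_cast)
    have hdist := hN k hNk _ (Set.mem_image_of_mem _ hk)
    rw [Pi.zero_apply, dist_zero_left] at hdist
    exact_mod_cast hdist.le
  · rw [hη]
    field_simp
    norm_num

lemma norm_sum_integral_cosetTerm_sub_circleMean_le (hf : IsTestFunction f Y)
    (hB : ∀ z : ℂ, 0 < z.im → |f z| ≤ B) (m : ℤ) {δ : ℝ} (hδ : 0 < δ) (c : ℕ) [NeZero c] :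
    ‖(∑ u : (ZMod c)ˣ, ∫ x, cosetTerm f m (δ ^ 2) c u x) -
      (if m = 0 then (δ / c : ℝ) * (c.totient * circleMean (horocycleIntegralMap hf (c * δ)))
        else 0)‖ ≤ 16 * Real.pi * |(m : ℝ)| * B * δ ^ 2 +
      δ * ‖unitDiscrepancy c (-m) (horocycleIntegralMap hf (c * δ))‖ := by
  have hsplit : (∑ u : (ZMod c)ˣ, ∫ x, cosetTerm f m (δ ^ 2) c u x) -
      (if m = 0 then (δ / c : ℝ) * (c.totient * circleMean (horocycleIntegralMap hf (c * δ)))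
        else 0) =
      ((∑ u : (ZMod c)ˣ, ∫ x, cosetTerm f m (δ ^ 2) c u x) -
        (δ / c : ℝ) * unitSum c (-m) (horocycleIntegralMap hf (c * δ))) +
      δ * unitDiscrepancy c (-m) (horocycleIntegralMap hf (c * δ)) := by
    rw [unitDiscrepancy]
    split_ifs <;> simp_all <;> field
  rw [hsplit]
  refine (norm_add_le _ _).trans (add_le_add (norm_sum_integral_cosetTerm_sub_le hf hB m hδ c) ?_)
  rw [norm_mul, norm_real, Real.norm_of_nonneg hδ.le]

lemma tendsto_horocycleCoeff_sub_sum (hf : IsTestFunction f Y) (m : ℤ) :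
    Tendsto (fun δ : ℝ => horocycleCoeff f m (δ ^ 2) - ∑ k ∈ Finset.range ⌈2 / δ⌉₊,
      if m = 0 then (δ / (k + 1 : ℕ) : ℝ) *
        ((k + 1).totient * circleMean (horocycleIntegralMap hf ((k + 1 : ℕ) * δ))) else 0)
      (𝓝[>] 0) (𝓝 0) := by
  obtain ⟨B, hB_pos, hB⟩ := hf.exists_abs_le
  set C : ℝ := 16 * Real.pi * |(m : ℝ)| * B
  have hbound : Tendsto (fun δ : ℝ => 3 * C * δ + δ * ∑ k ∈ Finset.range ⌈2 / δ⌉₊,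
      ‖unitDiscrepancy (k + 1) (-m) (horocycleIntegralMap hf ((k + 1 : ℕ) * δ))‖)
      (𝓝[>] 0) (𝓝 0) := by
    have hlinear : Tendsto (fun δ : ℝ => 3 * C * δ) (𝓝[>] 0) (𝓝 0) :=
      tendsto_nhdsWithin_of_tendsto_nhds
        ((continuous_const_mul (3 * C)).tendsto' 0 0 (mul_zero _))
    simpa using hlinear.add (tendsto_mul_sum_norm_unitDiscrepancy hf (-m))
  refine squeeze_zero_norm' ?_ hbound
  filter_upwards [Ioo_mem_nhdsGT (show (0 : ℝ) < 1 / 2 by norm_num)] with δ hδ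
  have hδ_pos := hδ.1
  have hN : 2 ≤ (⌈2 / δ⌉₊ : ℝ) ^ 2 * δ ^ 2 := by
    have hceil := (div_le_iff₀ hδ_pos).1 (Nat.le_ceil (2 / δ))
    nlinarith
  rw [horocycleCoeff_eq_sum_integral_cosetTerm hf m hδ_pos (by nlinarith [hδ.2]) hN,
    ← Finset.sum_sub_distrib]
  refine (norm_sum_le_of_le _ fun k _ =>
    norm_sum_integral_cosetTerm_sub_circleMean_le hf hB m hδ_pos (k + 1)).trans ?_
  rw [Finset.sum_add_distrib, Finset.sum_const, Finset.card_range, nsmul_eq_mul, ← Finset.mul_sum]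
  have hceil := natCeil_two_div_mul_le ⟨hδ_pos, hδ.2.trans (by norm_num)⟩
  have hC_nonneg : 0 ≤ C * δ := by positivity
  linarith [mul_le_mul_of_nonneg_right hceil hC_nonneg]

lemma tendsto_horocycleCoeff_sq_of_ne_zero (hf : IsTestFunction f Y) {m : ℤ} (hm : m ≠ 0) :
    Tendsto (fun δ : ℝ => horocycleCoeff f m (δ ^ 2)) (𝓝[>] 0) (𝓝 0) := by
  simpa [hm] using tendsto_horocycleCoeff_sub_sum hf m

end CosetSum

/-! ### Riemann sums weighted by the totient function -/

section NatCeil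

lemma natCeil_eq_of_mem_Ioc {n : ℕ} {x : ℝ} (hx : x ∈ Set.Ioc (n : ℝ) (n + 1 : ℕ)) :
    ⌈x⌉₊ = n + 1 :=
  (Nat.ceil_eq_iff n.succ_ne_zero).2 (by simpa using hx)

lemma intervalIntegral_natCeil (a : ℕ → ℝ) (N : ℕ) :
    ∫ x in (0 : ℝ)..N, a ⌈x⌉₊ = ∑ n ∈ Finset.Ioc 0 N, a n := by
  have heqOn (n : ℕ) : Set.EqOn (fun _ => a (n + 1)) (fun x : ℝ => a ⌈x⌉₊)
      (Set.uIoc (n : ℝ) (n + 1 : ℕ)) := fun x hx => by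
    rw [Set.uIoc_of_le (by simp)] at hx
    simp only [natCeil_eq_of_mem_Ioc hx]
  have hstep (n : ℕ) : ∫ x in (n : ℝ)..(n + 1 : ℕ), a ⌈x⌉₊ = a (n + 1) := by
    rw [← intervalIntegral.integral_congr_ae (.of_forall fun x hx => heqOn n hx),
      intervalIntegral.integral_const]
    simp
  have hsum := intervalIntegral.sum_integral_adjacent_intervals (n := N)
    (μ := volume) (a := fun n : ℕ => (n : ℝ)) fun n _ => intervalIntegrable_const.congr (heqOn n)
  simp_rw [hstep, Nat.cast_zero] at hsum
  rw [← hsum, Finset.range_eq_Ico, Finset.sum_Ico_add', zero_add]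
  rfl

variable {K : ℝ → ℝ} {R : ℝ}

lemma mul_sum_eq_intervalIntegral_natCeil (hK : ∀ x, R ≤ x → K x = 0) (hR : 0 ≤ R) {t : ℝ}
    (ht : 0 < t) {N : ℕ} (hN : R ≤ N * t) :
    t * ∑ n ∈ Finset.Ioc 0 N, K (n * t) = ∫ x in (0 : ℝ)..R, K (⌈x / t⌉₊ * t) := by
  have hscale := intervalIntegral.integral_comp_div (a := 0) (b := N * t)
    (fun x => K (⌈x⌉₊ * t)) ht.ne'
  rw [zero_div, mul_div_cancel_right₀ _ ht.ne', intervalIntegral_natCeil fun n => K (n * t),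
    smul_eq_mul] at hscale
  rw [← hscale, intervalIntegral.integral_of_le (hR.trans hN), intervalIntegral.integral_of_le hR]
  refine setIntegral_eq_of_subset_of_forall_sdiff_eq_zero measurableSet_Ioc
    (Set.Ioc_subset_Ioc_right hN) fun x hx => hK _ ?_
  have hRx : R < x := not_le.1 fun hle => hx.2 ⟨hx.1.1, hle⟩
  exact hRx.le.trans ((div_le_iff₀ ht).1 (Nat.le_ceil (x / t)))

lemma natCeil_div_mul_pos {x t : ℝ} (hx : 0 < x) (ht : 0 < t) : 0 < ⌈x / t⌉₊ * t :=
  mul_pos (Nat.cast_pos.2 (Nat.ceil_pos.2 (div_pos hx ht))) ht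

lemma tendsto_natCeil_div_mul {x : ℝ} (hx : 0 ≤ x) :
    Tendsto (fun t : ℝ => ⌈x / t⌉₊ * t) (𝓝[>] 0) (𝓝 x) := by
  have hupper : Tendsto (fun t : ℝ => x + t) (𝓝[>] 0) (𝓝 x) :=
    tendsto_nhdsWithin_of_tendsto_nhds ((continuous_const_add x).tendsto' 0 x (add_zero x))
  refine tendsto_of_tendsto_of_tendsto_of_le_of_le' tendsto_const_nhds hupper ?_ ?_
  all_goals filter_upwards [self_mem_nhdsWithin] with t (ht : 0 < t)
  · exact (div_le_iff₀ ht).1 (Nat.le_ceil (x / t))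
  · calc ⌈x / t⌉₊ * t ≤ (x / t + 1) * t := by
          gcongr
          exact (Nat.ceil_lt_add_one (by positivity)).le
      _ = x + t := by field

variable {B : ℝ}

lemma tendsto_intervalIntegral_natCeil (hR : 0 ≤ R) (hB : ∀ x, 0 < x → |K x| ≤ B)
    (hcont : ContinuousOn K (Set.Ioi 0)) :
    Tendsto (fun t : ℝ => ∫ x in (0 : ℝ)..R, K (⌈x / t⌉₊ * t)) (𝓝[>] 0)
      (𝓝 (∫ x in (0 : ℝ)..R, K x)) := by
  refine intervalIntegral.tendsto_integral_filter_of_dominated_convergence (fun _ => B)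
    (.of_forall fun t => ?_) ?_ intervalIntegrable_const (.of_forall fun x hx => ?_)
  · have hmeas : Measurable fun n : ℕ => K (n * t) := measurable_from_top
    exact (hmeas.comp (Nat.measurable_ceil.comp (measurable_id.div_const t))).aestronglyMeasurable
  · filter_upwards [self_mem_nhdsWithin] with t ht
    refine .of_forall fun x hx => hB _ (natCeil_div_mul_pos ?_ ht)
    exact (Set.uIoc_of_le hR ▸ hx).1
  · rw [Set.uIoc_of_le hR] at hx
    exact (hcont.continuousAt (Ioi_mem_nhds hx.1)).tendsto.comp (tendsto_natCeil_div_mul hx.1.le)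

end NatCeil

section TotientSum

open scoped ArithmeticFunction.Moebius

lemma totient_div_eq_sum_moebius_div (n : ℕ) :
    (φ n : ℝ) / n = ∑ x ∈ n.divisorsAntidiagonal, (μ x.1 : ℝ) / x.1 := by
  rcases n.eq_zero_or_pos with rfl | hn
  · simp
  have hinversion := (ArithmeticFunction.sum_eq_iff_sum_mul_moebius_eq (R := ℝ)
    (f := fun n => (φ n : ℝ)) (g := fun n => (n : ℝ))).1
    (fun n _ => by exact_mod_cast Nat.sum_totient n) n hn
  rw [← hinversion, Finset.sum_div]
  refine Finset.sum_congr rfl fun x hx => ?_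
  obtain ⟨hprod, -⟩ := Nat.mem_divisorsAntidiagonal.1 hx
  have hne : (x.1 : ℝ) * x.2 ≠ 0 := by
    rw [← Nat.cast_mul, hprod]
    positivity
  rw [← hprod, Nat.cast_mul]
  have hne_left := left_ne_zero_of_mul hne
  have hne_right := right_ne_zero_of_mul hne
  field

lemma sum_totient_div_mul {a : ℕ → ℝ} {N : ℕ} (ha : ∀ n, N < n → a n = 0) :
    ∑ n ∈ Finset.Ioc 0 N, (φ n : ℝ) / n * a n =
      ∑ d ∈ Finset.Ioc 0 N, (μ d : ℝ) / d * ∑ e ∈ Finset.Ioc 0 N, a (d * e) := by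
  calc ∑ n ∈ Finset.Ioc 0 N, (φ n : ℝ) / n * a n
      = ∑ n ∈ Finset.Ioc 0 N, ∑ x ∈ Finset.Ioc 0 N ×ˢ Finset.Ioc 0 N,
          if x.1 * x.2 = n then (μ x.1 : ℝ) / x.1 * a (x.1 * x.2) else 0 := by
        refine Finset.sum_congr rfl fun n hn => ?_
        rw [Finset.mem_Ioc] at hn
        rw [totient_div_eq_sum_moebius_div, Finset.sum_mul, ← Finset.sum_filter,
          Nat.divisorsAntidiagonal_eq_prod_filter_of_le hn.1.ne' hn.2]
        exact Finset.sum_congr rfl fun x hx => by rw [(Finset.mem_filter.1 hx).2]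
    _ = ∑ x ∈ Finset.Ioc 0 N ×ˢ Finset.Ioc 0 N, (μ x.1 : ℝ) / x.1 * a (x.1 * x.2) := by
        rw [Finset.sum_comm]
        refine Finset.sum_congr rfl fun x hx => ?_
        obtain ⟨hx_left, hx_right⟩ := Finset.mem_product.1 hx
        rw [Finset.sum_ite_eq, ite_eq_left_iff]
        intro hnotMem
        rw [ha _ (by simp_all), mul_zero]
    _ = _ := by
        rw [Finset.sum_product]
        simp_rw [Finset.mul_sum]

lemma tsum_moebius_div_sq : ∑' n : ℕ, (μ n : ℝ) / (n : ℝ) ^ 2 = 6 / Real.pi ^ 2 := by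
  have hzeta := ArithmeticFunction.LSeries_zeta_mul_Lseries_moebius (s := 2) (by norm_num)
  rw [ArithmeticFunction.LSeries_zeta_eq_riemannZeta (by norm_num), riemannZeta_two] at hzeta
  have hterm (n : ℕ) : LSeries.term (fun n => (μ n : ℂ)) 2 n = ((μ n : ℝ) / (n : ℝ) ^ 2 : ℝ) := by
    rcases eq_or_ne n 0 with rfl | hn
    · simp
    · rw [LSeries.term_of_ne_zero hn]
      norm_num
  simp_rw [LSeries, hterm] at hzeta
  rw [← ofReal_tsum] at hzeta
  have hreal : Real.pi ^ 2 / 6 * ∑' n : ℕ, (μ n : ℝ) / (n : ℝ) ^ 2 = 1 := by exact_mod_cast hzeta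
  have hpi := Real.pi_ne_zero
  field_simp at hreal ⊢
  linarith

variable {K : ℝ → ℝ} {R B : ℝ}

lemma sum_totient_mul_eq_tsum (hK : ∀ x, R ≤ x → K x = 0) (hR : 0 ≤ R) {δ : ℝ} (hδ : 0 < δ) :
    ∑ n ∈ Finset.Ioc 0 ⌈R / δ⌉₊, (φ n : ℝ) / n * (δ * K (n * δ)) =
      ∑' d : ℕ, (μ d : ℝ) / (d : ℝ) ^ 2 * ∫ x in (0 : ℝ)..R, K (⌈x / (d * δ)⌉₊ * (d * δ)) := by
  set N := ⌈R / δ⌉₊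
  have hN : R ≤ N * δ := (div_le_iff₀ hδ).1 (Nat.le_ceil _)
  rw [sum_totient_div_mul, tsum_eq_sum (s := Finset.Ioc 0 N)]
  · refine Finset.sum_congr rfl fun d hd => ?_
    have hd_pos : (1 : ℝ) ≤ d := by exact_mod_cast (Finset.mem_Ioc.1 hd).1
    rw [← mul_sum_eq_intervalIntegral_natCeil hK hR (by positivity) (N := N)
      (hN.trans (by gcongr; exact le_mul_of_one_le_left hδ.le hd_pos)), ← Finset.mul_sum]
    simp_rw [Nat.cast_mul, mul_comm (d : ℝ), mul_assoc]
    field_simp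
  · intro d hd
    rcases d.eq_zero_or_pos with rfl | hd_pos
    · simp
    have hN_lt : (N : ℝ) ≤ d := by
      simp only [Finset.mem_Ioc, not_and, not_le] at hd
      exact_mod_cast (hd hd_pos).le
    rw [← mul_sum_eq_intervalIntegral_natCeil hK hR (by positivity) (N := 1)
      (by rw [Nat.cast_one, one_mul]; exact hN.trans (by gcongr))]
    simp [hK (d * δ) (hN.trans (by gcongr))]
  · intro n hn
    rw [hK _ (hN.trans (by gcongr)), mul_zero]

lemma tendsto_sum_totient_mul (hK : ∀ x, R ≤ x → K x = 0) (hR : 0 ≤ R)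
    (hB : ∀ x, 0 < x → |K x| ≤ B) (hcont : ContinuousOn K (Set.Ioi 0)) :
    Tendsto (fun δ : ℝ => ∑ n ∈ Finset.Ioc 0 ⌈R / δ⌉₊, (φ n : ℝ) / n * (δ * K (n * δ)))
      (𝓝[>] 0) (𝓝 (6 / Real.pi ^ 2 * ∫ x in (0 : ℝ)..R, K x)) := by
  rw [← tsum_moebius_div_sq, ← tsum_mul_right]
  have htsum_eq := eventually_nhdsWithin_of_forall (a := 0) (s := Set.Ioi 0)
    fun (δ : ℝ) (hδ : 0 < δ) => (sum_totient_mul_eq_tsum hK hR hδ).symm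
  refine Tendsto.congr' htsum_eq (tendsto_tsum_of_dominated_convergence
    (bound := fun d : ℕ => 1 / (d : ℝ) ^ 2 * (B * |R - 0|)) ?_ (fun d => ?_) ?_)
  · exact (Real.summable_one_div_nat_pow.2 one_lt_two).mul_right _
  · rcases d.eq_zero_or_pos with rfl | hd
    · simp
    have hd_cast : (0 : ℝ) < d := by exact_mod_cast hd
    refine ((tendsto_intervalIntegral_natCeil hR hB hcont).comp ?_).const_mul _
    refine tendsto_nhdsWithin_iff.2 ⟨?_, ?_⟩
    · exact tendsto_nhdsWithin_of_tendsto_nhds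
        ((continuous_const_mul (d : ℝ)).tendsto' 0 0 (mul_zero _))
    · exact eventually_nhdsWithin_of_forall fun δ hδ => mul_pos hd_cast hδ
  · filter_upwards [self_mem_nhdsWithin] with δ (hδ : 0 < δ) d
    rcases d.eq_zero_or_pos with rfl | hd
    · simp
    rw [norm_mul, norm_div, norm_pow, Real.norm_natCast]
    gcongr
    · rw [Real.norm_eq_abs]
      exact_mod_cast ArithmeticFunction.abs_moebius_le_one (n := d)
    · refine intervalIntegral.norm_integral_le_of_norm_le_const fun x hx => hB _ ?_
      exact natCeil_div_mul_pos (Set.uIoc_of_le hR ▸ hx).1 (by positivity)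

end TotientSum

/-! ### The zeroth Fourier coefficient -/

section ZerothCoefficient

variable {f : ℂ → ℝ} {Y B κ : ℝ}

/-- The mean over a period of the contributions `horocycleIntegral f κ v`. -/
noncomputable def horocycleMean (f : ℂ → ℝ) (κ : ℝ) : ℝ :=
  ∫ v in (0 : ℝ)..1, horocycleIntegral f κ v

lemma circleMean_horocycleIntegralMap (hf : IsTestFunction f Y) (κ : ℝ) :
    circleMean (horocycleIntegralMap hf κ) = horocycleMean f κ := by
  rw [circleMean_apply, horocycleMean, ← intervalIntegral.integral_ofReal]
  rfl

lemma abs_horocycleMean_le (hB : ∀ z : ℂ, 0 < z.im → |f z| ≤ B) (κ : ℝ) :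
    |horocycleMean f κ| ≤ 4 * B := by
  simpa [horocycleMean] using intervalIntegral.norm_integral_le_of_norm_le_const (a := 0) (b := 1)
    (f := horocycleIntegral f κ) fun v _ => abs_horocycleIntegral_le hB κ v

lemma horocycleMean_eq_zero (f : ℂ → ℝ) (hκ : 2 ≤ κ) : horocycleMean f κ = 0 := by
  have hzero (v : ℝ) : horocycleIntegral f κ v = 0 :=
    horocycleIntegral_eq_zero f (by nlinarith) v
  simp [horocycleMean, hzero]

lemma continuousOn_horocycleMean (hf : IsTestFunction f Y) :
    ContinuousOn (horocycleMean f) {0}ᶜ := by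
  have hre : horocycleMean f = fun κ => (circleMean (horocycleIntegralMap hf κ)).re :=
    funext fun κ => by rw [circleMean_horocycleIntegralMap, ofReal_re]
  rw [hre]
  exact continuous_re.comp_continuousOn
    (circleMean.continuous.comp_continuousOn (continuousOn_horocycleIntegralMap hf))

/-- The mean of `cutoff f` over a period of the horizontal line at height `y`. -/
noncomputable def cutoffMean (f : ℂ → ℝ) (y : ℝ) : ℝ :=
  ∫ x in (0 : ℝ)..1, cutoff f (x + y * I)

lemma intervalIntegral_cutoff_add_one (hf : IsTestFunction f Y) (a y : ℝ) :
    ∫ x in a..(a + 1), cutoff f (x + y * I) = cutoffMean f y := by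
  have hperiodic : Function.Periodic (fun x : ℝ => cutoff f (x + y * I)) 1 := fun x => by
    dsimp only
    rw [← cutoff_add_intCast hf (x + y * I) 1]
    congr 1
    push_cast
    ring
  rw [hperiodic.intervalIntegral_add_eq a 0, zero_add, cutoffMean]

lemma measurable_cutoffMean (hf : IsTestFunction f Y) : Measurable (cutoffMean f) := by
  have hset : cutoffMean f = fun y : ℝ => ∫ x in Set.Ioc (0 : ℝ) 1, cutoff f (x + y * I) :=
    funext fun y => intervalIntegral.integral_of_le zero_le_one
  rw [hset]
  exact (StronglyMeasurable.integral_prod_right (f := fun y x : ℝ => cutoff f (x + y * I))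
    ((measurable_cutoff hf).comp (by fun_prop)).stronglyMeasurable).measurable

lemma abs_cutoffMean_le (hB : ∀ z : ℂ, 0 < z.im → |f z| ≤ B) (y : ℝ) : |cutoffMean f y| ≤ B := by
  simpa [cutoffMean] using intervalIntegral.norm_integral_le_of_norm_le_const (a := 0) (b := 1)
    (f := fun x : ℝ => cutoff f (x + y * I)) fun x _ => abs_cutoff_le hB _

lemma three_quarters_lt_of_cutoff_ne_zero {x y : ℝ} (h : cutoff f (x + y * I) ≠ 0) :
    3 / 4 < y := by
  simpa using three_quarters_lt_im (not_imp_comm.1 cutoff_of_notMem h)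

lemma three_quarters_lt_of_cutoffMean_ne_zero {y : ℝ} (h : cutoffMean f y ≠ 0) : 3 / 4 < y := by
  contrapose! h
  have hzero (x : ℝ) : cutoff f (x + y * I) = 0 :=
    not_imp_comm.1 three_quarters_lt_of_cutoff_ne_zero h.not_gt
  simp [cutoffMean, hzero]

lemma horocyclePoint_eq_add_mul_I (hκ : κ ≠ 0) (v s : ℝ) :
    horocyclePoint κ v s =
      (v - s / (κ * (s ^ 2 + κ ^ 2)) : ℝ) + (1 / (s ^ 2 + κ ^ 2) : ℝ) * I := by
  refine (re_add_im _).symm.trans ?_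
  rw [re_horocyclePoint hκ, im_horocyclePoint hκ]

lemma horocycleMean_eq_integral (hf : IsTestFunction f Y) (hκ : κ ≠ 0) :
    horocycleMean f κ = ∫ s : ℝ, cutoffMean f (1 / (s ^ 2 + κ ^ 2)) := by
  obtain ⟨B, -, hB⟩ := hf.exists_abs_le
  have hmeas : Measurable fun p : ℝ × ℝ => cutoff f (horocyclePoint κ p.1 p.2) := by
    refine (measurable_cutoff hf).comp ?_
    unfold horocyclePoint
    fun_prop
  unfold horocycleMean horocycleIntegral
  rw [intervalIntegral_integral_swap]
  · refine integral_congr_ae (.of_forall fun s => ?_)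
    dsimp only
    simp_rw [horocyclePoint_eq_add_mul_I hκ]
    rw [intervalIntegral.integral_comp_sub_right
      fun x => cutoff f (x + (1 / (s ^ 2 + κ ^ 2) : ℝ) * I), sub_eq_neg_add, sub_eq_neg_add,
      add_zero, intervalIntegral_cutoff_add_one hf]
  · refine integrable_of_norm_le_of_support_subset (s := Set.univ ×ˢ Set.Icc (-2) 2) ?_
      hmeas.aestronglyMeasurable (fun p => abs_cutoff_le hB _) fun p hp => ⟨trivial, ?_⟩
    · rw [Measure.prod_prod]
      simp
    · exact support_cutoff_horocyclePoint_subset f κ p.1 (ofReal_ne_zero.2 hp)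

lemma integral_comp_one_div_norm_sq (g : ℝ → ℝ) :
    ∫ z : ℂ, g (1 / ‖z‖ ^ 2) = Real.pi * ∫ v in Set.Ioi (0 : ℝ), g v / v ^ 2 := by
  have hvolume : (volume : Measure ℂ).real (Metric.ball 0 1) = Real.pi := by
    simp [Measure.real, Complex.volume_ball]
  have hpolar := integral_fun_norm_addHaar (volume : Measure ℂ) fun r => g (1 / r ^ 2)
  have hsubst := integral_comp_rpow_Ioi (fun v => g v / v ^ 2) (p := -2) (by norm_num)
  have hintegrand : Set.EqOn (fun r : ℝ => (|(-2 : ℝ)| * r ^ ((-2 : ℝ) - 1)) •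
      (g (r ^ (-2 : ℝ)) / (r ^ (-2 : ℝ)) ^ 2)) (fun r => 2 * (r * g (1 / r ^ 2)))
      (Set.Ioi 0) := by
    intro r (hr : 0 < r)
    have hpow_two : r ^ (-2 : ℝ) = 1 / r ^ 2 := by
      rw [Real.rpow_neg hr.le]
      norm_num
    have hpow_three : r ^ ((-2 : ℝ) - 1) = 1 / r ^ 3 := by
      rw [Real.rpow_sub_one hr.ne', hpow_two]
      field
    simp only [hpow_two, hpow_three, smul_eq_mul, abs_neg, abs_two]
    field_simp
  rw [setIntegral_congr_fun measurableSet_Ioi hintegrand, integral_const_mul] at hsubst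
  rw [hpolar, ← hsubst, hvolume, Complex.finrank_real_complex]
  simp
  ring

lemma integral_Ioi_integral_comp_sq_add_sq {g : ℝ → ℝ}
    (hg : Integrable fun p : ℝ × ℝ => g (p.2 ^ 2 + p.1 ^ 2)) :
    ∫ x in Set.Ioi (0 : ℝ), ∫ s : ℝ, g (s ^ 2 + x ^ 2) = (∫ z : ℂ, g (‖z‖ ^ 2)) / 2 := by
  have hsymm := integral_comp_abs (f := fun x => ∫ s : ℝ, g (s ^ 2 + x ^ 2))
  have hcomplex := Complex.volume_preserving_equiv_real_prod.integral_comp'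
    fun p : ℝ × ℝ => g (p.2 ^ 2 + p.1 ^ 2)
  have hnorm (z : ℂ) : z.im ^ 2 + z.re ^ 2 = ‖z‖ ^ 2 := by
    rw [← normSq_eq_norm_sq, normSq_apply]
    ring
  simp only [Complex.measurableEquivRealProd_apply, hnorm] at hcomplex
  rw [Measure.volume_eq_prod] at hcomplex hg
  simp only [sq_abs] at hsymm
  rw [hcomplex, integral_prod _ hg, hsymm]
  ring

lemma integrable_cutoffMean_one_div (hf : IsTestFunction f Y) :
    Integrable fun p : ℝ × ℝ => cutoffMean f (1 / (p.2 ^ 2 + p.1 ^ 2)) := by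
  obtain ⟨B, -, hB⟩ := hf.exists_abs_le
  refine integrable_of_norm_le_of_support_subset (s := Set.Icc (-2) 2 ×ˢ Set.Icc (-2) 2) ?_
    ((measurable_cutoffMean hf).comp (by fun_prop)).aestronglyMeasurable
    (fun p => abs_cutoffMean_le hB _) fun p hp => ?_
  · rw [Measure.volume_eq_prod, Measure.prod_prod]
    simp [ENNReal.mul_eq_top]
  · have hlt := three_quarters_lt_of_cutoffMean_ne_zero hp
    have hpos : 0 < p.2 ^ 2 + p.1 ^ 2 := one_div_pos.1 (by linarith)
    rw [lt_div_iff₀ hpos] at hlt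
    exact ⟨abs_le.1 (abs_le_of_sq_le_sq (by nlinarith [sq_nonneg p.2]) two_pos.le),
      abs_le.1 (abs_le_of_sq_le_sq (by nlinarith [sq_nonneg p.1]) two_pos.le)⟩

lemma intervalIntegral_horocycleMean (hf : IsTestFunction f Y) :
    ∫ κ in (0 : ℝ)..2, horocycleMean f κ =
      Real.pi / 2 * ∫ v in Set.Ioi (0 : ℝ), cutoffMean f v / v ^ 2 := by
  calc ∫ κ in (0 : ℝ)..2, horocycleMean f κ = ∫ κ in Set.Ioi (0 : ℝ), horocycleMean f κ := by
        rw [intervalIntegral.integral_of_le two_pos.le]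
        refine (setIntegral_eq_of_subset_of_forall_sdiff_eq_zero measurableSet_Ioi
          Set.Ioc_subset_Ioi_self fun κ hκ => horocycleMean_eq_zero f ?_).symm
        exact le_of_not_ge fun hle => hκ.2 ⟨hκ.1, hle⟩
    _ = ∫ κ in Set.Ioi (0 : ℝ), ∫ s : ℝ, cutoffMean f (1 / (s ^ 2 + κ ^ 2)) :=
        setIntegral_congr_fun measurableSet_Ioi fun κ hκ => horocycleMean_eq_integral hf hκ.ne'
    _ = (∫ z : ℂ, cutoffMean f (1 / ‖z‖ ^ 2)) / 2 :=
        integral_Ioi_integral_comp_sq_add_sq (g := fun r => cutoffMean f (1 / r))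
          (integrable_cutoffMean_one_div hf)
    _ = _ := by
        rw [integral_comp_one_div_norm_sq]
        ring

lemma add_mul_I_mem_periodicDomain_iff {x y : ℝ} (hx : |x| < 1 / 2) :
    (x + y * I : ℂ) ∈ periodicDomain ↔ (x, y) ∈ fundDom := by
  have hdist : sqDistInt (x + y * I) = x ^ 2 + y ^ 2 := by
    rw [sqDistInt_eq_normSq (by simpa using hx.le), normSq_add_mul_I]
  have him : (x + y * I : ℂ).im = y := by simp
  simp only [periodicDomain, fundDom, Set.mem_ofPred_eq, hdist, him, hx, true_and, and_comm]

lemma measurableSet_fundDom : MeasurableSet fundDom :=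
  ((isOpen_lt (by fun_prop) (by fun_prop)).and ((isOpen_lt (by fun_prop) (by fun_prop)).and
    (isOpen_lt (by fun_prop) (by fun_prop)))).measurableSet

lemma setIntegral_fundDom_eq_setIntegral_cutoff (f : ℂ → ℝ) :
    ∫ p in fundDom, f (p.1 + p.2 * I) / p.2 ^ 2 =
      ∫ p in Set.Ioo (-(1 / 2) : ℝ) (1 / 2) ×ˢ Set.Ioi (0 : ℝ),
        cutoff f (p.1 + p.2 * I) / p.2 ^ 2 := by
  rw [setIntegral_eq_of_subset_of_forall_sdiff_eq_zero (s := fundDom)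
    (measurableSet_Ioo.prod measurableSet_Ioi) (fun p hp => ⟨abs_lt.1 hp.1, hp.2.2⟩)]
  · refine setIntegral_congr_fun measurableSet_fundDom fun p hp => ?_
    simp only [cutoff, Set.indicator_of_mem ((add_mul_I_mem_periodicDomain_iff hp.1).2 hp)]
  · intro p hp
    rw [cutoff_of_notMem fun hmem =>
      hp.2 ((add_mul_I_mem_periodicDomain_iff (abs_lt.2 hp.1.1)).1 hmem), zero_div]

lemma mem_Icc_of_cutoff_ne_zero (hf : IsTestFunction f Y) {x y : ℝ}
    (h : cutoff f (x + y * I) ≠ 0) : y ∈ Set.Icc (3 / 4) Y := by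
  have hmem : (x + y * I : ℂ) ∈ periodicDomain := not_imp_comm.1 cutoff_of_notMem h
  rw [cutoff, Set.indicator_of_mem hmem] at h
  refine ⟨by simpa using (three_quarters_lt_im hmem).le, ?_⟩
  by_contra! hy
  exact h (hf.eq_zero_of_lt_im _ (by simpa using hy))

lemma integrableOn_cutoff_div_sq (hf : IsTestFunction f Y) :
    IntegrableOn (fun p : ℝ × ℝ => cutoff f (p.1 + p.2 * I) / p.2 ^ 2)
      (Set.Ioo (-(1 / 2) : ℝ) (1 / 2) ×ˢ Set.Ioi (0 : ℝ)) (volume.prod volume) := by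
  obtain ⟨B, hB_pos, hB⟩ := hf.exists_abs_le
  rw [IntegrableOn, ← Measure.prod_restrict]
  refine integrable_of_norm_le_of_support_subset (s := Set.univ ×ˢ Set.Icc (3 / 4) Y) (B := B * 2)
    ?_ ?_ (fun p => ?_) fun p hp => ⟨trivial, ?_⟩
  · rw [Measure.prod_prod]
    exact ENNReal.mul_ne_top (measure_ne_top _ _)
      ((Measure.restrict_apply_le _ _).trans_lt measure_Icc_lt_top).ne
  · exact (((measurable_cutoff hf).comp (by fun_prop)).div (by fun_prop)).aestronglyMeasurable
  · by_cases hzero : cutoff f (p.1 + p.2 * I) = 0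
    · rw [hzero, zero_div, norm_zero]
      positivity
    have hle := (mem_Icc_of_cutoff_ne_zero hf hzero).1
    rw [norm_div, norm_pow, Real.norm_eq_abs, Real.norm_eq_abs, sq_abs,
      div_le_iff₀ (by positivity)]
    have hsq : 1 / 2 ≤ p.2 ^ 2 := by nlinarith
    nlinarith [abs_cutoff_le hB (p.1 + p.2 * I)]
  · exact mem_Icc_of_cutoff_ne_zero hf (left_ne_zero_of_mul hp)

lemma setIntegral_fundDom_eq (hf : IsTestFunction f Y) :
    ∫ p in fundDom, f (p.1 + p.2 * I) / p.2 ^ 2 =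
      ∫ v in Set.Ioi (0 : ℝ), cutoffMean f v / v ^ 2 := by
  have hinteg := integrableOn_cutoff_div_sq hf
  rw [setIntegral_fundDom_eq_setIntegral_cutoff, Measure.volume_eq_prod, setIntegral_prod _ hinteg,
    integral_integral_swap (by rwa [Measure.prod_restrict])]
  refine setIntegral_congr_fun measurableSet_Ioi fun v _ => ?_
  dsimp only
  rw [integral_div, ← intervalIntegral_cutoff_add_one hf (-(1 / 2)),
    ← integral_Ioc_eq_integral_Ioo, ← intervalIntegral.integral_of_le (by norm_num)]
  norm_num

/-- The mean of an `SL(2,ℤ)`-invariant function with respect to the normalized hyperbolic area of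
the modular surface. -/
noncomputable def hyperbolicMean (f : ℂ → ℝ) : ℝ :=
  3 / Real.pi * ∫ p in fundDom, f (p.1 + p.2 * I) / p.2 ^ 2

lemma tendsto_sum_totient_mul_horocycleMean (hf : IsTestFunction f Y) :
    Tendsto (fun δ : ℝ => ∑ n ∈ Finset.Ioc 0 ⌈2 / δ⌉₊,
      (n.totient : ℝ) / n * (δ * horocycleMean f (n * δ))) (𝓝[>] 0) (𝓝 (hyperbolicMean f)) := by
  obtain ⟨B, -, hB⟩ := hf.exists_abs_le
  convert! tendsto_sum_totient_mul (fun κ hκ => horocycleMean_eq_zero f hκ) two_pos.le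
    (fun κ _ => abs_horocycleMean_le hB κ)
    ((continuousOn_horocycleMean hf).mono fun κ hκ => ne_of_gt hκ) using 2
  rw [hyperbolicMean, intervalIntegral_horocycleMean hf, setIntegral_fundDom_eq hf]
  field

lemma tendsto_horocycleCoeff_zero_sq (hf : IsTestFunction f Y) :
    Tendsto (fun δ : ℝ => horocycleCoeff f 0 (δ ^ 2)) (𝓝[>] 0) (𝓝 (hyperbolicMean f)) := by
  have hsum (δ : ℝ) : (∑ k ∈ Finset.range ⌈2 / δ⌉₊, if (0 : ℤ) = 0 then (δ / (k + 1 : ℕ) : ℝ) *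
      ((k + 1).totient * circleMean (horocycleIntegralMap hf ((k + 1 : ℕ) * δ))) else 0) =
      ((∑ n ∈ Finset.Ioc 0 ⌈2 / δ⌉₊,
        (n.totient : ℝ) / n * (δ * horocycleMean f (n * δ)) : ℝ) : ℂ) := by
    simp_rw [if_true, circleMean_horocycleIntegralMap]
    rw [Finset.range_eq_Ico, Finset.sum_Ico_add' (fun n : ℕ => ((δ / n : ℝ) : ℂ) *
      (n.totient * horocycleMean f (n * δ))), zero_add, ofReal_sum]
    refine Finset.sum_congr rfl fun n _ => ?_
    push_cast
    ring
  have hmain := (continuous_ofReal.tendsto _).comp (tendsto_sum_totient_mul_horocycleMean hf)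
  have hadd := (tendsto_horocycleCoeff_sub_sum hf 0).add hmain
  rw [zero_add] at hadd
  refine hadd.congr fun δ => ?_
  rw [hsum, Function.comp_apply, sub_add_cancel]

end ZerothCoefficient

/-! ### Averaging an integral over translates of the interval -/

section Averaging

variable {g T : ℝ → ℝ} {C r : ℝ}

lemma abs_intervalIntegral_sub_comp_add_le (hg : Continuous g) (hC : ∀ t, |g t| ≤ C)
    (a b τ : ℝ) : |(∫ s in a..b, g s) - ∫ s in a..b, g (s + τ)| ≤ 2 * C * |τ| := by
  have hinteg (a b : ℝ) : IntervalIntegrable g volume a b := hg.intervalIntegrable a b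
  have hend (a : ℝ) : |∫ s in a..a + τ, g s| ≤ C * |τ| := by
    simpa using intervalIntegral.norm_integral_le_of_norm_le_const (f := g) (a := a) (b := a + τ)
      fun x _ => hC x
  rw [intervalIntegral.integral_comp_add_right,
    intervalIntegral.integral_interval_sub_interval_comm (hinteg _ _) (hinteg _ _) (hinteg _ _)]
  linarith [abs_sub (∫ s in a..a + τ, g s) (∫ s in b..b + τ, g s), hend a, hend b]

lemma intervalIntegral_swap_of_continuous {F : ℝ → ℝ → ℝ} (hF : Continuous (Function.uncurry F))
    (a b c d : ℝ) : ∫ x in a..b, ∫ y in c..d, F x y = ∫ y in c..d, ∫ x in a..b, F x y :=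
  intervalIntegral_intervalIntegral_swap <|
    (hF.continuousOn.integrableOn_compact (isCompact_uIcc.prod isCompact_uIcc)).mono_set
      (Set.prod_mono Set.uIoc_subset_uIcc Set.uIoc_subset_uIcc)

lemma abs_mul_intervalIntegral_sub_le (hg : Continuous g) (hC : ∀ t, |g t| ≤ C)
    (hT : Continuous T) (hT_nonneg : ∀ τ, 0 ≤ T τ) {c d : ℝ} (hcd : c ≤ d)
    (hTr : ∀ τ ∈ Set.Ioc c d, T τ ≠ 0 → |τ| ≤ r) (a b : ℝ) :
    |(∫ τ in c..d, T τ) * (∫ s in a..b, g s) - ∫ s in a..b, ∫ τ in c..d, T τ * g (s + τ)| ≤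
      2 * C * r * ∫ τ in c..d, T τ := by
  have hC_nonneg : 0 ≤ C := (abs_nonneg _).trans (hC 0)
  have hcont : Continuous fun τ : ℝ => ∫ s in a..b, g (s + τ) :=
    intervalIntegral.continuous_parametric_intervalIntegral_of_continuous'
      (f := fun τ s : ℝ => g (s + τ)) (by fun_prop) a b
  rw [intervalIntegral_swap_of_continuous (F := fun s τ => T τ * g (s + τ))
    (by unfold Function.uncurry; fun_prop) a b c d, ← intervalIntegral.integral_mul_const]
  simp_rw [intervalIntegral.integral_const_mul]
  have hinteg : IntervalIntegrable (fun τ => T τ * ∫ s in a..b, g (s + τ)) volume c d :=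
    (hT.mul hcont).intervalIntegrable c d
  rw [← intervalIntegral.integral_sub (Continuous.intervalIntegrable (by fun_prop) _ _) hinteg,
    ← intervalIntegral.integral_const_mul,
    ← Real.norm_eq_abs]
  refine intervalIntegral.norm_integral_le_of_norm_le hcd (.of_forall fun τ hτ => ?_)
    (Continuous.intervalIntegrable (by fun_prop) _ _)
  rw [← mul_sub, norm_mul, Real.norm_of_nonneg (hT_nonneg τ), Real.norm_eq_abs, mul_comm]
  rcases eq_or_ne (T τ) 0 with hzero | hne
  · simp only [hzero, mul_zero, le_refl]
  · refine mul_le_mul_of_nonneg_right ?_ (hT_nonneg τ)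
    have hle := hTr τ hτ hne
    exact (abs_intervalIntegral_sub_comp_add_le hg hC a b τ).trans (by gcongr)

lemma exists_nonneg_continuousMap_support_subset (hr : 0 < r) : ∃ T : C(UnitAddCircle, ℝ),
    (∀ t, 0 ≤ T t) ∧ (0 < ∫ τ in (-(1 / 2) : ℝ)..(1 / 2), T τ) ∧
      ∀ τ ∈ Set.Ioc (-(1 / 2) : ℝ) (1 / 2), T τ ≠ 0 → |τ| ≤ r := by
  refine ⟨⟨fun t => max 0 (1 - ‖t‖ / r), by fun_prop⟩, fun t => le_max_left _ _, ?_, ?_⟩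
  · refine intervalIntegral.integral_pos (by norm_num)
      ((ContinuousMap.continuous _).comp (AddCircle.continuous_mk' _)).continuousOn
      (fun x _ => le_max_left _ _) ⟨0, ⟨by norm_num, by norm_num⟩, by simp⟩
  · intro τ hτ
    have hnorm : ‖(τ : UnitAddCircle)‖ = |τ| := by
      rw [AddCircle.norm_coe_eq_abs_iff 1 one_ne_zero, abs_one]
      exact abs_le.2 ⟨hτ.1.le, hτ.2⟩
    contrapose!
    intro hlt
    refine max_eq_left ?_
    rw [hnorm, sub_nonpos, one_le_div hr]
    exact hlt.le

end Averaging

/-! ### Equidistribution of horocycle segments of fixed length -/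

section Deviation

variable {f : ℂ → ℝ} {Y y : ℝ}

/-- The deviation of `f` from its mean, along the horocycle at height `y`. -/
noncomputable def horocycleDeviation (f : ℂ → ℝ) (y t : ℝ) : ℝ :=
  f (t + y * I) - hyperbolicMean f

lemma continuous_comp_add_mul_I (hf : IsTestFunction f Y) (hy : 0 < y) :
    Continuous fun t : ℝ => f (t + y * I) :=
  hf.continuousOn.comp_continuous (by fun_prop) fun t => by simpa using hy

lemma continuous_horocycleDeviation (hf : IsTestFunction f Y) (hy : 0 < y) :
    Continuous (horocycleDeviation f y) :=
  (continuous_comp_add_mul_I hf hy).sub continuous_const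

lemma periodic_horocycleDeviation (hf : IsTestFunction f Y) (hy : 0 < y) :
    Function.Periodic (horocycleDeviation f y) 1 := by
  intro t
  rw [horocycleDeviation, horocycleDeviation,
    ← hf.add_intCast_eq (z := t + y * I) (by simpa using hy) 1]
  congr 2
  push_cast
  ring

lemma exists_abs_horocycleDeviation_le (hf : IsTestFunction f Y) :
    ∃ C, 0 < C ∧ ∀ y, 0 < y → ∀ t, |horocycleDeviation f y t| ≤ C := by
  obtain ⟨B, hB_pos, hB⟩ := hf.exists_abs_le
  refine ⟨B + |hyperbolicMean f|, by positivity, fun y hy t => (abs_sub _ _).trans ?_⟩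
  gcongr
  exact hB _ (by simpa using hy)

/-- The functional `ψ ↦ ∫₀¹ ψ(x) (f(x + iy) - m) dx` on continuous functions on the circle, `m`
being the mean of `f`. -/
noncomputable def deviationFunctional (f : ℂ → ℝ) (y : ℝ) : C(UnitAddCircle, ℂ) →L[ℂ] ℂ :=
  weightedIntegral (volume.restrict (Set.Ioc (0 : ℝ) 1)) (fun x => (horocycleDeviation f y x : ℂ))
    ⟨((↑) : ℝ → UnitAddCircle), continuous_quotient_mk'⟩

lemma deviationFunctional_apply (hf : IsTestFunction f Y) (hy : 0 < y) (ψ : C(UnitAddCircle, ℂ)) :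
    deviationFunctional f y ψ =
      ∫ x in (0 : ℝ)..1, horocycleDeviation f y x * ψ (x : UnitAddCircle) := by
  have hinteg : IntervalIntegrable (fun x => (horocycleDeviation f y x : ℂ)) volume 0 1 :=
    (continuous_ofReal.comp (continuous_horocycleDeviation hf hy)).intervalIntegrable 0 1
  rw [deviationFunctional, weightedIntegral_apply hinteg.1,
    intervalIntegral.integral_of_le zero_le_one]
  rfl

lemma norm_deviationFunctional_le {C : ℝ} (hC : ∀ t, |horocycleDeviation f y t| ≤ C) :
    ‖deviationFunctional f y‖ ≤ C := by
  refine (norm_weightedIntegral_le _ _).trans ?_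
  have hle := norm_setIntegral_le_of_norm_le_const (μ := volume) (s := Set.Ioc (0 : ℝ) 1)
    measure_Ioc_lt_top fun t _ => (norm_norm (horocycleDeviation f y t)).trans_le (hC t)
  simpa using (le_abs_self _).trans hle

lemma deviationFunctional_fourier (hf : IsTestFunction f Y) (hy : 0 < y) (m : ℤ) :
    deviationFunctional f y (fourier m) =
      horocycleCoeff f m y - if m = 0 then (hyperbolicMean f : ℂ) else 0 := by
  have hm_cont := continuous_fourier_coe m
  have hinteg : IntervalIntegrable (fun x : ℝ => fourier m (x : UnitAddCircle) *
      (f (x + y * I) : ℂ)) volume 0 1 :=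
    (hm_cont.mul (continuous_ofReal.comp (continuous_comp_add_mul_I hf hy))).intervalIntegrable 0 1
  rw [deviationFunctional_apply hf hy, horocycleCoeff]
  simp_rw [horocycleDeviation, ofReal_sub, sub_mul, mul_comm _ (fourier m _)]
  rw [intervalIntegral.integral_sub hinteg (Continuous.intervalIntegrable (by fun_prop) _ _),
    intervalIntegral.integral_mul_const, integral_fourier_coe, ite_mul, one_mul, zero_mul]

lemma tendsto_horocycleCoeff (hf : IsTestFunction f Y) (m : ℤ) :
    Tendsto (horocycleCoeff f m) (𝓝[>] 0) (𝓝 (if m = 0 then (hyperbolicMean f : ℂ) else 0)) := by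
  have hsq : Tendsto (fun δ => horocycleCoeff f m (δ ^ 2)) (𝓝[>] 0)
      (𝓝 (if m = 0 then (hyperbolicMean f : ℂ) else 0)) := by
    split_ifs with hm
    · exact hm ▸ tendsto_horocycleCoeff_zero_sq hf
    · exact tendsto_horocycleCoeff_sq_of_ne_zero hf hm
  have hsqrt : Tendsto Real.sqrt (𝓝[>] 0) (𝓝[>] 0) :=
    tendsto_nhdsWithin_iff.2 ⟨(Real.continuous_sqrt.tendsto' 0 0 Real.sqrt_zero).mono_left
      nhdsWithin_le_nhds, eventually_mem_nhdsWithin.mono fun y hy => Real.sqrt_pos.2 hy⟩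
  refine (hsq.comp hsqrt).congr' (eventually_mem_nhdsWithin.mono fun y hy => ?_)
  rw [Function.comp_apply, Real.sq_sqrt (le_of_lt hy)]

lemma tendstoUniformlyOn_deviationFunctional (hf : IsTestFunction f Y)
    {K : Set C(UnitAddCircle, ℂ)} (hK : IsCompact K) :
    TendstoUniformlyOn (fun y ψ => deviationFunctional f y ψ) 0 (𝓝[>] 0) K := by
  obtain ⟨C, -, hC⟩ := exists_abs_horocycleDeviation_le hf
  refine tendstoUniformlyOn_zero_of_dense_span
    (eventually_mem_nhdsWithin.mono fun y hy => norm_deviationFunctional_le (hC y hy))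
    (Set.forall_mem_range.2 fun m => ?_) span_fourier_closure_eq_top hK
  rw [← sub_self (if m = 0 then (hyperbolicMean f : ℂ) else 0)]
  exact ((tendsto_horocycleCoeff hf m).sub_const _).congr'
    (eventually_mem_nhdsWithin.mono fun y hy => (deviationFunctional_fourier hf hy m).symm)

/-- The family of translates `s ↦ ψ(· - s)` of a function on the circle. -/
noncomputable def translates (ψ : C(UnitAddCircle, ℂ)) : C(UnitAddCircle, C(UnitAddCircle, ℂ)) :=
  ContinuousMap.curry ⟨fun p => ψ (p.2 - p.1), by fun_prop⟩

lemma deviationFunctional_translates (hf : IsTestFunction f Y) (hy : 0 < y)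
    (ψ : C(UnitAddCircle, ℂ)) (s : ℝ) :
    deviationFunctional f y (translates ψ s) =
      ∫ τ in (-(1 / 2) : ℝ)..(1 / 2), ψ τ * horocycleDeviation f y (s + τ) := by
  have hper : Function.Periodic
      (fun x : ℝ => (horocycleDeviation f y x : ℂ) * ψ ((x - s : ℝ) : UnitAddCircle)) 1 := by
    intro x
    dsimp only
    rw [periodic_horocycleDeviation hf hy x, add_sub_right_comm, AddCircle.coe_add_period]
  calc deviationFunctional f y (translates ψ s)
      = ∫ x in (0 : ℝ)..0 + 1, horocycleDeviation f y x * ψ ((x - s : ℝ) : UnitAddCircle) := by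
        rw [deviationFunctional_apply hf hy, zero_add]
        rfl
    _ = ∫ x in (s - 1 / 2)..(s - 1 / 2) + 1,
          horocycleDeviation f y x * ψ ((x - s : ℝ) : UnitAddCircle) :=
        hper.intervalIntegral_add_eq _ _
    _ = _ := by
        rw [show s - 1 / 2 = s + -(1 / 2) by ring, show s + -(1 / 2) + 1 = s + 1 / 2 by ring,
          ← intervalIntegral.integral_comp_add_left]
        simp_rw [add_sub_cancel_left, mul_comm]

lemma eventually_abs_intervalIntegral_mul_le (hf : IsTestFunction f Y) (T : C(UnitAddCircle, ℝ))
    {ε : ℝ} (hε : 0 < ε) : ∀ᶠ y in 𝓝[>] 0, ∀ s : ℝ,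
      |∫ τ in (-(1 / 2) : ℝ)..(1 / 2), T τ * horocycleDeviation f y (s + τ)| ≤ ε := by
  set ψ : C(UnitAddCircle, ℂ) := ⟨fun t => T t, by fun_prop⟩
  have hunif := Metric.tendstoUniformlyOn_iff.1 (tendstoUniformlyOn_deviationFunctional hf
    (isCompact_range (translates ψ).continuous)) ε hε
  filter_upwards [hunif, eventually_mem_nhdsWithin] with y hy hy_pos s
  have hs := (hy _ ⟨s, rfl⟩).le
  rw [Pi.zero_apply, dist_zero_left, deviationFunctional_translates hf hy_pos] at hs
  rw [← Real.norm_eq_abs, ← norm_real, ← intervalIntegral.integral_ofReal]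
  simp_rw [ofReal_mul]
  exact hs

lemma eventually_abs_intervalIntegral_horocycleDeviation_le (hf : IsTestFunction f Y) {η : ℝ}
    (hη : 0 < η) : ∀ᶠ y in 𝓝[>] 0, ∀ a b, a ≤ b →
      |∫ t in a..b, horocycleDeviation f y t| ≤ η * (1 + (b - a)) := by
  obtain ⟨C, hC_pos, hC⟩ := exists_abs_horocycleDeviation_le hf
  obtain ⟨T, hT_nonneg, hT_pos, hT_supp⟩ :=
    exists_nonneg_continuousMap_support_subset (r := η / (2 * C)) (by positivity)
  have hT_cont : Continuous fun τ : ℝ => T τ := T.continuous.comp (AddCircle.continuous_mk' _)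
  set N := ∫ τ in (-(1 / 2) : ℝ)..(1 / 2), T τ
  filter_upwards [eventually_abs_intervalIntegral_mul_le hf T (mul_pos hη hT_pos),
    eventually_mem_nhdsWithin] with y hy hy_pos a b hab
  have haverage := abs_mul_intervalIntegral_sub_le (continuous_horocycleDeviation hf hy_pos)
    (hC y hy_pos) hT_cont (fun τ => hT_nonneg τ) (by norm_num) hT_supp a b
  have hsmall : |∫ s in a..b, ∫ τ in (-(1 / 2) : ℝ)..(1 / 2),
      T τ * horocycleDeviation f y (s + τ)| ≤ η * N * (b - a) := by
    rw [← abs_of_nonneg (sub_nonneg.2 hab)]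
    exact intervalIntegral.norm_integral_le_of_norm_le_const (C := η * N)
      (f := fun s => ∫ τ in (-(1 / 2) : ℝ)..(1 / 2), T τ * horocycleDeviation f y (s + τ))
      fun s _ => hy s
  have hscale : 2 * C * (η / (2 * C)) = η := by field
  rw [hscale] at haverage
  refine le_of_mul_le_mul_left ?_ hT_pos
  calc N * |∫ t in a..b, horocycleDeviation f y t|
      = |N * ∫ t in a..b, horocycleDeviation f y t| := by rw [abs_mul, abs_of_pos hT_pos]
    _ ≤ η * N + η * N * (b - a) := by
        linarith [abs_sub_abs_le_abs_sub (N * ∫ t in a..b, horocycleDeviation f y t)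
          (∫ s in a..b, ∫ τ in (-(1 / 2) : ℝ)..(1 / 2), T τ * horocycleDeviation f y (s + τ))]
    _ = N * (η * (1 + (b - a))) := by ring

end Deviation

/-! ### Short horocycle segments as images of longer ones -/

section RatioEstimates

variable {A P θ : ℝ}

lemma abs_le_two_mul_abs_of_abs_sub_le (hA : |A - P| ≤ θ * |P|) (hθ : θ ≤ 1 / 2) :
    |P| ≤ 2 * |A| := by
  have htri := abs_sub_abs_le_abs_sub P A
  rw [abs_sub_comm] at htri
  nlinarith [abs_nonneg P]

lemma ne_zero_of_abs_sub_le (hP : P ≠ 0) (hA : |A - P| ≤ θ * |P|) (hθ : θ ≤ 1 / 2) : A ≠ 0 := by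
  rintro rfl
  have hle := abs_le_two_mul_abs_of_abs_sub_le hA hθ
  rw [abs_zero, mul_zero] at hle
  exact hP (abs_nonpos_iff.1 hle)

lemma sq_div_sq_le_four (hA : |A - P| ≤ θ * |P|) (hθ : θ ≤ 1 / 2) : P ^ 2 / A ^ 2 ≤ 4 := by
  refine div_le_of_le_mul₀ (sq_nonneg A) zero_le_four ?_
  rw [← sq_abs P, ← sq_abs A]
  nlinarith [abs_le_two_mul_abs_of_abs_sub_le hA hθ, abs_nonneg P]

lemma abs_one_sub_sq_div_sq_le (hP : P ≠ 0) (hA : |A - P| ≤ θ * |P|) (hθ : θ ≤ 1 / 2) :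
    |1 - P ^ 2 / A ^ 2| ≤ 6 * θ := by
  have hA_ne := ne_zero_of_abs_sub_le hP hA hθ
  have hPA := abs_le_two_mul_abs_of_abs_sub_le hA hθ
  have hθ_nonneg : 0 ≤ θ := nonneg_of_mul_nonneg_left ((abs_nonneg _).trans hA) (abs_pos.2 hP)
  rw [show 1 - P ^ 2 / A ^ 2 = (A - P) * (A + P) / A ^ 2 by field, abs_div, abs_mul,
    abs_of_nonneg (sq_nonneg A), div_le_iff₀ (by positivity)]
  calc |A - P| * |A + P| ≤ θ * (2 * |A|) * (|A| + 2 * |A|) := by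
        gcongr
        · exact hA.trans (by gcongr)
        · exact (abs_add_le A P).trans (by gcongr)
    _ = 6 * θ * A ^ 2 := by rw [← sq_abs A]; ring

lemma mul_pos_of_abs_sub_le (hP : P ≠ 0) (hA : |A - P| ≤ θ * |P|) (hθ : θ ≤ 1 / 2) :
    0 < P * A := by
  have hsq : (A - P) ^ 2 ≤ (1 / 2 * |P|) ^ 2 := by
    rw [← sq_abs (A - P)]
    gcongr
    exact hA.trans (by gcongr)
  rw [mul_pow, sq_abs] at hsq
  nlinarith [sq_nonneg A, sq_pos_of_ne_zero hP]

end RatioEstimates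

/-- The Möbius transformation `t ↦ (at + b) / (ct + d)` of the real line, with value `0` at the
pole. -/
noncomputable def realMoebius (a b c d t : ℝ) : ℝ := (a * t + b) / (c * t + d)

section RealMoebius

variable {a b c d : ℝ}

lemma hasDerivAt_realMoebius (hdet : a * d - b * c = 1) {t : ℝ} (ht : c * t + d ≠ 0) :
    HasDerivAt (realMoebius a b c d) (1 / (c * t + d) ^ 2) t := by
  have hlin (a b : ℝ) : HasDerivAt (fun t => a * t + b) a t := by
    simpa using ((hasDerivAt_id t).const_mul a).add_const b
  convert! (hlin a b).div (hlin c d) ht using 1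
  rw [← hdet]
  ring

lemma norm_moebius_sub_le (hdet : a * d - b * c = 1) {x y : ℝ} (hx : c * x + d ≠ 0) (hy : 0 ≤ y) :
    ‖((a * (x + y * I) + b) / (c * (x + y * I) + d) : ℂ) -
        (realMoebius a b c d x + (y / (c * x + d) ^ 2 : ℝ) * I)‖ ≤
      y / (c * x + d) ^ 2 * (|c| * y / |c * x + d|) := by
  have hre : (c * (x + y * I) + d : ℂ).re = c * x + d := by simp
  have hdet' : (a * d - b * c : ℂ) = 1 := by exact_mod_cast hdet
  obtain ⟨D, hD⟩ : ∃ D : ℂ, D = c * (x + y * I) + d := ⟨_, rfl⟩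
  obtain ⟨A, hA⟩ : ∃ A : ℝ, A = c * x + d := ⟨_, rfl⟩
  rw [realMoebius, ← hD, ← hA]
  rw [← hA, ← hD] at hre
  rw [← hA] at hx
  have hDA : D = A + c * y * I := by rw [hD, hA]; push_cast; ring
  have hD_ne : D ≠ 0 := fun h => hx (by rw [← hre, h, zero_re])
  have hA_ne : (A : ℂ) ≠ 0 := by exact_mod_cast hx
  have hdiff : ((a * (x + y * I) + b) / D : ℂ) - (((a * x + b) / A : ℝ) + (y / A ^ 2 : ℝ) * I) =
      c * y ^ 2 / (A ^ 2 * D) := by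
    have hnum : (a * (x + y * I) + b) * A - (a * x + b) * D = y * I := by
      rw [hD, hA]
      push_cast
      linear_combination y * I * hdet'
    push_cast
    field_simp
    linear_combination A * hnum - y * I * hDA - c * y ^ 2 * I_sq
  rw [hdiff, norm_div, norm_mul, norm_mul, norm_pow, norm_pow, norm_real, norm_real, norm_real,
    Real.norm_eq_abs, Real.norm_of_nonneg hy, Real.norm_eq_abs, sq_abs]
  calc |c| * y ^ 2 / (A ^ 2 * ‖D‖) ≤ |c| * y ^ 2 / (A ^ 2 * |A|) := by
        gcongr
        exact hre ▸ abs_re_le_norm D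
    _ = _ := by field

lemma norm_moebius_sub_le_of_abs_sub_le (hdet : a * d - b * c = 1) {x y P θ θ' : ℝ} (hy : 0 ≤ y)
    (hP : P ≠ 0) (hθ : θ ≤ 1 / 2) (hA : |c * x + d - P| ≤ θ * |P|) (hcy : |c| * y ≤ θ' * |P|) :
    ‖((a * (x + y * I) + b) / (c * (x + y * I) + d) : ℂ) -
        (realMoebius a b c d x + (y / P ^ 2 : ℝ) * I)‖ ≤ (6 * θ + 8 * θ') * (y / P ^ 2) := by
  have hA_ne := ne_zero_of_abs_sub_le hP hA hθ
  have hPA := abs_le_two_mul_abs_of_abs_sub_le hA hθ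
  have hθ' : 0 ≤ θ' :=
    nonneg_of_mul_nonneg_left ((by positivity : 0 ≤ |c| * y).trans hcy) (abs_pos.2 hP)
  set A := c * x + d
  have hheight : ‖((y / A ^ 2 : ℝ) * I - (y / P ^ 2 : ℝ) * I : ℂ)‖ ≤ 6 * θ * (y / P ^ 2) := by
    rw [← sub_mul, norm_mul, norm_I, mul_one, ← ofReal_sub, norm_real, Real.norm_eq_abs,
      show y / A ^ 2 - y / P ^ 2 = -(1 - P ^ 2 / A ^ 2) * (y / P ^ 2) by field, abs_mul, abs_neg,
      abs_of_nonneg (by positivity : 0 ≤ y / P ^ 2)]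
    gcongr
    exact abs_one_sub_sq_div_sq_le hP hA hθ
  have hshift : y / A ^ 2 * (|c| * y / |A|) ≤ 8 * θ' * (y / P ^ 2) := by
    have hratio : |c| * y / |A| ≤ 2 * θ' := by
      rw [div_le_iff₀ (abs_pos.2 hA_ne)]
      nlinarith
    calc y / A ^ 2 * (|c| * y / |A|) = P ^ 2 / A ^ 2 * (|c| * y / |A|) * (y / P ^ 2) := by field
      _ ≤ 4 * (2 * θ') * (y / P ^ 2) := by
          gcongr
          exact sq_div_sq_le_four hA hθ
      _ = _ := by ring
  calc ‖((a * (x + y * I) + b) / (c * (x + y * I) + d) : ℂ) -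
        (realMoebius a b c d x + (y / P ^ 2 : ℝ) * I)‖
      ≤ y / A ^ 2 * (|c| * y / |A|) + 6 * θ * (y / P ^ 2) := by
        refine (norm_sub_le_norm_sub_add_norm_sub _
          (realMoebius a b c d x + (y / A ^ 2 : ℝ) * I : ℂ) _).trans (add_le_add ?_ ?_)
        · exact norm_moebius_sub_le hdet hA_ne hy
        · rwa [add_sub_add_left_eq_sub]
    _ ≤ (6 * θ + 8 * θ') * (y / P ^ 2) := by linarith

end RealMoebius

section ChangeOfVariables

variable {a b c d x R θ : ℝ}

lemma abs_mul_add_sub_le (hR : |c| * R ≤ θ * |c * x + d|) {t : ℝ} (ht : t ∈ Set.Icc x (x + R)) :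
    |c * t + d - (c * x + d)| ≤ θ * |c * x + d| := by
  rw [show c * t + d - (c * x + d) = c * (t - x) by ring, abs_mul,
    abs_of_nonneg (by linarith [ht.1] : 0 ≤ t - x)]
  exact (mul_le_mul_of_nonneg_left (by linarith [ht.2]) (abs_nonneg c)).trans hR

lemma mul_add_ne_zero_of_mem_Icc (hx : c * x + d ≠ 0) (hθ : θ ≤ 1 / 2)
    (hR : |c| * R ≤ θ * |c * x + d|) {t : ℝ} (ht : t ∈ Set.Icc x (x + R)) : c * t + d ≠ 0 :=
  ne_zero_of_abs_sub_le hx (abs_mul_add_sub_le hR ht) hθ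

lemma continuousOn_realMoebius (hdet : a * d - b * c = 1) {s : Set ℝ}
    (hs : ∀ t ∈ s, c * t + d ≠ 0) : ContinuousOn (realMoebius a b c d) s :=
  fun t ht => (hasDerivAt_realMoebius hdet (hs t ht)).continuousAt.continuousWithinAt

lemma abs_integral_comp_realMoebius_sub_le (hdet : a * d - b * c = 1) (hx : c * x + d ≠ 0)
    (hθ : θ ≤ 1 / 2) (hR_nonneg : 0 ≤ R) (hR : |c| * R ≤ θ * |c * x + d|) {g : ℝ → ℝ} {C : ℝ}
    (hg : Continuous g) (hC : ∀ t, |g t| ≤ C) :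
    |(∫ t in x..x + R, g (realMoebius a b c d t)) -
        (c * x + d) ^ 2 * ∫ s in realMoebius a b c d x..realMoebius a b c d (x + R), g s| ≤
      6 * θ * C * R := by
  have huIcc : Set.uIcc x (x + R) = Set.Icc x (x + R) := Set.uIcc_of_le (by linarith)
  have hne (t : ℝ) (ht : t ∈ Set.uIcc x (x + R)) : c * t + d ≠ 0 :=
    mul_add_ne_zero_of_mem_Icc hx hθ hR (huIcc ▸ ht)
  have hderiv_cont : ContinuousOn (fun t => 1 / (c * t + d) ^ 2) (Set.uIcc x (x + R)) :=
    continuousOn_const.div (by fun_prop) fun t ht => pow_ne_zero 2 (hne t ht)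
  have hcomp : ContinuousOn (fun t => g (realMoebius a b c d t)) (Set.uIcc x (x + R)) :=
    hg.comp_continuousOn (continuousOn_realMoebius hdet hne)
  have hinteg : IntervalIntegrable (fun t => (c * x + d) ^ 2 *
      ((g ∘ realMoebius a b c d) t * (1 / (c * t + d) ^ 2))) volume x (x + R) :=
    (continuousOn_const.mul (hcomp.mul hderiv_cont)).intervalIntegrable
  rw [← intervalIntegral.integral_comp_mul_deriv
      (fun t ht => hasDerivAt_realMoebius hdet (hne t ht)) hderiv_cont hg,
    ← intervalIntegral.integral_const_mul,
    ← intervalIntegral.integral_sub hcomp.intervalIntegrable hinteg]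
  have hbound (t : ℝ) (ht : t ∈ Set.uIoc x (x + R)) : ‖g (realMoebius a b c d t) -
      (c * x + d) ^ 2 * ((g ∘ realMoebius a b c d) t * (1 / (c * t + d) ^ 2))‖ ≤ 6 * θ * C := by
    have hclose := abs_mul_add_sub_le hR (huIcc ▸ Set.uIoc_subset_uIcc ht)
    rw [Function.comp_apply, show ∀ u P A : ℝ, u - P * (u * (1 / A)) = (1 - P / A) * u by
      intros; ring, norm_mul]
    exact mul_le_mul (abs_one_sub_sq_div_sq_le hx hclose hθ) (hC _) (abs_nonneg _)
      ((abs_nonneg _).trans (abs_one_sub_sq_div_sq_le hx hclose hθ))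
  simpa [abs_of_nonneg hR_nonneg] using intervalIntegral.norm_integral_le_of_norm_le_const hbound

lemma realMoebius_sub_realMoebius (hdet : a * d - b * c = 1) {s t : ℝ} (hs : c * s + d ≠ 0)
    (ht : c * t + d ≠ 0) :
    realMoebius a b c d t - realMoebius a b c d s = (t - s) / ((c * s + d) * (c * t + d)) := by
  rw [realMoebius, realMoebius, div_sub_div _ _ ht hs, mul_comm (c * t + d) (c * s + d)]
  congr 1
  linear_combination (t - s) * hdet

lemma realMoebius_le_realMoebius_add (hdet : a * d - b * c = 1) (hx : c * x + d ≠ 0)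
    (hθ : θ ≤ 1 / 2) (hR_nonneg : 0 ≤ R) (hR : |c| * R ≤ θ * |c * x + d|) :
    realMoebius a b c d x ≤ realMoebius a b c d (x + R) := by
  have hmem : x + R ∈ Set.Icc x (x + R) := Set.right_mem_Icc.2 (by linarith)
  have hpos := mul_pos_of_abs_sub_le hx (abs_mul_add_sub_le hR hmem) hθ
  rw [← sub_nonneg, realMoebius_sub_realMoebius hdet hx (right_ne_zero_of_mul hpos.ne'),
    add_sub_cancel_left]
  exact div_nonneg hR_nonneg hpos.le

lemma sq_mul_realMoebius_add_sub_le (hdet : a * d - b * c = 1) (hx : c * x + d ≠ 0)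
    (hθ : θ ≤ 1 / 2) (hR_nonneg : 0 ≤ R) (hR : |c| * R ≤ θ * |c * x + d|) :
    (c * x + d) ^ 2 * (realMoebius a b c d (x + R) - realMoebius a b c d x) ≤ 2 * R := by
  have hmem : x + R ∈ Set.Icc x (x + R) := Set.right_mem_Icc.2 (by linarith)
  have hclose := abs_mul_add_sub_le hR hmem
  have hA_ne := ne_zero_of_abs_sub_le hx hclose hθ
  have hratio : (c * x + d) / (c * (x + R) + d) ≤ 2 := by
    refine (le_abs_self _).trans ?_
    rw [abs_div, div_le_iff₀ (abs_pos.2 hA_ne)]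
    exact abs_le_two_mul_abs_of_abs_sub_le hclose hθ
  calc (c * x + d) ^ 2 * (realMoebius a b c d (x + R) - realMoebius a b c d x)
      = (c * x + d) / (c * (x + R) + d) * R := by
        rw [realMoebius_sub_realMoebius hdet hx hA_ne]
        field
    _ ≤ 2 * R := by gcongr

end ChangeOfVariables

section Segment

variable {f : ℂ → ℝ} {Y : ℝ} {a b c d : ℤ} {x R ε θ θ' r σ : ℝ}

lemma im_moebius_pos (hdet : a * d - b * c = 1) {z : ℂ} (hz : 0 < z.im) :
    0 < ((a * z + b) / (c * z + d) : ℂ).im := by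
  let γ : Matrix.SpecialLinearGroup (Fin 2) ℤ :=
    ⟨!![a, b; c, d], by rw [Matrix.det_fin_two_of, hdet]⟩
  have him := (γ • (⟨z, hz⟩ : UpperHalfPlane)).im_pos
  rw [← UpperHalfPlane.coe_im, coe_smul_eq_div] at him
  exact him

lemma abs_horocycleDeviation_sub_realMoebius_le (hf : IsTestFunction f Y)
    (hdet : a * d - b * c = 1) (hε : 0 < ε) (hx : (c * x + d : ℝ) ≠ 0) (hθ : θ ≤ 1 / 2)
    (hR : |(c : ℝ)| * R ≤ θ * |c * x + d|) (hε_le : |(c : ℝ)| * ε ≤ θ' * |c * x + d|)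
    (hr_le : 6 * θ + 8 * θ' ≤ r)
    (hr : ∀ z w : ℂ, 0 < z.im → 0 < w.im → ‖z - w‖ ≤ r * w.im → |f z - f w| ≤ σ)
    {t : ℝ} (ht : t ∈ Set.Icc x (x + R)) :
    |horocycleDeviation f ε t -
      horocycleDeviation f (ε / (c * x + d) ^ 2) (realMoebius a b c d t)| ≤ σ := by
  have hdet' : (a * d - b * c : ℝ) = 1 := by exact_mod_cast hdet
  set w : ℂ := realMoebius a b c d t + (ε / (c * x + d) ^ 2 : ℝ) * I
  have him : w.im = ε / (c * x + d) ^ 2 := by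
    rw [add_im, ofReal_im, im_ofReal_mul, I_im, zero_add, mul_one]
  have hw : 0 < w.im := him ▸ by positivity
  have hnorm := norm_moebius_sub_le_of_abs_sub_le hdet' hε.le hx hθ (abs_mul_add_sub_le hR ht) hε_le
  rw [horocycleDeviation, horocycleDeviation, sub_sub_sub_cancel_right,
    ← hf.moebius_eq a b c d hdet _ (by simpa using hε)]
  refine hr _ w ?_ hw ?_
  · exact im_moebius_pos hdet (by simpa using hε)
  · rw [him]
    simpa only [ofReal_intCast] using hnorm.trans (by gcongr)

lemma abs_intervalIntegral_horocycleDeviation_le_of_moebius (hf : IsTestFunction f Y)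
    (hdet : a * d - b * c = 1) (hε : 0 < ε) (hR_nonneg : 0 ≤ R) (hx : (c * x + d : ℝ) ≠ 0)
    (hθ : θ ≤ 1 / 2)
    (hR : |(c : ℝ)| * R ≤ θ * |c * x + d|) (hε_le : |(c : ℝ)| * ε ≤ θ' * |c * x + d|)
    (hr_le : 6 * θ + 8 * θ' ≤ r)
    (hr : ∀ z w : ℂ, 0 < z.im → 0 < w.im → ‖z - w‖ ≤ r * w.im → |f z - f w| ≤ σ)
    {C κ : ℝ} (hC : ∀ t, |horocycleDeviation f (ε / (c * x + d) ^ 2) t| ≤ C)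
    (hκ_nonneg : 0 ≤ κ) (hκ : ∀ u v, u ≤ v →
      |∫ t in u..v, horocycleDeviation f (ε / (c * x + d) ^ 2) t| ≤ κ * (1 + (v - u))) :
    |∫ t in x..x + R, horocycleDeviation f ε t| ≤
      (σ + 6 * θ * C + 2 * κ) * R + κ * (c * x + d) ^ 2 := by
  have hdet' : (a * d - b * c : ℝ) = 1 := by exact_mod_cast hdet
  set P : ℝ := c * x + d
  set g := horocycleDeviation f (ε / P ^ 2)
  set X := realMoebius a b c d
  have hg : Continuous g := continuous_horocycleDeviation hf (by positivity)
  have hXg : ContinuousOn (fun t => g (X t)) (Set.uIcc x (x + R)) := by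
    rw [Set.uIcc_of_le (by linarith)]
    exact hg.comp_continuousOn (continuousOn_realMoebius hdet' fun t ht =>
      mul_add_ne_zero_of_mem_Icc hx hθ hR ht)
  have hreplace : |(∫ t in x..x + R, horocycleDeviation f ε t) - ∫ t in x..x + R, g (X t)| ≤
      σ * R := by
    rw [← intervalIntegral.integral_sub
      ((continuous_horocycleDeviation hf hε).intervalIntegrable _ _) hXg.intervalIntegrable]
    simpa [abs_of_nonneg hR_nonneg] using intervalIntegral.norm_integral_le_of_norm_le_const
      (f := fun t => horocycleDeviation f ε t - g (X t)) (a := x) (b := x + R) fun t ht =>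
        abs_horocycleDeviation_sub_realMoebius_le hf hdet hε hx hθ hR hε_le hr_le hr
          (Set.uIcc_of_le (by linarith : x ≤ x + R) ▸ Set.uIoc_subset_uIcc ht)
  have hchange := abs_integral_comp_realMoebius_sub_le hdet' hx hθ hR_nonneg hR hg hC
  have himage : |P ^ 2 * ∫ s in X x..X (x + R), g s| ≤ κ * P ^ 2 + κ * (2 * R) := by
    rw [abs_mul, abs_of_nonneg (sq_nonneg P)]
    calc P ^ 2 * |∫ s in X x..X (x + R), g s|
        ≤ P ^ 2 * (κ * (1 + (X (x + R) - X x))) := by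
          gcongr
          exact hκ _ _ (realMoebius_le_realMoebius_add hdet' hx hθ hR_nonneg hR)
      _ = κ * P ^ 2 + κ * (P ^ 2 * (X (x + R) - X x)) := by ring
      _ ≤ κ * P ^ 2 + κ * (2 * R) := by
          have hlength := sq_mul_realMoebius_add_sub_le hdet' hx hθ hR_nonneg hR
          exact add_le_add_right (mul_le_mul_of_nonneg_left hlength hκ_nonneg) _
  rw [abs_le] at *
  constructor <;> linarith

end Segment

section Window

variable {f : ℂ → ℝ} {Y k σ : ℝ}

lemma abs_intervalIntegral_horocycleDeviation_le_of_isCoprime (hf : IsTestFunction f Y)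
    {C r θ κ y₀ ε x : ℝ} (hk : 0 < k) (hθ_nonneg : 0 ≤ θ) (hθ : θ ≤ 1 / 2) (hθr : θ ≤ r / 12)
    (hC : ∀ y, 0 < y → ∀ t, |horocycleDeviation f y t| ≤ C)
    (hr : ∀ z w : ℂ, 0 < z.im → 0 < w.im → ‖z - w‖ ≤ r * w.im → |f z - f w| ≤ σ)
    (hκ_nonneg : 0 ≤ κ) (hκ : ∀ y ∈ Set.Ioo 0 y₀, ∀ a b, a ≤ b →
      |∫ t in a..b, horocycleDeviation f y t| ≤ κ * (1 + (b - a)))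
    {n : ℕ} {p q : ℤ} (hn : 0 < n) (hε : 0 < ε) (hεr : ε * n ^ 2 ≤ k * (r / 16))
    (hεy : ε * n ^ 2 < k ^ 2 * y₀) (hpq : IsCoprime p q) (hq : 0 ≤ q) (hqn : q ≤ n)
    (hkP : k / n ≤ |q * x - p|) (hPn : |q * x - p| ≤ 1 / n) :
    |∫ t in x..x + k * θ / n ^ 2, horocycleDeviation f ε t| ≤
      (σ + 6 * θ * C + 2 * κ) * (k * θ / n ^ 2) + κ / n ^ 2 := by
  -- the matrix `(-u, -v; q, -p)` maps the rational `p / q` near `x` to the cusp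
  obtain ⟨u, v, huv⟩ := hpq
  have hP : (q * x + (-p : ℤ) : ℝ) = q * x - p := by push_cast; ring
  rw [← hP] at hkP hPn
  have hqn' : |(q : ℝ)| ≤ n := by rw [abs_of_nonneg (by exact_mod_cast hq)]; exact_mod_cast hqn
  have hPpos : 0 < |(q * x + (-p : ℤ) : ℝ)| := (by positivity : 0 < k / n).trans_le hkP
  have hy_mem : ε / (q * x + (-p : ℤ)) ^ 2 ∈ Set.Ioo 0 y₀ := by
    rw [← sq_abs]
    refine ⟨by positivity, ?_⟩
    calc ε / |(q * x + (-p : ℤ) : ℝ)| ^ 2 ≤ ε / (k / n) ^ 2 := by gcongr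
      _ = ε * n ^ 2 / k ^ 2 := by field
      _ < y₀ := by rwa [div_lt_iff₀' (by positivity)]
  refine (abs_intervalIntegral_horocycleDeviation_le_of_moebius hf
    (a := -u) (b := -v) (c := q) (d := -p) (r := r) (θ := θ) (θ' := r / 16)
    (by linarith) hε (by positivity) (abs_pos.1 hPpos) hθ ?_ ?_ (by linarith) hr
    (hC _ hy_mem.1) hκ_nonneg (hκ _ hy_mem)).trans ?_
  · calc |(q : ℝ)| * (k * θ / n ^ 2) ≤ n * (k * θ / n ^ 2) := by gcongr
      _ = θ * (k / n) := by field
      _ ≤ _ := by gcongr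
  · calc |(q : ℝ)| * ε ≤ n * ε := by gcongr
      _ = ε * n ^ 2 / n := by field
      _ ≤ k * (r / 16) / n := by gcongr
      _ = r / 16 * (k / n) := by ring
      _ ≤ _ := by gcongr; linarith
  · have hsq := pow_le_pow_left₀ hPpos.le hPn 2
    rw [sq_abs, one_div, inv_pow] at hsq
    rw [div_eq_mul_inv κ]
    gcongr

lemma exists_forall_isCoprime_abs_intervalIntegral_horocycleDeviation_le
    (hf : IsTestFunction f Y) (hk : 0 < k) (hk_le : k ≤ 1) (hσ : 0 < σ) :
    ∃ ρ e : ℝ, 0 < ρ ∧ ρ ≤ 1 ∧ 0 < e ∧ ∀ (n : ℕ) (ε x : ℝ) (p q : ℤ), 0 < n → 0 < ε →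
      ε * n ^ 2 ≤ e → IsCoprime p q → 0 ≤ q → q ≤ n → k / n ≤ |q * x - p| → |q * x - p| ≤ 1 / n →
      |∫ t in x..x + ρ / n ^ 2, horocycleDeviation f ε t| ≤ σ * (ρ / n ^ 2) := by
  obtain ⟨C, hC_pos, hC⟩ := exists_abs_horocycleDeviation_le hf
  obtain ⟨r, hr_pos, hr⟩ := hf.exists_abs_sub_le (by positivity : 0 < σ / 3)
  obtain ⟨θ, hθ_pos, hθ, hθr, hθC⟩ :
      ∃ θ : ℝ, 0 < θ ∧ θ ≤ 1 / 2 ∧ θ ≤ r / 12 ∧ θ ≤ σ / (18 * C) :=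
    ⟨min (1 / 2) (min (r / 12) (σ / (18 * C))), by positivity, min_le_left _ _,
      (min_le_right _ _).trans (min_le_left _ _), (min_le_right _ _).trans (min_le_right _ _)⟩
  obtain ⟨κ, hκ_pos, hκ_eq⟩ : ∃ κ : ℝ, 0 < κ ∧ κ * (1 / (k * θ) + 2) = σ / 3 :=
    ⟨σ / 3 / (1 / (k * θ) + 2), by positivity, div_mul_cancel₀ _ (by positivity)⟩
  obtain ⟨y₀, hy₀ : 0 < y₀, hκ⟩ := mem_nhdsGT_iff_exists_Ioo_subset.1
    (eventually_abs_intervalIntegral_horocycleDeviation_le hf hκ_pos)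
  refine ⟨k * θ, min (k * (r / 16)) (k ^ 2 * y₀ / 2), by positivity, by nlinarith,
    by positivity, ?_⟩
  intro n ε x p q hn hε hεn hpq hq hqn hkP hPn
  have hεy : ε * n ^ 2 < k ^ 2 * y₀ :=
    (hεn.trans (min_le_right _ _)).trans_lt (half_lt_self (by positivity))
  refine (abs_intervalIntegral_horocycleDeviation_le_of_isCoprime hf hk hθ_pos.le hθ hθr hC hr
    hκ_pos.le (fun y hy => hκ hy) hn hε (hεn.trans (min_le_left _ _)) hεy hpq hq hqn
    hkP hPn).trans ?_
  have hθC' : 6 * θ * C ≤ σ / 3 := by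
    rw [le_div_iff₀ (by positivity)] at hθC
    linarith
  calc (σ / 3 + 6 * θ * C + 2 * κ) * (k * θ / n ^ 2) + κ / n ^ 2
      = (σ / 3 + 6 * θ * C + κ * (1 / (k * θ) + 2)) * (k * θ / n ^ 2) := by field
    _ ≤ σ * (k * θ / n ^ 2) := by
        rw [hκ_eq]
        gcongr
        linarith

end Window

/-! ### The points close to a rational of small denominator -/

section NearRationals

variable {q n : ℕ} {t a b : ℝ}

/-- The set of reals within `t / q` of a rational with denominator `q`. -/
def nearRationals (q : ℕ) (t : ℝ) : Set ℝ := {x | ∃ p : ℤ, |q * x - p| < t}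

lemma measurableSet_nearRationals (q : ℕ) (t : ℝ) : MeasurableSet (nearRationals q t) := by
  rw [nearRationals, Set.ofPred_exists]
  exact (isOpen_iUnion fun p => isOpen_lt (by fun_prop) continuous_const).measurableSet

lemma nearRationals_inter_Icc_subset (hq : 0 < q) (ht : t ≤ 1) :
    nearRationals q t ∩ Set.Icc a b ⊆ ⋃ p ∈ Finset.Icc ⌈q * a - 1⌉ ⌊q * b + 1⌋,
      Set.Ioo ((p - t) / q) ((p + t) / q) := by
  have hq' : (0 : ℝ) < q := by exact_mod_cast hq
  rintro x ⟨⟨p, hp⟩, hax, hxb⟩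
  obtain ⟨hlt, hgt⟩ := abs_lt.1 hp
  simp only [Set.mem_iUnion, Finset.mem_Icc, Int.ceil_le, Int.le_floor]
  refine ⟨p, ⟨?_, ?_⟩, ?_, ?_⟩
  · linarith [mul_le_mul_of_nonneg_left hax hq'.le]
  · linarith [mul_le_mul_of_nonneg_left hxb hq'.le]
  · rw [div_lt_iff₀ hq']
    linarith
  · rw [lt_div_iff₀ hq']
    linarith

lemma card_Icc_ceil_floor_le {u v : ℝ} (huv : u ≤ v + 1) :
    ((Finset.Icc ⌈u⌉ ⌊v⌋).card : ℝ) ≤ v - u + 1 := by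
  rw [Int.card_Icc, ← Int.cast_natCast, Int.toNat_eq_max, Int.cast_max]
  refine max_le ?_ (by push_cast; linarith)
  push_cast
  linarith [Int.floor_le v, Int.le_ceil u]

lemma volume_real_nearRationals_inter_Icc_le (hq : 0 < q) (ht_nonneg : 0 ≤ t) (ht : t ≤ 1)
    (hab : a ≤ b) :
    volume.real (nearRationals q t ∩ Set.Icc a b) ≤ 2 * t * (b - a) + 6 * t * (q : ℝ)⁻¹ := by
  set J := Finset.Icc ⌈q * a - 1⌉ ⌊q * b + 1⌋
  have hvol (p : ℤ) : volume.real (Set.Ioo ((p - t) / q) ((p + t) / q)) = 2 * t / q := by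
    rw [Real.volume_real_Ioo_of_le (by gcongr; linarith)]
    ring
  have hcard : (J.card : ℝ) ≤ q * (b - a) + 3 :=
    (card_Icc_ceil_floor_le (by nlinarith)).trans_eq (by ring)
  calc volume.real (nearRationals q t ∩ Set.Icc a b)
      ≤ volume.real (⋃ p ∈ J, Set.Ioo ((p - t) / q) ((p + t) / q)) :=
        measureReal_mono (nearRationals_inter_Icc_subset hq ht) <|
          (measure_biUnion_lt_top J.finite_toSet fun p _ => measure_Ioo_lt_top).ne
    _ ≤ ∑ p ∈ J, volume.real (Set.Ioo ((p - t) / q) ((p + t) / q)) :=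
        measureReal_biUnion_finset_le _ _
    _ = J.card * (2 * t / q) := by simp_rw [hvol, Finset.sum_const, nsmul_eq_mul]
    _ ≤ (q * (b - a) + 3) * (2 * t / q) := by gcongr
    _ = 2 * t * (b - a) + 6 * t * (q : ℝ)⁻¹ := by field

lemma sum_Icc_inv_le_one_add_log (n : ℕ) :
    ∑ q ∈ Finset.Icc 1 n, (q : ℝ)⁻¹ ≤ 1 + Real.log n := by
  simpa [harmonic_eq_sum_Icc] using harmonic_le_one_add_log n

lemma volume_real_biUnion_nearRationals_inter_Icc_le (ht_nonneg : 0 ≤ t) (ht : t ≤ 1)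
    (hab : a ≤ b) (n : ℕ) :
    volume.real ((⋃ q ∈ Finset.Icc 1 n, nearRationals q t) ∩ Set.Icc a b) ≤
      2 * (n * t) * (b - a) + 6 * t * (1 + Real.log n) := by
  rw [Set.iUnion₂_inter]
  calc volume.real (⋃ q ∈ Finset.Icc 1 n, nearRationals q t ∩ Set.Icc a b)
      ≤ ∑ q ∈ Finset.Icc 1 n, (2 * t * (b - a) + 6 * t * (q : ℝ)⁻¹) :=
        (measureReal_biUnion_finset_le _ _).trans <| Finset.sum_le_sum fun q hq =>
          volume_real_nearRationals_inter_Icc_le (Finset.mem_Icc.1 hq).1 ht_nonneg ht hab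
    _ = n * (2 * t * (b - a)) + 6 * t * ∑ q ∈ Finset.Icc 1 n, (q : ℝ)⁻¹ := by
        rw [Finset.sum_add_distrib, Finset.sum_const, Nat.card_Icc, Nat.add_sub_cancel,
          nsmul_eq_mul, Finset.mul_sum]
    _ ≤ n * (2 * t * (b - a)) + 6 * t * (1 + Real.log n) := by
        gcongr
        exact sum_Icc_inv_le_one_add_log n
    _ = _ := by ring

lemma exists_isCoprime_abs_mul_sub_le (x : ℝ) (hn : 0 < n) :
    ∃ (p : ℤ) (q : ℕ), IsCoprime p (q : ℤ) ∧ 0 < q ∧ q ≤ n ∧ |q * x - p| ≤ 1 / n := by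
  obtain ⟨r, hr, hr_den⟩ := Real.exists_rat_abs_sub_le_and_den_le x hn
  have hden : (0 : ℝ) < r.den := by exact_mod_cast r.den_pos
  refine ⟨r.num, r.den, Rat.isCoprime_num_den r, r.den_pos, hr_den, ?_⟩
  have hr_eq : r.den * x - r.num = r.den * (x - r) := by
    rw [mul_sub, Rat.cast_def r, mul_div_cancel₀ _ hden.ne']
  rw [hr_eq, abs_mul, abs_of_pos hden]
  calc r.den * |x - r| ≤ r.den * (1 / ((n + 1) * r.den)) := by gcongr
    _ = 1 / (n + 1) := by field
    _ ≤ 1 / n := by gcongr; linarith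

end NearRationals

lemma abs_intervalIntegral_le_of_abs_le_off {W : ℝ → ℝ} {S : Set ℝ} {a b m M : ℝ}
    (hW : IntervalIntegrable W volume a b) (hab : a ≤ b) (hS : MeasurableSet S)
    (hm_nonneg : 0 ≤ m) (hM : ∀ x ∈ S ∩ Set.Icc a b, |W x| ≤ M)
    (hm : ∀ x ∈ Set.Icc a b \ S, |W x| ≤ m) :
    |∫ x in a..b, W x| ≤ m * (b - a) + M * volume.real (S ∩ Set.Icc a b) := by
  have hfin (s : Set ℝ) : volume (Set.Icc a b ∩ s) < ⊤ :=
    (measure_mono Set.inter_subset_left).trans_lt measure_Icc_lt_top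
  rw [intervalIntegrable_iff_integrableOn_Icc_of_le hab] at hW
  rw [intervalIntegral.integral_of_le hab, ← integral_Icc_eq_integral_Ioc,
    ← integral_inter_add_sdiff hS hW, add_comm, Set.inter_comm]
  refine (abs_add_le _ _).trans (add_le_add ?_ ?_)
  · refine (norm_setIntegral_le_of_norm_le_const (f := W) (hfin Sᶜ) hm).trans ?_
    gcongr
    rw [← Real.volume_real_Icc_of_le hab]
    exact measureReal_mono Set.sdiff_subset measure_Icc_lt_top.ne
  · exact norm_setIntegral_le_of_norm_le_const (f := W) (Set.inter_comm _ _ ▸ hfin S) hM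

/-! ### Equidistribution of shrinking horocycle segments -/

lemma abs_intervalIntegral_le_of_windows {g : ℝ → ℝ} {S : Set ℝ} {a b m C R : ℝ}
    (hg : Continuous g) (hC : ∀ t, |g t| ≤ C) (hab : a ≤ b) (hS : MeasurableSet S)
    (hm_nonneg : 0 ≤ m) (hR : 0 < R)
    (hm : ∀ x ∈ Set.Icc a b \ S, |∫ t in x..x + R, g t| ≤ m * R) :
    |∫ t in a..b, g t| ≤ m * (b - a) + C * volume.real (S ∩ Set.Icc a b) + 2 * C * R := by
  have hwindow (x : ℝ) : ∫ τ in (0 : ℝ)..R, g (x + τ) = ∫ t in x..x + R, g t := by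
    rw [intervalIntegral.integral_comp_add_left, add_zero]
  have hcont : Continuous fun x : ℝ => ∫ τ in (0 : ℝ)..R, g (x + τ) :=
    intervalIntegral.continuous_parametric_intervalIntegral_of_continuous'
      (f := fun x τ : ℝ => g (x + τ)) (by fun_prop) 0 R
  have hlarge (x : ℝ) : |∫ τ in (0 : ℝ)..R, g (x + τ)| ≤ C * R := by
    simpa [abs_of_pos hR] using intervalIntegral.norm_integral_le_of_norm_le_const
      (f := fun τ => g (x + τ)) (a := 0) (b := R) fun τ _ => hC _
  have hwindows := abs_intervalIntegral_le_of_abs_le_off (hcont.intervalIntegrable a b) hab hS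
    (by positivity) (fun x _ => hlarge x) fun x hx => (hwindow x).symm ▸ hm x hx
  have haverage : |R * (∫ t in a..b, g t) - ∫ x in a..b, ∫ τ in (0 : ℝ)..R, g (x + τ)| ≤
      2 * C * R * R := by
    simpa using abs_mul_intervalIntegral_sub_le (T := fun _ => 1) (r := R) hg hC continuous_const
      (fun _ => zero_le_one) hR.le (fun τ hτ _ => abs_le.2 ⟨by linarith [hτ.1], hτ.2⟩) a b
  refine le_of_mul_le_mul_left ?_ hR
  calc R * |∫ t in a..b, g t| = |R * ∫ t in a..b, g t| := by rw [abs_mul, abs_of_pos hR]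
    _ ≤ |∫ x in a..b, ∫ τ in (0 : ℝ)..R, g (x + τ)| + 2 * C * R * R := by
        linarith [abs_sub_abs_le_abs_sub (R * ∫ t in a..b, g t)
          (∫ x in a..b, ∫ τ in (0 : ℝ)..R, g (x + τ))]
    _ ≤ _ := by linarith

section Shrinking

variable {f : ℂ → ℝ} {Y : ℝ}

lemma exists_forall_notMem_nearRationals_abs_intervalIntegral_le (hf : IsTestFunction f Y)
    {k σ : ℝ} (hk : 0 < k) (hk_le : k ≤ 1) (hσ : 0 < σ) :
    ∃ ρ e : ℝ, 0 < ρ ∧ ρ ≤ 1 ∧ 0 < e ∧ ∀ (n : ℕ) (ε x : ℝ), 0 < n → 0 < ε → ε * n ^ 2 ≤ e →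
      x ∉ ⋃ q ∈ Finset.Icc 1 n, nearRationals q (k / n) →
      |∫ t in x..x + ρ / n ^ 2, horocycleDeviation f ε t| ≤ σ * (ρ / n ^ 2) := by
  obtain ⟨ρ, e, hρ, hρ_le, he, hcoprime⟩ :=
    exists_forall_isCoprime_abs_intervalIntegral_horocycleDeviation_le hf hk hk_le hσ
  refine ⟨ρ, e, hρ, hρ_le, he, fun n ε x hn hε hεn hx => ?_⟩
  obtain ⟨p, q, hpq, hq, hqn, hclose⟩ := exists_isCoprime_abs_mul_sub_le x hn
  refine hcoprime n ε x p q hn hε hεn hpq (by positivity) (by exact_mod_cast hqn) ?_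
    (by exact_mod_cast hclose)
  by_contra! hlt
  exact hx (Set.mem_biUnion (Finset.mem_Icc.2 ⟨hq, hqn⟩) ⟨p, by exact_mod_cast hlt⟩)

lemma exists_forall_abs_intervalIntegral_horocycleDeviation_le (hf : IsTestFunction f Y) {η : ℝ}
    (hη : 0 < η) : ∃ e κ : ℝ, 0 < e ∧ 0 < κ ∧ ∀ (n : ℕ) (ε a b : ℝ), 0 < n → 0 < ε → a ≤ b →
      ε * n ^ 2 ≤ e → (1 + Real.log n) / n ≤ κ * (b - a) →
      |∫ t in a..b, horocycleDeviation f ε t| ≤ η * (b - a) := by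
  obtain ⟨C, hC_pos, hC⟩ := exists_abs_horocycleDeviation_le hf
  obtain ⟨k, hk, hk_le, hkC⟩ : ∃ k : ℝ, 0 < k ∧ k ≤ 1 ∧ C * k ≤ η / 8 :=
    ⟨min 1 (η / 8 / C), by positivity, min_le_left _ _,
      (le_div_iff₀' hC_pos).1 (min_le_right _ _)⟩
  obtain ⟨ρ, e, hρ, hρ_le, he, hwindow⟩ :=
    exists_forall_notMem_nearRationals_abs_intervalIntegral_le hf hk hk_le
      (by positivity : 0 < η / 4)
  refine ⟨e, η / 16 / C, he, by positivity, fun n ε a b hn hε hab hεn hlength => ?_⟩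
  have hn' : (1 : ℝ) ≤ n := by exact_mod_cast hn
  have hlog : 0 ≤ Real.log n := Real.log_nonneg hn'
  set E := (1 + Real.log n) / n with hE
  set S := ⋃ q ∈ Finset.Icc 1 n, nearRationals q (k / n)
  have hbad : volume.real (S ∩ Set.Icc a b) ≤ 2 * k * (b - a) + 6 * k * E := by
    refine (volume_real_biUnion_nearRationals_inter_Icc_le (by positivity)
      (div_le_one_of_le₀ (hk_le.trans hn') (by positivity)) hab n).trans_eq ?_
    rw [hE]
    field
  have hwidth : ρ / n ^ 2 ≤ E := by
    rw [hE, div_le_div_iff₀ (by positivity) (by positivity)]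
    nlinarith
  have hCE : C * E ≤ η / 16 * (b - a) := by
    rwa [div_mul_eq_mul_div, le_div_iff₀' hC_pos] at hlength
  have hbound := abs_intervalIntegral_le_of_windows (continuous_horocycleDeviation hf hε) (hC ε hε)
    hab (Finset.measurableSet_biUnion _ fun q _ => measurableSet_nearRationals q _)
    (by positivity : 0 ≤ η / 4) (by positivity : 0 < ρ / (n : ℝ) ^ 2)
    fun x hx => hwindow n ε x hn hε hεn hx.2
  calc |∫ t in a..b, horocycleDeviation f ε t|
      ≤ η / 4 * (b - a) + C * (2 * k * (b - a) + 6 * k * E) + 2 * C * E := by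
        refine hbound.trans ?_
        gcongr
    _ = η / 4 * (b - a) + 2 * (C * k) * (b - a) + 6 * k * (C * E) + 2 * (C * E) := by ring
    _ ≤ η / 4 * (b - a) + 2 * (η / 8) * (b - a) + 6 * 1 * (η / 16 * (b - a)) +
          2 * (η / 16 * (b - a)) := by
        have := sub_nonneg.2 hab
        gcongr
    _ = η * (b - a) := by ring

lemma tendsto_rpow_nhdsGT_zero {s : ℝ} (hs : 0 < s) :
    Tendsto (fun ε : ℝ => ε ^ s) (𝓝[>] 0) (𝓝 0) := by
  have hcont := Real.continuousAt_rpow_const 0 s (Or.inr hs.le)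
  exact (Real.zero_rpow hs.ne' ▸ hcont.tendsto).mono_left nhdsWithin_le_nhds

lemma natCeil_le_two_mul {N : ℝ} (hN : 1 ≤ N) : (⌈N⌉₊ : ℝ) ≤ 2 * N := by
  linarith [Nat.ceil_lt_add_one (zero_le_one.trans hN)]

lemma one_add_log_natCeil_div_le {N : ℝ} (hN : 1 ≤ N) :
    (1 + Real.log ⌈N⌉₊) / ⌈N⌉₊ ≤ (2 + Real.log N) / N := by
  have hlog : Real.log ⌈N⌉₊ ≤ 1 + Real.log N := by
    refine (Real.log_le_log (by positivity) (natCeil_le_two_mul hN)).trans ?_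
    rw [Real.log_mul two_ne_zero (by positivity)]
    linarith [Real.log_two_lt_d9]
  exact div_le_div₀ (by linarith [Real.log_nonneg hN]) (by linarith) (by positivity) (Nat.le_ceil N)

lemma eventually_exists_nat_scale {d e κ : ℝ} (hd : 0 < d) (hd_le : d ≤ 1) (he : 0 < e)
    (hκ : 0 < κ) : ∀ᶠ ε : ℝ in 𝓝[>] 0, ∃ n : ℕ, 0 < n ∧ ε * n ^ 2 ≤ e ∧
      (1 + Real.log n) / n ≤ κ * ε ^ (1 / 2 - d) := by
  have hpow : Tendsto (fun ε : ℝ => 4 * ε ^ d) (𝓝[>] 0) (𝓝 0) := by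
    simpa using (tendsto_rpow_nhdsGT_zero hd).const_mul 4
  have hlog : Tendsto (fun ε : ℝ => 2 * ε ^ (d / 2) - (1 - d) / 2 * (Real.log ε * ε ^ (d / 2)))
      (𝓝[>] 0) (𝓝 0) := by
    simpa using ((tendsto_rpow_nhdsGT_zero (half_pos hd)).const_mul 2).sub
      ((tendsto_log_mul_rpow_nhdsGT_zero (half_pos hd)).const_mul ((1 - d) / 2))
  filter_upwards [Ioo_mem_nhdsGT one_pos, hpow.eventually (ge_mem_nhds he),
    hlog.eventually (ge_mem_nhds hκ)] with ε ⟨hε, hε_lt⟩ hpow_le hlog_le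
  set N := ε ^ (-((1 - d) / 2)) with hN_def
  have hN : 1 ≤ N := Real.one_le_rpow_of_pos_of_le_one_of_nonpos hε hε_lt.le (by linarith)
  refine ⟨⌈N⌉₊, Nat.ceil_pos.2 (by linarith), ?_, ?_⟩
  · calc ε * (⌈N⌉₊ : ℝ) ^ 2 ≤ ε * (2 * N) ^ 2 := by
          gcongr
          exact natCeil_le_two_mul hN
      _ = 4 * ε ^ d := by
          rw [mul_pow, hN_def, ← Real.rpow_mul_natCast hε.le,
            show d = 1 + -((1 - d) / 2) * (2 : ℕ) by push_cast; ring, Real.rpow_add hε,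
            Real.rpow_one]
          ring_nf
      _ ≤ e := hpow_le
  · calc (1 + Real.log ⌈N⌉₊) / ⌈N⌉₊ ≤ (2 + Real.log N) / N := one_add_log_natCeil_div_le hN
      _ = (2 * ε ^ (d / 2) - (1 - d) / 2 * (Real.log ε * ε ^ (d / 2))) * ε ^ (1 / 2 - d) := by
          rw [hN_def, Real.log_rpow hε, div_eq_mul_inv, ← Real.rpow_neg hε.le, neg_neg,
            show (1 - d) / 2 = d / 2 + (1 / 2 - d) by ring, Real.rpow_add hε]
          ring
      _ ≤ κ * ε ^ (1 / 2 - d) := by gcongr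

lemma intervalIntegral_horocycleDeviation (hf : IsTestFunction f Y) {ε : ℝ} (hε : 0 < ε)
    (a b : ℝ) : ∫ t in a..b, horocycleDeviation f ε t =
      (∫ t in a..b, f (t + ε * I)) - (b - a) * hyperbolicMean f := by
  simp_rw [horocycleDeviation]
  rw [intervalIntegral.integral_sub ((continuous_comp_add_mul_I hf hε).intervalIntegrable _ _)
    intervalIntegrable_const, intervalIntegral.integral_const, smul_eq_mul]

lemma tendsto_horocycle_average (hf : IsTestFunction f Y) {δ : ℝ} (hδ : 0 < δ) {α β : ℝ → ℝ}
    (hαβ : ∀ᶠ ε in 𝓝[>] 0, ε ^ (1 / 2 - δ) ≤ β ε - α ε) :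
    Tendsto (fun ε => 1 / (β ε - α ε) * ∫ x in α ε..β ε, f (x + ε * I)) (𝓝[>] 0)
      (𝓝 (hyperbolicMean f)) := by
  rw [Metric.tendsto_nhds]
  intro η hη
  obtain ⟨e, κ, he, hκ, hdev⟩ :=
    exists_forall_abs_intervalIntegral_horocycleDeviation_le hf (half_pos hη)
  filter_upwards [hαβ, Ioo_mem_nhdsGT one_pos, eventually_exists_nat_scale
    (lt_min hδ one_pos) (min_le_right δ 1) he hκ] with ε hlength ⟨hε, hε_lt⟩ ⟨n, hn, hεn, hscale⟩
  have hpos : 0 < β ε - α ε := (Real.rpow_pos_of_pos hε _).trans_le hlength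
  have hpow : ε ^ (1 / 2 - min δ 1) ≤ ε ^ (1 / 2 - δ) :=
    Real.rpow_le_rpow_of_exponent_ge hε hε_lt.le (sub_le_sub_left (min_le_left δ 1) _)
  have hbound := hdev n ε (α ε) (β ε) hn hε (sub_nonneg.1 hpos.le) hεn
    (hscale.trans (by gcongr; exact hpow.trans hlength))
  rw [Real.dist_eq]
  calc |1 / (β ε - α ε) * (∫ x in α ε..β ε, f (x + ε * I)) - hyperbolicMean f|
      = |∫ t in α ε..β ε, horocycleDeviation f ε t| / (β ε - α ε) := by
        rw [← abs_of_pos hpos, ← abs_div, intervalIntegral_horocycleDeviation hf hε,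
          abs_of_pos hpos]
        congr 1
        field
    _ ≤ η / 2 := div_le_of_le_mul₀ hpos.le (half_pos hη).le hbound
    _ < η := half_lt_self hη

end Shrinking

end Horocycle

theorem horocycles_equidistribute_shrinking_intervals
    (f : ℂ → ℝ)
    (hcont : ContinuousOn f {z : ℂ | 0 < z.im})
    (hinv : ∀ a b c d : ℤ, a * d - b * c = 1 → ∀ z : ℂ, 0 < z.im →
      f (((a : ℂ) * z + b) / ((c : ℂ) * z + d)) = f z)
    (hsupp : ∃ Y : ℝ, 0 < Y ∧ ∀ z : ℂ, 0 < z.im →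
      (∃ a b c d : ℤ, a * d - b * c = 1 ∧
        Y < ((((a : ℂ) * z + b) / ((c : ℂ) * z + d)).im)) → f z = 0)
    (δ : ℝ) (hδ : 0 < δ)
    (α β : ℝ → ℝ)
    (hαβ : ∀ ε : ℝ, ε ∈ Set.Ioo (0 : ℝ) 1 → ε ^ ((1 : ℝ) / 2 - δ) ≤ β ε - α ε) :
    Filter.Tendsto
      (fun ε : ℝ =>
        (1 / (β ε - α ε)) * ∫ x in (α ε)..(β ε), f ((x : ℂ) + ε * Complex.I))
      (nhdsWithin 0 (Set.Ioi 0))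
      (nhds ((3 / Real.pi) * ∫ p in fundDom, f ((p.1 : ℂ) + p.2 * Complex.I) / p.2 ^ 2)) := by
  obtain ⟨Y, hY, hzero⟩ := hsupp
  have hf : Horocycle.IsTestFunction f Y :=
    ⟨hcont, hinv, hY, fun z hz => hzero z (hY.trans hz) ⟨1, 0, 0, 1, by ring, by simpa using hz⟩⟩
  exact Horocycle.tendsto_horocycle_average hf hδ
    (Filter.mem_of_superset (Ioo_mem_nhdsGT one_pos) hαβ)
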